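/- Let n ≥ 2 and γ ∈ (0,1). Let S be a simplex in ℝⁿ with affinely independent vertices x₁,…,x_{n+1}, relative width w(S) > γ, and barycenter x₀ = (1/(n+1))·Σᵢ xᵢ. There exist constants K = K(γ,n), c = c(γ,n) > 0, C = C(γ,n) ≥ K, r = r(γ,n) > 0 and N₀ = N₀(γ,n) such that: if W is measurable with |W| ≤ 1, u is a smooth solution of Δ²u = W·u on B₁(0) ⊂ ℝⁿ not identically zero, S ⊂ B_r(0), N > N₀, and for each i ∈ {1,…,n+1} there exists rᵢ ≤ K·diam(S)/2 with N(xᵢ, rᵢ) > N, then N(x₀, C·diam(S)) > (1+c)·N. -/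

import Mathlib

open MeasureTheory Metric Set
open scoped RealInnerProductSpace

noncomputable section

/-- The Euclidean Laplacian of `u : ℝⁿ → ℝ`. -/
def lap {n : ℕ} (u : EuclideanSpace ℝ (Fin n) → ℝ) (x : EuclideanSpace ℝ (Fin n)) : ℝ :=
  ∑ i : Fin n, iteratedFDeriv ℝ 2 u x ![EuclideanSpace.single i 1, EuclideanSpace.single i 1]

/-- `sup_s |u|`. -/
def supAbs {n : ℕ} (u : EuclideanSpace ℝ (Fin n) → ℝ) (s : Set (EuclideanSpace ℝ (Fin n))) : ℝ :=
  sSup ((fun y => |u y|) '' s)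

/-- The doubling index `N(x,r) = log₂ ( sup_{B_{2r}(x)} |u| / sup_{B_r(x)} |u| )`. -/
def dbIdx {n : ℕ} (u : EuclideanSpace ℝ (Fin n) → ℝ) (x : EuclideanSpace ℝ (Fin n)) (r : ℝ) : ℝ :=
  Real.logb 2 (supAbs u (ball x (2 * r)) / supAbs u (ball x r))

/-- The width of the simplex with vertices `x i`: the minimum over unit directions `v` of
`maxᵢ ⟪xᵢ, v⟫ - minᵢ ⟪xᵢ, v⟫`. -/
def simplexWidth {n : ℕ} (x : Fin (n + 1) → EuclideanSpace ℝ (Fin n)) : ℝ :=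
  sInf ((fun v => (Finset.univ.sup' Finset.univ_nonempty fun i => ⟪x i, v⟫)
      - Finset.univ.inf' Finset.univ_nonempty fun i => ⟪x i, v⟫) ''
    sphere (0 : EuclideanSpace ℝ (Fin n)) 1)

abbrev EE (n : ℕ) := EuclideanSpace ℝ (Fin n)

abbrev Smo {n : ℕ} (f : EE n → ℝ) : Prop := ContDiff ℝ (⊤ : ℕ∞) f

/-- directional derivative -/
def pd {n : ℕ} (v : EE n) (f : EE n → ℝ) (x : EE n) : ℝ := fderiv ℝ f x v

/-- standard basis vector -/
def eb {n : ℕ} (i : Fin n) : EE n := EuclideanSpace.single i 1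

/-- inner product of gradients -/
def gd {n : ℕ} (f g : EE n → ℝ) (x : EE n) : ℝ := ∑ i, pd (eb i) f x * pd (eb i) g x

section basic
variable {n : ℕ} {f g : EE n → ℝ}

protected lemma Smo.diff (hf : Smo f) : Differentiable ℝ f := hf.differentiable (by simp)

protected lemma Smo.pd (hf : Smo f) (v : EE n) : Smo (pd v f) := by
  have h : ContDiff ℝ (⊤ : ℕ∞) (fderiv ℝ f) := hf.fderiv_right (by exact_mod_cast le_rfl)
  exact h.clm_apply contDiff_const

lemma pd_mul_at {x : EE n} (v : EE n) (hf : DifferentiableAt ℝ f x) (hg : DifferentiableAt ℝ g x) :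
    pd v (fun y => f y * g y) x = f x * pd v g x + pd v f x * g x := by
  unfold pd
  rw [fderiv_fun_mul hf hg]
  simp; ring

lemma pd_mul (v : EE n) (hf : Smo f) (hg : Smo g) :
    pd v (fun y => f y * g y) = fun x => f x * pd v g x + pd v f x * g x := by
  ext x; exact pd_mul_at v (hf.diff x) (hg.diff x)

lemma pd_add (v : EE n) (hf : Smo f) (hg : Smo g) (x : EE n) :
    pd v (fun y => f y + g y) x = pd v f x + pd v g x := by
  unfold pd
  rw [fderiv_fun_add (hf.diff x) (hg.diff x)]
  simp

lemma lap_eq_snd (x : EE n) :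
    lap f x = ∑ i, fderiv ℝ (fderiv ℝ f) x (eb i) (eb i) := by
  unfold lap eb
  simp [iteratedFDeriv_two_apply]

lemma pd_pd (hf : Smo f) (v w x : EE n) :
    pd v (pd w f) x = fderiv ℝ (fderiv ℝ f) x v w := by
  have h : ContDiff ℝ (⊤ : ℕ∞) (fderiv ℝ f) := hf.fderiv_right (by exact_mod_cast le_rfl)
  unfold pd
  rw [fderiv_clm_apply (h.differentiable (by simp) x) (by fun_prop)]
  simp

lemma pd_comm (hf : Smo f) (v w x : EE n) : pd v (pd w f) x = pd w (pd v f) x := by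
  rw [pd_pd hf, pd_pd hf]
  have : IsSymmSndFDerivAt ℝ f x := (hf.contDiffAt).isSymmSndFDerivAt (by simpa using (WithTop.coe_le_coe.2 (le_top : (2 : ℕ∞) ≤ ⊤)))
  exact this v w

lemma lap_eq (hf : Smo f) (x : EE n) : lap f x = ∑ i, pd (eb i) (pd (eb i) f) x := by
  rw [lap_eq_snd]
  simp [pd_pd hf]

protected lemma Smo.lap (hf : Smo f) : Smo (lap f) := by
  have : lap f = fun x => ∑ i, pd (eb i) (pd (eb i) f) x := by
    ext x; exact lap_eq hf x
  rw [this]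
  exact ContDiff.sum fun i _ => (hf.pd _).pd _

lemma lap_mul (hf : Smo f) (hg : Smo g) (x : EE n) :
    lap (fun y => f y * g y) x = f x * lap g x + 2 * gd f g x + g x * lap f x := by
  rw [lap_eq (hf.mul hg), lap_eq hf, lap_eq hg, gd, Finset.mul_sum, Finset.mul_sum, Finset.mul_sum,
    ← Finset.sum_add_distrib, ← Finset.sum_add_distrib]
  refine Finset.sum_congr rfl fun i _ => ?_
  rw [pd_mul _ hf hg, pd_add _ (hf.mul (hg.pd _)) ((hf.pd _).mul hg), pd_mul _ hf (hg.pd _),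
    pd_mul _ (hf.pd _) hg]
  ring

lemma lap_congr {x : EE n} (h : f =ᶠ[nhds x] g) : lap f x = lap g x := by
  unfold lap
  refine Finset.sum_congr rfl fun i _ => ?_
  rw [h.iteratedFDeriv ℝ 2 |>.eq_of_nhds]

lemma pd_congr {x : EE n} (v : EE n) (h : f =ᶠ[nhds x] g) : pd v f x = pd v g x := by
  unfold pd
  rw [h.fderiv_eq]

protected lemma Smo.cont (hf : Smo f) : Continuous f := hf.continuous

lemma ibp0 (v : EE n) (hf : Smo f) (hc : HasCompactSupport f) : ∫ x, pd v f x = 0 := by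
  have h1 : Integrable f := hf.continuous.integrable_of_hasCompactSupport hc
  have h2 : Integrable (pd v f) :=
    (hf.pd v).continuous.integrable_of_hasCompactSupport (hc.fderiv_apply ℝ v)
  have := integral_mul_fderiv_eq_neg_fderiv_mul_of_integrable (μ := volume)
    (f := fun _ : EE n => (1:ℝ)) (g := f) (v := v) (by simp) (by simp only [one_mul]; exact h2) (by simpa using h1)
    (by intro x _; fun_prop) (fun x _ => hf.diff x)
  simpa [pd] using this

lemma HasCompactSupport.pd' (v : EE n) (hc : HasCompactSupport f) : HasCompactSupport (pd v f) :=
  hc.fderiv_apply ℝ v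

protected lemma Smo.gd (hf : Smo f) (hg : Smo g) : Smo (gd f g) :=
  ContDiff.sum fun _ _ => (hf.pd _).mul (hg.pd _)

lemma green (hf : Smo f) (hg : Smo g) (hc : HasCompactSupport f) :
    ∫ x, f x * lap g x = - ∫ x, gd f g x := by
  have key : ∀ i, ∫ x, f x * pd (eb i) (pd (eb i) g) x = - ∫ x, pd (eb i) f x * pd (eb i) g x := by
    intro i
    have h := ibp0 (eb i) (hf.mul (hg.pd (eb i))) (hc.mul_right (f' := pd (eb i) g))
    rw [pd_mul _ hf (hg.pd _), integral_add] at h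
    · linarith
    · exact (hf.mul ((hg.pd _).pd _)).continuous.integrable_of_hasCompactSupport hc.mul_right
    · exact ((hf.pd _).mul ((hg.pd _))).continuous.integrable_of_hasCompactSupport (hc.pd' _).mul_right
  have : ∀ x, f x * lap g x = ∑ i, f x * pd (eb i) (pd (eb i) g) x := by
    intro x; rw [lap_eq hg, Finset.mul_sum]
  simp_rw [this, gd]
  rw [integral_finsetSum, integral_finsetSum, ← Finset.sum_neg_distrib]
  · exact Finset.sum_congr rfl fun i _ => key i
  · intro i _
    exact ((hf.pd _).mul ((hg.pd _))).continuous.integrable_of_hasCompactSupport (hc.pd' _).mul_right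
  · intro i _
    exact (hf.mul ((hg.pd _).pd _)).continuous.integrable_of_hasCompactSupport hc.mul_right

lemma gd_sq_le (x : EE n) : (gd f g x) ^ 2 ≤ gd f f x * gd g g x := by
  unfold gd
  have := Finset.sum_mul_sq_le_sq_mul_sq Finset.univ (fun i => pd (eb i) f x) (fun i => pd (eb i) g x)
  simpa [sq] using this

lemma gd_self_nonneg (x : EE n) : 0 ≤ gd f f x :=
  Finset.sum_nonneg fun _ _ => mul_self_nonneg _

end basic

/-- derivative along the linear vector field `x ↦ A x` -/
def DA {n : ℕ} (A : EE n →L[ℝ] EE n) (f : EE n → ℝ) (x : EE n) : ℝ := fderiv ℝ f x (A x)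

/-- the identity field (Euler field) -/
abbrev I1 (n : ℕ) : EE n →L[ℝ] EE n := ContinuousLinearMap.id ℝ (EE n)

/-- rotation field -/
def Rij {n : ℕ} (i j : Fin n) : EE n →L[ℝ] EE n :=
  (EuclideanSpace.proj i : EE n →L[ℝ] ℝ).smulRight (eb j)
    - (EuclideanSpace.proj j : EE n →L[ℝ] ℝ).smulRight (eb i)

abbrev SO {n : ℕ} (Ω : Set (EE n)) (h : EE n → ℝ) : Prop := ContDiffOn ℝ (⊤ : ℕ∞) h Ω

structure CS {n : ℕ} (Ω : Set (EE n)) (f : EE n → ℝ) : Prop where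
  smo : Smo f
  cpt : HasCompactSupport f
  sub : tsupport f ⊆ Ω

lemma Rij_apply {n : ℕ} (i j : Fin n) (x : EE n) : Rij i j x = x i • eb j - x j • eb i := by
  simp [Rij]

section da
variable {n : ℕ} {f g h p q : EE n → ℝ} {Ω : Set (EE n)} {A B : EE n →L[ℝ] EE n}

lemma CS.so (hf : CS Ω f) : SO Ω f := hf.smo.contDiffOn

lemma CS.zero (hf : CS Ω f) {x : EE n} (hx : x ∉ Ω) : f x = 0 :=
  image_eq_zero_of_notMem_tsupport fun h => hx (hf.sub h)

lemma CS.integrable (hf : CS Ω f) : Integrable f :=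
  hf.smo.continuous.integrable_of_hasCompactSupport hf.cpt

lemma SO.diffAt (hΩ : IsOpen Ω) (hf : SO Ω f) {x : EE n} (hx : x ∈ Ω) : DifferentiableAt ℝ f x :=
  (hf.contDiffAt (hΩ.mem_nhds hx)).differentiableAt (by simp)

lemma CS.so_mul (hΩ : IsOpen Ω) (hh : SO Ω h) (hf : CS Ω f) : CS Ω (fun x => h x * f x) := by
  refine ⟨?_, hf.cpt.mul_left, (tsupport_mul_subset_right).trans hf.sub⟩
  refine contDiff_iff_contDiffAt.2 fun x => ?_
  by_cases hx : x ∈ tsupport f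
  · exact (hh.contDiffAt (hΩ.mem_nhds (hf.sub hx))).mul hf.smo.contDiffAt
  · have : (fun x => h x * f x) =ᶠ[nhds x] fun _ => 0 := by
      filter_upwards [notMem_tsupport_iff_eventuallyEq.1 hx] with y hy
      simp [hy]
    exact contDiffAt_const.congr_of_eventuallyEq this

lemma CS.mul (hh : Smo h) (hf : CS Ω f) : CS Ω (fun x => h x * f x) :=
  ⟨hh.mul hf.smo, hf.cpt.mul_left, (tsupport_mul_subset_right).trans hf.sub⟩

lemma CS.add (hg : CS Ω g) (hf : CS Ω f) : CS Ω (fun x => g x + f x) :=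
  ⟨hg.smo.add hf.smo, hg.cpt.add hf.cpt, (tsupport_add g f).trans (union_subset hg.sub hf.sub)⟩

lemma CS.cmul (c : ℝ) (hf : CS Ω f) : CS Ω (fun x => c * f x) :=
  CS.mul contDiff_const hf

lemma CS.da (hf : CS Ω f) (A : EE n →L[ℝ] EE n) : CS Ω (DA A f) := by
  have h : ContDiff ℝ (⊤ : ℕ∞) (fderiv ℝ f) := hf.smo.fderiv_right (by exact_mod_cast le_rfl)
  have hs : tsupport (DA A f) ⊆ tsupport f := by
    refine closure_minimal ?_ isClosed_closure
    intro x hx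
    by_contra hn
    apply hx
    have : fderiv ℝ f x = 0 := by
      have := notMem_tsupport_iff_eventuallyEq.1 hn
      rw [this.fderiv_eq]
      simp
    simp [DA, this]
  exact ⟨h.clm_apply A.contDiff, hf.cpt.of_isClosed_subset isClosed_closure hs, hs.trans hf.sub⟩

lemma da_mul {x : EE n} (hf : DifferentiableAt ℝ f x) (hg : DifferentiableAt ℝ g x) :
    DA A (fun y => f y * g y) x = f x * DA A g x + DA A f x * g x :=
  pd_mul_at (A x) hf hg

lemma da_add {x : EE n} (hf : DifferentiableAt ℝ f x) (hg : DifferentiableAt ℝ g x) :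
    DA A (fun y => f y + g y) x = DA A f x + DA A g x := by
  unfold DA
  rw [fderiv_fun_add hf hg]; simp

lemma da_const {x : EE n} (c : ℝ) : DA A (fun _ => c) x = 0 := by
  unfold DA; simp

lemma da_cmul {x : EE n} (c : ℝ) (hf : DifferentiableAt ℝ f x) :
    DA A (fun y => c * f y) x = c * DA A f x := by
  rw [da_mul (by fun_prop) hf, da_const]; ring

lemma da_congr (hΩ : IsOpen Ω) (h : ∀ x ∈ Ω, f x = g x) {x : EE n} (hx : x ∈ Ω) :
    DA A f x = DA A g x :=
  pd_congr (A x) (Filter.eventuallyEq_of_mem (hΩ.mem_nhds hx) h)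

lemma da_da (hf : Smo f) (x : EE n) :
    DA A (DA B f) x = fderiv ℝ (fderiv ℝ f) x (A x) (B x) + fderiv ℝ f x (B (A x)) := by
  have h : ContDiff ℝ (⊤ : ℕ∞) (fderiv ℝ f) := hf.fderiv_right (by exact_mod_cast le_rfl)
  unfold DA
  rw [fderiv_clm_apply (h.differentiable (by simp) x) (by fun_prop)]
  simp
  ring

lemma da_comm (hf : Smo f) (x : EE n) : DA A (DA (I1 n) f) x = DA (I1 n) (DA A f) x := by
  rw [da_da hf, da_da hf]
  have : IsSymmSndFDerivAt ℝ f x := (hf.contDiffAt).isSymmSndFDerivAt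
    (by simpa using (WithTop.coe_le_coe.2 (le_top : (2 : ℕ∞) ≤ ⊤)))
  simp [this (A x) x]

lemma eb_expand (x : EE n) : x = ∑ i, x i • eb i := by
  have := (EuclideanSpace.basisFun (Fin n) ℝ).sum_repr x
  simpa [eb] using this.symm

lemma da_expand (x : EE n) : DA A f x = ∑ i, (A x) i * pd (eb i) f x := by
  unfold DA pd
  conv_lhs => rw [eb_expand (A x)]
  simp

lemma da_ibp (hf : CS Ω f) (A : EE n →L[ℝ] EE n) :
    ∫ x, DA A f x = - (∑ i, (A (eb i)) i) * ∫ x, f x := by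
  have hA : ∀ i, Smo (fun x => (A x) i) := fun i =>
    ((EuclideanSpace.proj i : EE n →L[ℝ] ℝ).comp A).contDiff
  have hfd : ∀ i (v x : EE n), pd v (fun x => (A x) i) x = (A v) i := by
    intro i v x
    have := ((EuclideanSpace.proj i : EE n →L[ℝ] ℝ).comp A).fderiv (x := x)
    unfold pd
    have h2 : (fun x => (A x) i) = ((EuclideanSpace.proj i : EE n →L[ℝ] ℝ).comp A) := by
      ext; simp
    rw [h2, this]; simp
  have key : ∀ i, ∫ x, (A x) i * pd (eb i) f x = - (A (eb i)) i * ∫ x, f x := by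
    intro i
    have h := ibp0 (eb i) ((hA i).mul hf.smo) (hf.cpt.mul_left)
    rw [pd_mul _ (hA i) hf.smo, integral_add] at h
    · simp only [hfd, integral_const_mul] at h
      linarith
    · exact ((hA i).mul (hf.smo.pd _)).continuous.integrable_of_hasCompactSupport
        (hf.cpt.pd' _).mul_left
    · simp only [hfd]
      exact hf.integrable.const_mul _
  simp_rw [da_expand]
  rw [integral_finsetSum]
  · rw [Finset.sum_congr rfl fun i _ => key i, ← Finset.sum_mul, Finset.sum_neg_distrib]
  · intro i _
    exact ((hA i).mul (hf.smo.pd _)).continuous.integrable_of_hasCompactSupport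
        (hf.cpt.pd' _).mul_left

lemma eb_apply (i j : Fin n) : (eb i : EE n) j = if j = i then 1 else 0 := by
  simp [eb, Pi.single_apply]

lemma da_ibp_id (hf : CS Ω f) : ∫ x, DA (I1 n) f x = - n * ∫ x, f x := by
  rw [da_ibp hf]; simp [eb_apply]

lemma da_ibp_rot (hf : CS Ω f) (i j : Fin n) : ∫ x, DA (Rij i j) f x = 0 := by
  rw [da_ibp hf]
  have : (∑ k, (Rij i j (eb k)) k) = 0 := by
    simp only [Rij_apply, PiLp.sub_apply, PiLp.smul_apply, eb_apply, Finset.sum_sub_distrib]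
    simp [eq_comm]
  rw [this]; simp

lemma polar_lap (hf : Smo f) (x : EE n) :
    ‖x‖ ^ 2 * lap f x = DA (I1 n) (DA (I1 n) f) x + (n - 2) * DA (I1 n) f x
      + 1 / 2 * ∑ i, ∑ j, DA (Rij i j) (DA (Rij i j) f) x := by
  have hsym : ∀ v w, fderiv ℝ (fderiv ℝ f) x v w = fderiv ℝ (fderiv ℝ f) x w v := by
    have : IsSymmSndFDerivAt ℝ f x := (hf.contDiffAt).isSymmSndFDerivAt
      (by simpa using (WithTop.coe_le_coe.2 (le_top : (2 : ℕ∞) ≤ ⊤)))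
    exact fun v w => this v w
  set T := fderiv ℝ (fderiv ℝ f) x with hT
  have hsq : ‖x‖ ^ 2 = ∑ i, x i ^ 2 := by
    rw [EuclideanSpace.norm_sq_eq]; simp
  have hxx : T x x = ∑ i, ∑ j, x i * x j * T (eb i) (eb j) := by
    conv_lhs => rw [eb_expand x]
    simp only [map_sum, map_smul, ContinuousLinearMap.sum_apply, ContinuousLinearMap.smul_apply,
      smul_eq_mul, Finset.mul_sum]
    refine Finset.sum_congr rfl fun i _ => Finset.sum_congr rfl fun j _ => ?_
    rw [hsym (eb j)]; ring
  have hfx : fderiv ℝ f x x = ∑ i, x i * fderiv ℝ f x (eb i) := by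
    conv_lhs => 
      arg 2
      rw [eb_expand x]
    simp
  have hR : ∀ i j, DA (Rij i j) (DA (Rij i j) f) x =
      x i ^ 2 * T (eb j) (eb j) - 2 * (x i * x j * T (eb i) (eb j)) + x j ^ 2 * T (eb i) (eb i)
      - (if i = j then 0 else (x i * fderiv ℝ f x (eb i) + x j * fderiv ℝ f x (eb j))) := by
    intro i j
    rw [da_da hf]
    by_cases hij : i = j
    · subst hij
      simp [Rij_apply]
      ring
    · have hji : ¬ j = i := fun h => hij h.symm
      simp only [Rij_apply, sub_apply, ContinuousLinearMap.smul_apply, ← hT, map_sub, map_smul,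
        smul_eq_mul, if_neg hij, PiLp.sub_apply, PiLp.smul_apply, eb_apply, if_true, if_neg hji]
      rw [hsym (eb j) (eb i)]
      ring
  have hsum : ∀ i : Fin n, ∑ j, (if i = j then (0:ℝ) else
      (x i * fderiv ℝ f x (eb i) + x j * fderiv ℝ f x (eb j)))
      = n * (x i * fderiv ℝ f x (eb i)) + fderiv ℝ f x x - 2 * (x i * fderiv ℝ f x (eb i)) := by
    intro i
    have : ∀ j, (if i = j then (0:ℝ) else
      (x i * fderiv ℝ f x (eb i) + x j * fderiv ℝ f x (eb j))) =
      (x i * fderiv ℝ f x (eb i) + x j * fderiv ℝ f x (eb j)) - 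
        (if i = j then 2 * (x i * fderiv ℝ f x (eb i)) else 0) := by
      intro j
      split_ifs with h
      · subst h; ring
      · ring
    rw [Finset.sum_congr rfl fun j _ => this j, Finset.sum_sub_distrib, Finset.sum_add_distrib, hfx]
    simp
  simp_rw [hR, Finset.sum_sub_distrib, Finset.sum_add_distrib, Finset.sum_sub_distrib, hsum]
  rw [da_da hf]
  simp only [Finset.sum_add_distrib, Finset.sum_sub_distrib, ← Finset.mul_sum, ← Finset.sum_mul]
  rw [← hxx, ← hfx, lap_eq_snd, ← hT, hsq]
  simp only [DA, ContinuousLinearMap.id_apply, ← hT]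
  simp
  ring

end da

/-- integrable with zero integral -/
structure ZI {n : ℕ} (F : EE n → ℝ) : Prop where
  int : Integrable F
  zero : ∫ x, F x = 0

section zi
variable {n : ℕ} {F G k p q : EE n → ℝ} {Ω : Set (EE n)}

lemma ZI.add (hF : ZI F) (hG : ZI G) : ZI (fun x => F x + G x) :=
  ⟨hF.int.add hG.int, by rw [integral_add hF.int hG.int, hF.zero, hG.zero, add_zero]⟩

lemma ZI.cmul (c : ℝ) (hF : ZI F) : ZI (fun x => c * F x) :=
  ⟨hF.int.const_mul c, by rw [integral_const_mul, hF.zero, mul_zero]⟩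

lemma ZI.sum {ι : Type*} (s : Finset ι) {F : ι → EE n → ℝ} (hF : ∀ i ∈ s, ZI (F i)) :
    ZI (fun x => ∑ i ∈ s, F i x) :=
  ⟨integrable_finsetSum _ fun i hi => (hF i hi).int, by
    rw [integral_finsetSum _ fun i hi => (hF i hi).int]
    exact Finset.sum_eq_zero fun i hi => (hF i hi).zero⟩

/-- divergence term for Euler field -/
def ZE (k p q : EE n → ℝ) (x : EE n) : ℝ :=
  DA (I1 n) (fun y => k y * (p y * q y)) x + n * (k x * (p x * q x))

def ZR (i j : Fin n) (p q : EE n → ℝ) (x : EE n) : ℝ :=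
  DA (Rij i j) (fun y => p y * q y) x

lemma ZE_zi (hΩ : IsOpen Ω) (hk : SO Ω k) (hp : CS Ω p) (hq : CS Ω q) : ZI (ZE k p q) := by
  have h : CS Ω (fun y => k y * (p y * q y)) := CS.so_mul hΩ hk (CS.mul hp.smo hq)
  refine ⟨(h.da _).integrable.add (h.integrable.const_mul _), ?_⟩
  unfold ZE
  rw [integral_add (h.da _).integrable (h.integrable.const_mul _), da_ibp_id h,
    integral_const_mul]
  ring

lemma ZE_off (hΩ : IsOpen Ω) (hk : SO Ω k) (hp : CS Ω p) (hq : CS Ω q) {x : EE n} (hx : x ∉ Ω) :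
    ZE k p q x = 0 := by
  have h : CS Ω (fun y => k y * (p y * q y)) := CS.so_mul hΩ hk (CS.mul hp.smo hq)
  simp [ZE, (h.da _).zero hx, hp.zero hx]

lemma ZE_on (hΩ : IsOpen Ω) (hk : SO Ω k) (hp : CS Ω p) (hq : CS Ω q) {x : EE n} (hx : x ∈ Ω) :
    ZE k p q x = DA (I1 n) k x * (p x * q x) + k x * (DA (I1 n) p x * q x + p x * DA (I1 n) q x)
      + n * (k x * (p x * q x)) := by
  unfold ZE
  rw [da_mul (hk.diffAt hΩ hx) ((hp.smo.diff x).fun_mul (hq.smo.diff x)), da_mul (hp.smo.diff x) (hq.smo.diff x)]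
  ring

lemma ZR_zi (i j : Fin n) (hp : CS Ω p) (hq : CS Ω q) : ZI (ZR i j p q) := by
  have h : CS Ω (fun y => p y * q y) := CS.mul hp.smo hq
  exact ⟨(h.da _).integrable, da_ibp_rot h i j⟩

lemma ZR_off (i j : Fin n) (hp : CS Ω p) (hq : CS Ω q) {x : EE n} (hx : x ∉ Ω) :
    ZR i j p q x = 0 := by
  have h : CS Ω (fun y => p y * q y) := CS.mul hp.smo hq
  exact (h.da _).zero hx

lemma ZR_on (i j : Fin n) (hp : CS Ω p) (hq : CS Ω q) (x : EE n) :
    ZR i j p q x = p x * DA (Rij i j) q x + DA (Rij i j) p x * q x := 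
  da_mul (hp.smo.diff x) (hq.smo.diff x)
end zi

theorem carleman_abs {n : ℕ} {Ω : Set (EE n)} (hΩ : IsOpen Ω) {w ω b1 b2 b3 f : EE n → ℝ}
    (hw : SO Ω w) (hω : SO Ω ω) (hb1 : SO Ω b1) (hb2 : SO Ω b2) (hb3 : SO Ω b3)
    (Ew : ∀ x ∈ Ω, DA (I1 n) w x = ω x * w x)
    (Eω : ∀ x ∈ Ω, DA (I1 n) ω x = b1 x)
    (Eb1 : ∀ x ∈ Ω, DA (I1 n) b1 x = b2 x)
    (Eb2 : ∀ x ∈ Ω, DA (I1 n) b2 x = b3 x)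
    (Rw : ∀ i j, ∀ x ∈ Ω, DA (Rij i j) w x = 0)
    (Rω : ∀ i j, ∀ x ∈ Ω, DA (Rij i j) ω x = 0)
    (Rb1 : ∀ i j, ∀ x ∈ Ω, DA (Rij i j) b1 x = 0)
    (hpos : ∀ x ∈ Ω, 0 ≤ b1 x) (hf : CS Ω f) :
    ∫ x, (4 * (ω x + 1) ^ 2 * b1 x - b3 x) * (w x * f x) ^ 2
      ≤ ∫ x, (w x * (‖x‖ ^ 2 * lap f x)) ^ 2 := by
  classical
  set g : EE n → ℝ := fun x => w x * f x with hg
  have cg : CS Ω g := CS.so_mul hΩ hw hf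
  set β : EE n → ℝ := fun x => ω x + 1 with hβ
  have sβ : SO Ω β := hω.add contDiffOn_const
  set c : ℝ := ((n : ℝ) - 2) / 2 with hc
  set ν : ℝ := (n : ℝ) / 2 with hν
  set e : EE n → ℝ := fun x => DA (I1 n) g x + ν * g x with he
  have ce : CS Ω e := (cg.da _).add (cg.cmul ν)
  set Y : EE n → ℝ := fun x => 2 * (β x * e x) + b1 x * g x with hY
  have cY : CS Ω Y := ((CS.so_mul hΩ sβ ce).cmul 2).add (CS.so_mul hΩ hb1 cg)
  set k4 : EE n → ℝ := fun x => (β x ^ 2 - c ^ 2) * β x with hk4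
  have sk4 : SO Ω k4 := ((sβ.pow 2).sub contDiffOn_const).mul sβ
  -- the zero integral function
  set F : EE n → ℝ := fun x => (-2) * (ZE β e e x + (ZE b1 g e x + ((-(1/2)) * ZE b2 g g x
    + (ZE k4 g g x + (1/2) * ∑ i, ∑ j, (ZR i j (DA (Rij i j) g) Y x
      + (-1) * ZE β (DA (Rij i j) g) (DA (Rij i j) g) x))))) with hF
  have zF : ZI F := by
    refine ZI.cmul _ ((ZE_zi hΩ sβ ce ce).add ((ZE_zi hΩ hb1 cg ce).add
      (((ZE_zi hΩ hb2 cg cg).cmul _).add ((ZE_zi hΩ sk4 cg cg).add (ZI.cmul _ ?_)))))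
    refine ZI.sum _ fun i _ => ZI.sum _ fun j _ => ?_
    exact (ZR_zi i j (cg.da _) cY).add ((ZE_zi hΩ sβ (cg.da _) (cg.da _)).cmul _)
  have cL : CS Ω (lap f) := by
    have hs : tsupport (lap f) ⊆ tsupport f := by
      refine closure_minimal ?_ isClosed_closure
      intro x hx
      by_contra hn
      apply hx
      have := notMem_tsupport_iff_eventuallyEq.1 hn
      rw [lap_congr this]
      simp [lap]
    exact ⟨hf.smo.lap, hf.cpt.of_isClosed_subset isClosed_closure hs, hs.trans hf.sub⟩
  have snorm : Smo (fun x : EE n => ‖x‖ ^ 2) := contDiff_norm_sq ℝ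
  have cP : CS Ω (fun x => w x * (‖x‖ ^ 2 * lap f x)) := CS.so_mul hΩ hw (CS.mul snorm cL)
  have Eβ : ∀ x ∈ Ω, DA (I1 n) β x = b1 x := by
    intro x hx
    rw [hβ, da_add (hω.diffAt hΩ hx) (by fun_prop), Eω x hx, da_const]; ring
  have Rβ : ∀ i j, ∀ x ∈ Ω, DA (Rij i j) β x = 0 := by
    intro i j x hx
    rw [hβ, da_add (hω.diffAt hΩ hx) (by fun_prop), Rω i j x hx, da_const]; ring
  have main : ∀ x, F x ≤ (w x * (‖x‖ ^ 2 * lap f x)) ^ 2 -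
      (4 * (ω x + 1) ^ 2 * b1 x - b3 x) * (w x * f x) ^ 2 := by
    intro x
    by_cases hx : x ∈ Ω
    swap
    · have h1 : f x = 0 := hf.zero hx
      have h2 : w x * (‖x‖ ^ 2 * lap f x) = 0 := cP.zero hx
      have h3 : F x = 0 := by
        simp only [hF]
        rw [ZE_off hΩ sβ ce ce hx, ZE_off hΩ hb1 cg ce hx, ZE_off hΩ hb2 cg cg hx,
          ZE_off hΩ sk4 cg cg hx]
        have : ∀ i j, (ZR i j (DA (Rij i j) g) Y x
            + (-1) * ZE β (DA (Rij i j) g) (DA (Rij i j) g) x) = 0 := by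
          intro i j
          rw [ZR_off i j (cg.da _) cY hx, ZE_off hΩ sβ (cg.da _) (cg.da _) hx]; simp
        simp only [this]; simp
      rw [h3, h2, h1]; simp
    · have dw := hw.diffAt hΩ hx
      have dω := hω.diffAt hΩ hx
      have df := hf.smo.diff x
      have dβ := sβ.diffAt hΩ hx
      have db1 := hb1.diffAt hΩ hx
      -- first derivatives of g
      have Eg : ∀ y ∈ Ω, DA (I1 n) g y = w y * (DA (I1 n) f y + ω y * f y) := by
        intro y hy
        rw [hg, da_mul (hw.diffAt hΩ hy) (hf.smo.diff y), Ew y hy]; ring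
      have EEg : DA (I1 n) (DA (I1 n) g) x = w x * (DA (I1 n) (DA (I1 n) f) x + 2 * ω x * DA (I1 n) f x + ω x ^ 2 * f x + b1 x * f x) := by
        rw [da_congr hΩ Eg hx, da_mul dw (by
          exact ((hf.da (I1 n)).smo.diff x).fun_add (dω.fun_mul df)), Ew x hx,
          da_add ((hf.da (I1 n)).smo.diff x) (dω.fun_mul df), da_mul dω df, Eω x hx]
        ring
      have Rg : ∀ i j, ∀ y ∈ Ω, DA (Rij i j) g y = w y * DA (Rij i j) f y := by
        intro i j y hy
        rw [hg, da_mul (hw.diffAt hΩ hy) (hf.smo.diff y), Rw i j y hy]; ring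
      have RRg : ∀ i j, DA (Rij i j) (DA (Rij i j) g) x = w x * DA (Rij i j) (DA (Rij i j) f) x := by
        intro i j
        rw [da_congr hΩ (Rg i j) hx, da_mul dw ((hf.da _).smo.diff x), Rw i j x hx]; ring
      -- derivatives of e
      have Ee : DA (I1 n) e x = DA (I1 n) (DA (I1 n) g) x + ν * DA (I1 n) g x := by
        rw [he, da_add ((cg.da _).smo.diff x) ((cg.cmul ν).smo.diff x), da_cmul ν (cg.smo.diff x)]
      have Re : ∀ i j, DA (Rij i j) e x = DA (I1 n) (DA (Rij i j) g) x + ν * DA (Rij i j) g x := by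
        intro i j
        rw [he, da_add ((cg.da _).smo.diff x) ((cg.cmul ν).smo.diff x), da_cmul ν (cg.smo.diff x),
          da_comm cg.smo]
      have RY : ∀ i j, DA (Rij i j) Y x = 2 * (β x * DA (Rij i j) e x) + b1 x * DA (Rij i j) g x := by
        intro i j
        rw [hY, da_add (((CS.so_mul hΩ sβ ce).cmul 2).smo.diff x) ((CS.so_mul hΩ hb1 cg).smo.diff x),
          da_cmul 2 ((CS.so_mul hΩ sβ ce).smo.diff x), da_mul dβ (ce.smo.diff x),
          da_mul db1 (cg.smo.diff x), Rβ i j x hx, Rb1 i j x hx]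
        ring
      have Ek4 : DA (I1 n) k4 x = (3 * β x ^ 2 - c ^ 2) * b1 x := by
        have : k4 = fun x => (β x * β x + (-c^2)) * β x := by ext y; simp only [hk4]; ring
        rw [this, da_mul ((dβ.fun_mul dβ).fun_add (by fun_prop)) dβ, da_add (dβ.fun_mul dβ) (by fun_prop),
          da_mul dβ dβ, da_const, Eβ x hx]
        ring
      -- Q part
      set S : ℝ := 1 / 2 * ∑ i, ∑ j, DA (Rij i j) (DA (Rij i j) f) x with hS
      have hQ : (1/2 : ℝ) * ∑ i, ∑ j, (ZR i j (DA (Rij i j) g) Y x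
            + (-1) * ZE β (DA (Rij i j) g) (DA (Rij i j) g) x) = w x * S * Y x := by
        have : ∀ i j, (ZR i j (DA (Rij i j) g) Y x
            + (-1) * ZE β (DA (Rij i j) g) (DA (Rij i j) g) x)
            = DA (Rij i j) (DA (Rij i j) f) x * (w x * Y x) := by
          intro i j
          rw [ZR_on i j (cg.da _) cY x, ZE_on hΩ sβ (cg.da _) (cg.da _) hx, RRg, RY, Re,
            Eβ x hx]
          simp only [hν]
          ring
        simp_rw [this, ← Finset.sum_mul, hS]
        ring
      have hFx : F x = (-2) * ((DA (I1 n) e x + ν * e x + w x * S + (β x ^ 2 - c ^ 2) * g x) * Y x) 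
          - 4 * b1 x * e x ^ 2 - (4 * β x ^ 2 * b1 x - b3 x) * g x ^ 2 := by
        simp only [hF]
        rw [hQ, ZE_on hΩ sβ ce ce hx, ZE_on hΩ hb1 cg ce hx, ZE_on hΩ hb2 cg cg hx,
          ZE_on hΩ sk4 cg cg hx, Eβ x hx, Eb1 x hx, Eb2 x hx, Ek4]
        have e1 : DA (I1 n) g x = e x - ν * g x := by simp only [he]; ring
        rw [e1]
        simp only [hY, hk4, hν]
        ring
      have hP : w x * (‖x‖ ^ 2 * lap f x) =
          (DA (I1 n) e x + ν * e x + w x * S + (β x ^ 2 - c ^ 2) * g x) - Y x := by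
        rw [polar_lap hf.smo, Ee, EEg, ← hS]
        simp only [hY, he]
        rw [Eg x hx]
        simp only [hβ, hg, hc, hν]
        ring
      rw [hP, hFx]
      have hb := hpos x hx
      set X := (DA (I1 n) e x + ν * e x + w x * S + (β x ^ 2 - c ^ 2) * g x)
      have : 0 ≤ b1 x * e x ^ 2 := by positivity
      nlinarith [sq_nonneg X, sq_nonneg (Y x)]
  have i1 : Integrable (fun x => (w x * (‖x‖ ^ 2 * lap f x)) ^ 2) := by
    simp_rw [sq (w _ * _)]
    exact (CS.mul cP.smo cP).integrable
  have i2 : Integrable (fun x => (4 * (ω x + 1) ^ 2 * b1 x - b3 x) * (w x * f x) ^ 2) := by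
    simp_rw [sq (w _ * f _)]
    exact (CS.so_mul hΩ (((contDiffOn_const.mul ((hω.add contDiffOn_const).pow 2)).mul hb1).sub hb3)
      (CS.mul cg.smo cg)).integrable
  have := integral_mono zF.int (i1.sub i2) main
  simp only [Pi.sub_apply] at this
  rw [zF.zero, integral_sub i1 i2] at this
  linarith

/-- open annulus -/
def Ann (n : ℕ) (a b : ℝ) : Set (EE n) := {x | a < ‖x‖ ∧ ‖x‖ < b}

lemma isOpen_Ann (n : ℕ) (a b : ℝ) : IsOpen (Ann n a b) :=
  (isOpen_lt continuous_const continuous_norm).inter (isOpen_lt continuous_norm continuous_const)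

section radial
variable {n : ℕ}

lemma hasFDerivAt_log_norm {x : EE n} (hx : x ≠ 0) :
    HasFDerivAt (fun y : EE n => Real.log ‖y‖) ((‖x‖ ^ 2)⁻¹ • innerSL ℝ x) x := by
  have h1 : (fun y : EE n => Real.log ‖y‖) = fun y => (1 / 2 : ℝ) * Real.log (‖y‖ ^ 2) := by
    ext y; rw [Real.log_pow]; push_cast; ring
  rw [h1]
  have h2 := ((hasStrictFDerivAt_norm_sq x).hasFDerivAt.log (by positivity)).const_mul (1 / 2 : ℝ)
  refine HasFDerivAt.congr_fderiv h2 ?_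
  ext v
  simp
  ring

lemma da_radial {x : EE n} (hx : x ≠ 0) {φ : ℝ → ℝ} {φ' : ℝ}
    (hφ : HasDerivAt φ φ' (Real.log ‖x‖)) (A : EE n →L[ℝ] EE n) :
    DA A (fun y => φ (Real.log ‖y‖)) x = φ' * ((‖x‖ ^ 2)⁻¹ * ⟪x, A x⟫) := by
  have := hφ.comp_hasFDerivAt x (hasFDerivAt_log_norm hx)
  unfold DA
  have h : (fun y : EE n => φ (Real.log ‖y‖)) = φ ∘ (fun y : EE n => Real.log ‖y‖) := rfl
  rw [h, this.fderiv]
  simp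

lemma da_radial_E {x : EE n} (hx : x ≠ 0) {φ : ℝ → ℝ} {φ' : ℝ}
    (hφ : HasDerivAt φ φ' (Real.log ‖x‖)) :
    DA (I1 n) (fun y => φ (Real.log ‖y‖)) x = φ' := by
  rw [da_radial hx hφ]
  have : ‖x‖ ≠ 0 := by simpa using hx
  simp [real_inner_self_eq_norm_sq]
  field_simp

lemma da_radial_R {x : EE n} (hx : x ≠ 0) {φ : ℝ → ℝ} {φ' : ℝ}
    (hφ : HasDerivAt φ φ' (Real.log ‖x‖)) (i j : Fin n) :
    DA (Rij i j) (fun y => φ (Real.log ‖y‖)) x = 0 := by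
  rw [da_radial hx hφ, Rij_apply, inner_sub_right, inner_smul_right, inner_smul_right]
  have h : ∀ k : Fin n, ⟪x, eb k⟫ = x k := by
    intro k; rw [real_inner_comm]; simp [eb, EuclideanSpace.inner_single_left]
  rw [h, h]
  ring

lemma so_radial {a b : ℝ} (ha : 0 < a) {φ : ℝ → ℝ}
    (hφ : ContDiffOn ℝ (⊤ : ℕ∞) φ (Ioo (Real.log a) (Real.log b))) :
    SO (Ann n a b) (fun y => φ (Real.log ‖y‖)) := by
  have h1 : ContDiffOn ℝ (⊤ : ℕ∞) (fun y : EE n => Real.log ‖y‖) (Ann n a b) := by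
    intro x hx
    have hx0 : x ≠ 0 := by
      rintro rfl; have := hx.1; simp at this; linarith
    exact ((contDiffAt_norm ℝ hx0).log (by simpa using hx0)).contDiffWithinAt
  refine hφ.comp h1 fun x hx => ?_
  have := hx.1
  exact ⟨Real.log_lt_log ha hx.1, Real.log_lt_log (ha.trans hx.1) hx.2⟩
end radial

section oned
variable (A B p σ : ℝ)
def fl (t : ℝ) : ℝ := 1 + t - A
def fm (t : ℝ) : ℝ := 1 + B - t
def fW (t : ℝ) : ℝ := Real.exp (-p * t - σ * (Real.log (fl A t) + Real.log (fm B t) - Real.log (2 + B - A)))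
def fo (t : ℝ) : ℝ := -p - σ * ((fl A t)⁻¹ - (fm B t)⁻¹)
def f1 (t : ℝ) : ℝ := σ * ((fl A t)⁻¹ ^ 2 + (fm B t)⁻¹ ^ 2)
def f2 (t : ℝ) : ℝ := σ * (-2 * (fl A t)⁻¹ ^ 3 + 2 * (fm B t)⁻¹ ^ 3)
def f3 (t : ℝ) : ℝ := σ * (6 * (fl A t)⁻¹ ^ 4 + 6 * (fm B t)⁻¹ ^ 4)

variable {A B p σ} {t : ℝ}
lemma fl_one (ht : t ∈ Ioo A B) : 1 ≤ fl A t := by unfold fl; linarith [ht.1]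
lemma fm_one (ht : t ∈ Ioo A B) : 1 ≤ fm B t := by unfold fm; linarith [ht.2]
lemma fl_d : HasDerivAt (fl A) 1 t := by
  unfold fl; exact ((hasDerivAt_id t).const_add 1).sub_const A
lemma fm_d : HasDerivAt (fm B) (-1) t := by
  unfold fm; exact (hasDerivAt_id t).const_sub (1 + B)
lemma fli_d (h : fl A t ≠ 0) : HasDerivAt (fun t => (fl A t)⁻¹) (-(fl A t)⁻¹ ^ 2) t := by
  have := (fl_d (A := A) (t := t)).inv h
  refine this.congr_deriv ?_
  simp [div_eq_mul_inv]
lemma fmi_d (h : fm B t ≠ 0) : HasDerivAt (fun t => (fm B t)⁻¹) ((fm B t)⁻¹ ^ 2) t := by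
  have := (fm_d (B := B) (t := t)).inv h
  refine this.congr_deriv ?_
  simp [div_eq_mul_inv]

lemma fW_d (h1 : fl A t ≠ 0) (h2 : fm B t ≠ 0) : HasDerivAt (fW A B p σ) (fo A B p σ t * fW A B p σ t) t := by
  unfold fW fo
  have := ((((hasDerivAt_id t).const_mul (-p)).sub ((((fl_d (A := A) (t := t)).log h1).add
    ((fm_d (B := B) (t := t)).log h2)).sub_const (Real.log (2 + B - A)) |>.const_mul σ))).exp
  convert this using 1
  simp only [id, Pi.sub_apply, Pi.add_apply]
  rw [mul_comm]
  congr 1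
  field_simp
  ring

lemma fo_d (h1 : fl A t ≠ 0) (h2 : fm B t ≠ 0) : HasDerivAt (fo A B p σ) (f1 A B σ t) t := by
  have := (((fli_d h1).sub (fmi_d h2)).const_mul σ).const_sub (-p)
  refine HasDerivAt.congr_deriv (f' := _) this ?_
  unfold f1; ring

lemma f1_d (h1 : fl A t ≠ 0) (h2 : fm B t ≠ 0) : HasDerivAt (f1 A B σ) (f2 A B σ t) t := by
  have := (((fli_d h1).pow 2).add ((fmi_d h2).pow 2)).const_mul σ
  refine HasDerivAt.congr_deriv (f' := _) this ?_
  unfold f2; push_cast; ring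

lemma f2_d (h1 : fl A t ≠ 0) (h2 : fm B t ≠ 0) : HasDerivAt (f2 A B σ) (f3 A B σ t) t := by
  have := ((((fli_d h1).pow 3).const_mul (-2)).add (((fmi_d h2).pow 3).const_mul 2)).const_mul σ
  refine HasDerivAt.congr_deriv (f' := _) this ?_
  unfold f3; push_cast; ring

lemma fl_s : ContDiff ℝ (⊤ : ℕ∞) (fl A) := by unfold fl; fun_prop
lemma fm_s : ContDiff ℝ (⊤ : ℕ∞) (fm B) := by unfold fm; fun_prop
lemma fli_s : ContDiffOn ℝ (⊤ : ℕ∞) (fun t => (fl A t)⁻¹) (Ioo A B) :=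
  fl_s.contDiffOn.inv fun t ht => by have := fl_one ht; positivity
lemma fmi_s : ContDiffOn ℝ (⊤ : ℕ∞) (fun t => (fm B t)⁻¹) (Ioo A B) :=
  fm_s.contDiffOn.inv fun t ht => by have := fm_one ht; positivity
lemma fW_s : ContDiffOn ℝ (⊤ : ℕ∞) (fW A B p σ) (Ioo A B) := by
  unfold fW
  refine ContDiffOn.exp ?_
  refine (contDiffOn_const.mul contDiffOn_id).sub (contDiffOn_const.mul ?_)
  exact ((fl_s.contDiffOn.log fun t ht => by have := fl_one ht; positivity).add
    (fm_s.contDiffOn.log fun t ht => by have := fm_one ht; positivity)).sub contDiffOn_const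
lemma fo_s : ContDiffOn ℝ (⊤ : ℕ∞) (fo A B p σ) (Ioo A B) :=
  contDiffOn_const.sub (contDiffOn_const.mul (fli_s.sub fmi_s))
lemma f1_s : ContDiffOn ℝ (⊤ : ℕ∞) (f1 A B σ) (Ioo A B) :=
  contDiffOn_const.mul ((fli_s.pow 2).add (fmi_s.pow 2))
lemma f2_s : ContDiffOn ℝ (⊤ : ℕ∞) (f2 A B σ) (Ioo A B) :=
  contDiffOn_const.mul ((contDiffOn_const.mul (fli_s.pow 3)).add (contDiffOn_const.mul (fmi_s.pow 3)))
lemma f3_s : ContDiffOn ℝ (⊤ : ℕ∞) (f3 A B σ) (Ioo A B) :=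
  contDiffOn_const.mul ((contDiffOn_const.mul (fli_s.pow 4)).add (contDiffOn_const.mul (fmi_s.pow 4)))

lemma coef_bound {τ ν : ℝ} (ht : t ∈ Ioo A B) (hτ : 4 ≤ τ) (hσ : 0 ≤ σ) (hστ : σ ≤ τ / 2) (hν : 1 ≤ ν) :
    τ ^ 2 * σ / 4 * ((fl A t)⁻¹ + (fm B t)⁻¹) ^ 2 ≤
      4 * (fo A B (τ + ν) σ t + 1) ^ 2 * f1 A B σ t - f3 A B σ t := by
  unfold fo f1 f3
  have h1 := fl_one ht
  have h2 := fm_one ht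
  have a0 : 0 < (fl A t)⁻¹ := by positivity
  have c0 : 0 < (fm B t)⁻¹ := by positivity
  have a1 : (fl A t)⁻¹ ≤ 1 := inv_le_one_of_one_le₀ h1
  have c1 : (fm B t)⁻¹ ≤ 1 := inv_le_one_of_one_le₀ h2
  set a := (fl A t)⁻¹
  set c := (fm B t)⁻¹
  have k1 : τ / 2 ≤ -(-(τ + ν) - σ * (a - c) + 1) := by nlinarith
  have k2 : τ ^ 2 ≤ 4 * (-(τ + ν) - σ * (a - c) + 1) ^ 2 := by nlinarith
  have k3 : a ^ 4 ≤ a ^ 2 := pow_le_pow_of_le_one a0.le a1 (by norm_num)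
  have k4 : c ^ 4 ≤ c ^ 2 := pow_le_pow_of_le_one c0.le c1 (by norm_num)
  have k5 : τ ^ 2 * (σ * (a ^ 2 + c ^ 2)) ≤ 4 * (-(τ + ν) - σ * (a - c) + 1) ^ 2 * (σ * (a ^ 2 + c ^ 2)) :=
    mul_le_mul_of_nonneg_right k2 (by positivity)
  have k6 : σ * (6 * a ^ 4 + 6 * c ^ 4) ≤ 6 * (σ * (a ^ 2 + c ^ 2)) := by nlinarith
  have k7 : (a + c) ^ 2 ≤ 2 * (a ^ 2 + c ^ 2) := by nlinarith [sq_nonneg (a - c)]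
  have k8 : τ ^ 2 * σ / 4 * (a + c) ^ 2 ≤ τ ^ 2 * σ / 4 * (2 * (a ^ 2 + c ^ 2)) :=
    mul_le_mul_of_nonneg_left k7 (by positivity)
  have k9 : 6 * (σ * (a ^ 2 + c ^ 2)) ≤ τ ^ 2 / 2 * (σ * (a ^ 2 + c ^ 2)) :=
    mul_le_mul_of_nonneg_right (by nlinarith) (by positivity)
  nlinarith
end oned

/-- the logarithmic factor `k` -/
def kk (n : ℕ) (a b : ℝ) (x : EE n) : ℝ :=
  fl (Real.log a) (Real.log ‖x‖) * fm (Real.log b) (Real.log ‖x‖) / (2 + Real.log b - Real.log a)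

/-- Carleman weight -/
def wt (n : ℕ) (a b τ σ : ℝ) (x : EE n) : ℝ :=
  fW (Real.log a) (Real.log b) (τ + n / 2) σ (Real.log ‖x‖)

theorem carl {n : ℕ} (hn : 2 ≤ n) {a b τ σ : ℝ} (ha : 0 < a) (hτ : 4 ≤ τ) (hσ : 0 ≤ σ)
    (hστ : σ ≤ τ / 2) {f : EE n → ℝ} (hf : CS (Ann n a b) f) :
    τ ^ 2 * σ / 4 * ∫ x, (wt n a b τ σ x * (kk n a b x)⁻¹ * f x) ^ 2
      ≤ ∫ x, (wt n a b τ σ x * (‖x‖ ^ 2 * lap f x)) ^ 2 := by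
  have hO := isOpen_Ann n a b
  set A := Real.log a
  set B := Real.log b
  have hν : (1 : ℝ) ≤ n / 2 := by
    have : (2 : ℝ) ≤ n := by exact_mod_cast hn
    linarith
  have hx0 : ∀ x ∈ Ann n a b, x ≠ 0 := by
    rintro x hx rfl; have := hx.1; simp at this; linarith
  have hI : ∀ x ∈ Ann n a b, Real.log ‖x‖ ∈ Ioo A B := fun x hx =>
    ⟨Real.log_lt_log ha hx.1, Real.log_lt_log (ha.trans hx.1) hx.2⟩
  have hl : ∀ x ∈ Ann n a b, fl A (Real.log ‖x‖) ≠ 0 := fun x hx => by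
    have := fl_one (hI x hx); positivity
  have hm : ∀ x ∈ Ann n a b, fm B (Real.log ‖x‖) ≠ 0 := fun x hx => by
    have := fm_one (hI x hx); positivity
  have key := carleman_abs hO (w := wt n a b τ σ)
    (ω := fun x => fo A B (τ + n / 2) σ (Real.log ‖x‖))
    (b1 := fun x => f1 A B σ (Real.log ‖x‖)) (b2 := fun x => f2 A B σ (Real.log ‖x‖))
    (b3 := fun x => f3 A B σ (Real.log ‖x‖)) (f := f)
    (so_radial ha fW_s) (so_radial ha fo_s) (so_radial ha f1_s) (so_radial ha f2_s) (so_radial ha f3_s)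
    (fun x hx => da_radial_E (hx0 x hx) (fW_d (hl x hx) (hm x hx)))
    (fun x hx => da_radial_E (hx0 x hx) (fo_d (hl x hx) (hm x hx)))
    (fun x hx => da_radial_E (hx0 x hx) (f1_d (hl x hx) (hm x hx)))
    (fun x hx => da_radial_E (hx0 x hx) (f2_d (hl x hx) (hm x hx)))
    (fun i j x hx => da_radial_R (hx0 x hx) (fW_d (hl x hx) (hm x hx)) i j)
    (fun i j x hx => da_radial_R (hx0 x hx) (fo_d (hl x hx) (hm x hx)) i j)
    (fun i j x hx => da_radial_R (hx0 x hx) (f1_d (hl x hx) (hm x hx)) i j)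
    (fun x hx => by unfold f1; positivity) hf
  refine le_trans ?_ key
  rw [← integral_const_mul]
  have cg : CS (Ann n a b) (fun x => wt n a b τ σ x * f x) := CS.so_mul hO (so_radial ha fW_s) hf
  have hkk : ∀ x ∈ Ann n a b, (kk n a b x)⁻¹ = (fl A (Real.log ‖x‖))⁻¹ + (fm B (Real.log ‖x‖))⁻¹ := by
    intro x hx
    have e1 := hl x hx
    have e2 := hm x hx
    have : (2 + B - A) = fl A (Real.log ‖x‖) + fm B (Real.log ‖x‖) := by unfold fl fm; ring
    unfold kk
    change (fl A _ * fm B _ / (2 + B - A))⁻¹ = _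
    rw [inv_div, this]
    field_simp
    ring
  have hpt : ∀ x, τ ^ 2 * σ / 4 * (wt n a b τ σ x * (kk n a b x)⁻¹ * f x) ^ 2 ≤
      (4 * (fo A B (τ + n / 2) σ (Real.log ‖x‖) + 1) ^ 2 * f1 A B σ (Real.log ‖x‖)
        - f3 A B σ (Real.log ‖x‖)) * (wt n a b τ σ x * f x) ^ 2 := by
    intro x
    by_cases hx : x ∈ Ann n a b
    · have := coef_bound (hI x hx) hτ hσ hστ hν
      rw [hkk x hx]
      calc _ = (τ ^ 2 * σ / 4 * ((fl A (Real.log ‖x‖))⁻¹ + (fm B (Real.log ‖x‖))⁻¹) ^ 2)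
            * (wt n a b τ σ x * f x) ^ 2 := by ring
        _ ≤ _ := mul_le_mul_of_nonneg_right this (sq_nonneg _)
    · simp [hf.zero hx]
  have i2 : Integrable (fun x => (4 * (fo A B (τ + n / 2) σ (Real.log ‖x‖) + 1) ^ 2 * f1 A B σ (Real.log ‖x‖)
        - f3 A B σ (Real.log ‖x‖)) * (wt n a b τ σ x * f x) ^ 2) := by
    simp_rw [sq (wt n a b τ σ _ * f _)]
    exact (CS.so_mul hO (((contDiffOn_const.mul (((so_radial ha fo_s).add contDiffOn_const).pow 2)).mul
      (so_radial ha f1_s)).sub (so_radial ha f3_s)) (CS.mul cg.smo cg)).integrable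
  refine integral_mono_of_nonneg (Filter.Eventually.of_forall fun x => by positivity) i2
    (Filter.Eventually.of_forall hpt)

section scale
variable {n : ℕ} {f g : EE n → ℝ}

lemma pd_scale (hf : Smo f) (c : ℝ) (v x : EE n) :
    pd v (fun y => f (c • y)) x = c * pd v f (c • x) := by
  unfold pd
  have h := (hf.diff (c • x)).hasFDerivAt.comp x ((hasFDerivAt_id x).const_smul c)
  have e : (fun y => f (c • y)) = f ∘ (fun y => c • id y) := rfl
  rw [e]
  erw [h.fderiv]
  simp

lemma Smo.scale (hf : Smo f) (c : ℝ) : Smo (fun y => f (c • y)) :=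
  ContDiff.comp hf (contDiff_const_smul c)

lemma gd_scale (hf : Smo f) (c : ℝ) (x : EE n) :
    gd (fun y => f (c • y)) (fun y => f (c • y)) x = c ^ 2 * gd f f (c • x) := by
  simp only [gd, pd_scale hf, Finset.mul_sum]
  refine Finset.sum_congr rfl fun i _ => ?_
  ring

lemma lap_scale (hf : Smo f) (c : ℝ) (x : EE n) :
    lap (fun y => f (c • y)) x = c ^ 2 * lap f (c • x) := by
  rw [lap_eq (hf.scale c), lap_eq hf, Finset.mul_sum]
  refine Finset.sum_congr rfl fun i _ => ?_
  have : pd (eb i) (fun y => f (c • y)) = fun y => c * pd (eb i) f (c • y) := by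
    ext y; exact pd_scale hf c _ _
  rw [this, pd_mul_at _ (by fun_prop) (((hf.pd _).scale c).differentiable (by simp) x)]
  rw [pd_scale (hf.pd _)]
  simp [pd]
  ring

lemma gd_congr {x : EE n} (h : f =ᶠ[nhds x] g) : gd f f x = gd g g x := by
  simp only [gd, pd_congr _ h]

lemma gd_congr_left {x : EE n} {u : EE n → ℝ} (h : f =ᶠ[nhds x] g) : gd f u x = gd g u x := by
  simp only [gd, pd_congr _ h]

lemma lap_const' (c : ℝ) (x : EE n) : lap (fun _ => c) x = 0 := by
  have : Smo (fun _ : EE n => c) := contDiff_const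
  rw [lap_eq this]
  have e : ∀ v : EE n, pd v (fun _ : EE n => c) = fun _ => 0 := by
    intro v; ext y; simp [pd]
  simp [e, pd]

lemma gd_const' (c : ℝ) (x : EE n) : gd (fun _ => c) f x = 0 := by
  simp [gd, pd]
end scale

/-- a cutoff at scale `ρ` -/
structure Cut {n : ℕ} (r1 r2 C ρ : ℝ) (ψ : EE n → ℝ) : Prop where
  smo : Smo ψ
  nn : ∀ x, 0 ≤ ψ x
  le1 : ∀ x, ψ x ≤ 1
  one : ∀ x, ‖x‖ ≤ r1 * ρ → ψ x = 1
  zero : ∀ x, r2 * ρ ≤ ‖x‖ → ψ x = 0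
  gdb : ∀ x, gd ψ ψ x ≤ C / ρ ^ 2
  lapb : ∀ x, (lap ψ x) ^ 2 ≤ C / ρ ^ 4

lemma exists_cut (n : ℕ) {r1 r2 : ℝ} (h1 : 0 < r1) (h2 : r1 < r2) :
    ∃ C : ℝ, 1 ≤ C ∧ ∀ ρ : ℝ, 0 < ρ → ∃ ψ : EE n → ℝ, Cut r1 r2 C ρ ψ := by
  let φ : ContDiffBump (0 : EE n) := ⟨r1, r2, h1, h2⟩
  have sφ : Smo (φ : EE n → ℝ) := φ.contDiff
  have cφ : HasCompactSupport (φ : EE n → ℝ) := φ.hasCompactSupport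
  have czero : ∀ x, r2 ≤ ‖x‖ → φ x = 0 := fun x hx => φ.zero_of_le_dist (by simpa using hx)
  have t1 : tsupport (gd φ φ) ⊆ tsupport φ := by
    refine closure_minimal ?_ isClosed_closure
    intro x hx; by_contra hn; apply hx
    rw [gd_congr (notMem_tsupport_iff_eventuallyEq.1 hn)]
    exact gd_const' 0 x
  have t2 : tsupport (lap φ) ⊆ tsupport φ := by
    refine closure_minimal ?_ isClosed_closure
    intro x hx; by_contra hn; apply hx
    rw [lap_congr (notMem_tsupport_iff_eventuallyEq.1 hn)]
    exact lap_const' 0 x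
  obtain ⟨C1, hC1⟩ := (sφ.gd sφ).continuous.bounded_above_of_compact_support
    (cφ.of_isClosed_subset isClosed_closure t1)
  obtain ⟨C2, hC2⟩ := sφ.lap.continuous.bounded_above_of_compact_support
    (cφ.of_isClosed_subset isClosed_closure t2)
  refine ⟨1 + |C1| + C2 ^ 2, by nlinarith [abs_nonneg C1, sq_nonneg C2], fun ρ hρ => ?_⟩
  refine ⟨fun x => φ (ρ⁻¹ • x), sφ.scale _, fun x => φ.nonneg, fun x => φ.le_one, ?_, ?_, ?_, ?_⟩
  · intro x hx
    refine φ.one_of_mem_closedBall ?_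
    rw [mem_closedBall_zero_iff, norm_smul, Real.norm_of_nonneg (by positivity)]
    rw [inv_mul_le_iff₀ hρ]; linarith
  · intro x hx
    refine czero _ ?_
    rw [norm_smul, Real.norm_of_nonneg (by positivity)]
    rw [le_inv_mul_iff₀ hρ]; linarith
  · intro x
    rw [gd_scale sφ, div_eq_inv_mul, inv_pow]
    refine mul_le_mul_of_nonneg_left ?_ (by positivity)
    have := hC1 (ρ⁻¹ • x)
    rw [Real.norm_eq_abs] at this
    nlinarith [le_abs_self (gd φ φ (ρ⁻¹ • x)), le_abs_self C1, sq_nonneg C2]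
  · intro x
    rw [lap_scale sφ, div_eq_inv_mul, mul_pow, ← pow_mul, inv_pow]
    refine mul_le_mul_of_nonneg_left ?_ (by positivity)
    have := hC2 (ρ⁻¹ • x)
    rw [Real.norm_eq_abs] at this
    have h3 := abs_nonneg (lap φ (ρ⁻¹ • x))
    have h4 : (lap φ (ρ⁻¹ • x)) ^ 2 ≤ C2 ^ 2 := by rw [← sq_abs]; gcongr
    nlinarith [abs_nonneg C1]

namespace Cut
variable {n : ℕ} {r1 r2 C ρ : ℝ} {ψ : EE n → ℝ}

lemma tsub (h : Cut r1 r2 C ρ ψ) : tsupport ψ ⊆ closedBall 0 (r2 * ρ) := by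
  refine closure_minimal ?_ isClosed_closedBall
  intro x hx
  by_contra hn
  rw [mem_closedBall_zero_iff, not_le] at hn
  exact hx (h.zero x hn.le)

lemma cpt (h : Cut r1 r2 C ρ ψ) : HasCompactSupport ψ :=
  (isCompact_closedBall _ _).of_isClosed_subset isClosed_closure h.tsub

lemma ev_one (h : Cut r1 r2 C ρ ψ) {x : EE n} (hx : ‖x‖ < r1 * ρ) : ψ =ᶠ[nhds x] fun _ => 1 := by
  have : {y : EE n | ‖y‖ < r1 * ρ} ∈ nhds x :=
    (isOpen_lt continuous_norm continuous_const).mem_nhds hx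
  filter_upwards [this] with y hy
  exact h.one y (le_of_lt hy)

lemma ev_zero (h : Cut r1 r2 C ρ ψ) {x : EE n} (hx : r2 * ρ < ‖x‖) : ψ =ᶠ[nhds x] fun _ => 0 := by
  have : {y : EE n | r2 * ρ < ‖y‖} ∈ nhds x :=
    (isOpen_lt continuous_const continuous_norm).mem_nhds hx
  filter_upwards [this] with y hy
  exact h.zero y (le_of_lt hy)
end Cut

section kw
variable {n : ℕ} {a b τ σ : ℝ} {x : EE n}

lemma Ann.log_mem (ha : 0 < a) (hx : x ∈ Ann n a b) : Real.log ‖x‖ ∈ Ioo (Real.log a) (Real.log b) :=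
  ⟨Real.log_lt_log ha hx.1, Real.log_lt_log (ha.trans hx.1) hx.2⟩

lemma kk_inv (ha : 0 < a) (hx : x ∈ Ann n a b) :
    (kk n a b x)⁻¹ = (fl (Real.log a) (Real.log ‖x‖))⁻¹ + (fm (Real.log b) (Real.log ‖x‖))⁻¹ := by
  have h1 := fl_one (Ann.log_mem ha hx)
  have h2 := fm_one (Ann.log_mem ha hx)
  have : (2 + Real.log b - Real.log a) = fl (Real.log a) (Real.log ‖x‖) + fm (Real.log b) (Real.log ‖x‖) := by
    unfold fl fm; ring
  unfold kk
  rw [inv_div, this]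
  field_simp
  ring

lemma kk_pos (ha : 0 < a) (hx : x ∈ Ann n a b) : 0 < kk n a b x := by
  have h1 := fl_one (Ann.log_mem ha hx)
  have h2 := fm_one (Ann.log_mem ha hx)
  have := kk_inv ha hx
  rw [← inv_pos, this]; positivity

lemma kk_ge (ha : 0 < a) (hx : x ∈ Ann n a b) : 1 / 2 ≤ kk n a b x := by
  have h1 := inv_le_one_of_one_le₀ (fl_one (Ann.log_mem ha hx))
  have h2 := inv_le_one_of_one_le₀ (fm_one (Ann.log_mem ha hx))
  have := kk_inv ha hx
  have hp := kk_pos ha hx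
  have h3 : (kk n a b x)⁻¹ ≤ 2 := by linarith
  rw [inv_le_comm₀ hp (by norm_num)] at h3
  linarith

lemma kk_le_l (ha : 0 < a) (hx : x ∈ Ann n a b) : kk n a b x ≤ 1 + Real.log (‖x‖ / a) := by
  have h1 := fl_one (Ann.log_mem ha hx)
  have h2 := fm_one (Ann.log_mem ha hx)
  have hp := kk_pos ha hx
  have h3 : (fl (Real.log a) (Real.log ‖x‖))⁻¹ ≤ (kk n a b x)⁻¹ := by
    rw [kk_inv ha hx]
    have : 0 < (fm (Real.log b) (Real.log ‖x‖))⁻¹ := by positivity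
    linarith
  rw [inv_le_inv₀ (by positivity) hp] at h3
  rw [Real.log_div (by have := hx.1; linarith) ha.ne']
  unfold fl at h3; linarith

lemma kk_le_m (ha : 0 < a) (hx : x ∈ Ann n a b) : kk n a b x ≤ 1 + Real.log (b / ‖x‖) := by
  have h1 := fl_one (Ann.log_mem ha hx)
  have h2 := fm_one (Ann.log_mem ha hx)
  have hp := kk_pos ha hx
  have h3 : (fm (Real.log b) (Real.log ‖x‖))⁻¹ ≤ (kk n a b x)⁻¹ := by
    rw [kk_inv ha hx]
    have : 0 < (fl (Real.log a) (Real.log ‖x‖))⁻¹ := by positivity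
    linarith
  rw [inv_le_inv₀ (by positivity) hp] at h3
  rw [Real.log_div (by have := hx.1; have := hx.2; linarith) (by have := hx.1; linarith)]
  unfold fm at h3; linarith

lemma kk_le_l' (ha : 0 < a) (hx : x ∈ Ann n a b) : kk n a b x ≤ ‖x‖ / a := by
  have := kk_le_l ha hx
  have h0 : 0 < ‖x‖ / a := div_pos (ha.trans hx.1) ha
  linarith [Real.log_le_sub_one_of_pos h0]

lemma kk_le_m' (ha : 0 < a) (hx : x ∈ Ann n a b) : kk n a b x ≤ b / ‖x‖ := by
  have := kk_le_m ha hx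
  have h0 : 0 < b / ‖x‖ := div_pos ((ha.trans hx.1).trans hx.2) (ha.trans hx.1)
  linarith [Real.log_le_sub_one_of_pos h0]

lemma wt_eq (ha : 0 < a) (hx : x ∈ Ann n a b) :
    wt n a b τ σ x = ‖x‖ ^ (-(τ + n / 2)) * (kk n a b x) ^ (-σ) := by
  have h1 := fl_one (Ann.log_mem ha hx)
  have h2 := fm_one (Ann.log_mem ha hx)
  have hp := kk_pos ha hx
  have hD : 0 < (2 + Real.log b - Real.log a) := by
    have := (Ann.log_mem ha hx).1.trans (Ann.log_mem ha hx).2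
    linarith
  have hr : 0 < ‖x‖ := ha.trans hx.1
  rw [Real.rpow_def_of_pos hr, Real.rpow_def_of_pos hp, ← Real.exp_add]
  unfold wt fW
  congr 1
  unfold kk
  rw [Real.log_div (by positivity) hD.ne', Real.log_mul (by positivity) (by positivity)]
  ring

lemma wt_pos : 0 < wt n a b τ σ x := Real.exp_pos _

lemma wt_shift (ha : 0 < a) (hx : x ∈ Ann n a b) :
    wt n a b (τ - 2) (σ - 1) x = wt n a b τ σ x * (‖x‖ ^ 2 * kk n a b x) := by
  have hp := kk_pos ha hx
  have hr : 0 < ‖x‖ := ha.trans hx.1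
  rw [wt_eq ha hx, wt_eq ha hx]
  have e1 : -(τ - 2 + (n : ℝ) / 2) = -(τ + n / 2) + 2 := by ring
  have e2 : -(σ - 1) = -σ + 1 := by ring
  rw [e1, e2, Real.rpow_add hr, Real.rpow_add hp, Real.rpow_one, Real.rpow_two]
  ring
end kw

lemma gd_comm {n : ℕ} {f g : EE n → ℝ} (x : EE n) : gd f g x = gd g f x := by
  simp only [gd, mul_comm]

protected lemma CS.lap {n : ℕ} {Ω : Set (EE n)} {f : EE n → ℝ} (hf : CS Ω f) : CS Ω (lap f) := by
  have hs : tsupport (lap f) ⊆ tsupport f := by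
    refine closure_minimal ?_ isClosed_closure
    intro x hx
    by_contra hn
    apply hx
    rw [lap_congr (notMem_tsupport_iff_eventuallyEq.1 hn)]
    exact lap_const' 0 x
  exact ⟨hf.smo.lap, hf.cpt.of_isClosed_subset isClosed_closure hs, hs.trans hf.sub⟩

protected lemma CS.gd {n : ℕ} {Ω : Set (EE n)} {f g : EE n → ℝ} (hf : CS Ω f) (hg : Smo g) : CS Ω (gd f g) := by
  have hs : tsupport (gd f g) ⊆ tsupport f := by
    refine closure_minimal ?_ isClosed_closure
    intro x hx
    by_contra hn
    apply hx
    rw [gd_congr_left (notMem_tsupport_iff_eventuallyEq.1 hn)]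
    exact gd_const' 0 x
  exact ⟨hf.smo.gd hg, hf.cpt.of_isClosed_subset isClosed_closure hs, hs.trans hf.sub⟩

lemma CS.sq_int {n : ℕ} {Ω : Set (EE n)} {f : EE n → ℝ} (hf : CS Ω f) :
    Integrable (fun x => (f x) ^ 2) := by
  simp_rw [sq]
  exact (CS.mul hf.smo hf).integrable

lemma wt_so {n : ℕ} {a b τ σ : ℝ} (ha : 0 < a) : SO (Ann n a b) (wt n a b τ σ) := so_radial ha fW_s

lemma kk_so {n : ℕ} {a b : ℝ} (ha : 0 < a) : SO (Ann n a b) (kk n a b) :=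
  so_radial (φ := fun t => fl (Real.log a) t * fm (Real.log b) t / (2 + Real.log b - Real.log a)) ha
    (((fl_s.mul fm_s).div_const _).contDiffOn)

lemma kki_so {n : ℕ} {a b : ℝ} (ha : 0 < a) : SO (Ann n a b) (fun x => (kk n a b x)⁻¹) :=
  (kk_so ha).inv fun _ hx => (kk_pos ha hx).ne'

theorem double_carl {n : ℕ} (hn : 2 ≤ n) {a b τ σ : ℝ} (ha : 0 < a) (hb : b ≤ 1) (hτ : 6 ≤ τ) (hσ : 3 ≤ σ)
    (hστ : σ ≤ τ / 2) {χ u : EE n → ℝ} (hχ : CS (Ann n a b) χ) (hu : Smo u)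
    (hL : ∀ x ∈ Ann n a b, |lap (lap u) x| ≤ |u x|) :
    ∫ x, (wt n a b τ σ x * (kk n a b x)⁻¹ * (χ x * u x)) ^ 2 ≤
     (∫ x, (wt n a b τ σ x * (‖x‖ ^ 4 * (kk n a b x * (2 * gd χ (lap u) x + lap u x * lap χ x)))) ^ 2)
      + 4 * ∫ x, (wt n a b τ σ x * (‖x‖ ^ 2 * (2 * gd χ u x + u x * lap χ x))) ^ 2 := by
  have hO := isOpen_Ann n a b
  have hv : Smo (lap u) := hu.lap
  have cu : CS (Ann n a b) (fun x => u x * χ x) := CS.mul hu hχ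
  have cv : CS (Ann n a b) (fun x => lap u x * χ x) := CS.mul hv hχ
  have k1 := carl hn ha (by linarith : (4 : ℝ) ≤ τ) (by linarith : 0 ≤ σ) hστ cu
  have k2 := carl hn ha (by linarith : (4 : ℝ) ≤ τ - 2) (by linarith : 0 ≤ σ - 1) (by linarith) cv
  set w := wt n a b τ σ with hw
  set k := kk n a b with hk
  have sw : SO (Ann n a b) w := wt_so ha
  have sk : SO (Ann n a b) k := kk_so ha
  have ski : SO (Ann n a b) (fun x => (k x)⁻¹) := kki_so ha
  have sr : Smo (fun x : EE n => ‖x‖ ^ 2) := contDiff_norm_sq ℝ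
  have sr4 : Smo (fun x : EE n => ‖x‖ ^ 4) := by
    have : (fun x : EE n => ‖x‖ ^ 4) = fun x => ‖x‖ ^ 2 * ‖x‖ ^ 2 := by ext x; ring
    rw [this]; exact sr.mul sr
  have cc1 : CS (Ann n a b) (fun x => 2 * gd χ u x + u x * lap χ x) :=
    ((hχ.gd hu).cmul 2).add (CS.mul hu hχ.lap)
  have cc2 : CS (Ann n a b) (fun x => 2 * gd χ (lap u) x + lap u x * lap χ x) :=
    ((hχ.gd hv).cmul 2).add (CS.mul hv hχ.lap)
  have iJ2 : Integrable (fun x => (w x * (‖x‖ ^ 4 * (k x * (2 * gd χ (lap u) x + lap u x * lap χ x)))) ^ 2) :=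
    (CS.so_mul hO sw (CS.mul sr4 (CS.so_mul hO sk cc2))).sq_int
  have iJ1 : Integrable (fun x => (w x * (‖x‖ ^ 2 * (2 * gd χ u x + u x * lap χ x))) ^ 2) :=
    (CS.so_mul hO sw (CS.mul sr cc1)).sq_int
  have iI : Integrable (fun x => (w x * (k x)⁻¹ * (u x * χ x)) ^ 2) :=
    (CS.so_mul hO (sw.mul ski) cu).sq_int
  have iP : Integrable (fun x => (w x * (‖x‖ ^ 2 * (lap u x * χ x))) ^ 2) :=
    (CS.so_mul hO sw (CS.mul sr cv)).sq_int
  have b1 : ∫ x, (w x * (‖x‖ ^ 2 * lap (fun x => u x * χ x) x)) ^ 2 ≤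
      ∫ x, (2 * (w x * (‖x‖ ^ 2 * (lap u x * χ x))) ^ 2
        + 2 * (w x * (‖x‖ ^ 2 * (2 * gd χ u x + u x * lap χ x))) ^ 2) := by
    refine integral_mono_of_nonneg (Filter.Eventually.of_forall fun x => by positivity)
      ((iP.const_mul 2).add (iJ1.const_mul 2)) (Filter.Eventually.of_forall fun x => ?_)
    dsimp only
    rw [lap_mul hu hχ.smo, gd_comm]
    nlinarith [sq_nonneg ((w x * (‖x‖ ^ 2 * (lap u x * χ x))) - (w x * (‖x‖ ^ 2 * (2 * gd χ u x + u x * lap χ x))))]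
  rw [integral_add (iP.const_mul 2) (iJ1.const_mul 2), integral_const_mul, integral_const_mul] at b1
  have e2 : ∫ x, (wt n a b (τ - 2) (σ - 1) x * (k x)⁻¹ * (lap u x * χ x)) ^ 2
      = ∫ x, (w x * (‖x‖ ^ 2 * (lap u x * χ x))) ^ 2 := by
    congr 1; ext x
    by_cases hx : x ∈ Ann n a b
    · rw [wt_shift ha hx]
      have := (kk_pos ha hx).ne'
      rw [hk, hw]
      field_simp
    · rw [hχ.zero hx]; simp
  rw [e2] at k2
  have b2 : ∫ x, (wt n a b (τ - 2) (σ - 1) x * (‖x‖ ^ 2 * lap (fun x => lap u x * χ x) x)) ^ 2 ≤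
      ∫ x, (2 * (w x * (k x)⁻¹ * (u x * χ x)) ^ 2
        + 2 * (w x * (‖x‖ ^ 4 * (k x * (2 * gd χ (lap u) x + lap u x * lap χ x)))) ^ 2) := by
    refine integral_mono_of_nonneg (Filter.Eventually.of_forall fun x => by positivity)
      ((iI.const_mul 2).add (iJ2.const_mul 2)) (Filter.Eventually.of_forall fun x => ?_)
    dsimp only
    by_cases hx : x ∈ Ann n a b
    · rw [lap_mul hv hχ.smo, gd_comm, wt_shift ha hx]
      have hkp := kk_pos ha hx
      have hr : 0 < ‖x‖ := ha.trans hx.1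
      have hkm := kk_le_m' ha hx
      have hr1 : ‖x‖ ≤ 1 := hx.2.le.trans hb
      change 0 < k x at hkp
      have hkr : k x * ‖x‖ ≤ 1 := by
        rw [le_div_iff₀ hr] at hkm
        exact hkm.trans hb
      set c2 := 2 * gd χ (lap u) x + lap u x * lap χ x
      have q1 : (w x * (‖x‖ ^ 4 * (k x * (χ x * lap (lap u) x)))) ^ 2 ≤ (w x * (k x)⁻¹ * (u x * χ x)) ^ 2 := by
        rw [← sq_abs, ← sq_abs (w x * (k x)⁻¹ * (u x * χ x))]
        refine pow_le_pow_left₀ (abs_nonneg _) ?_ 2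
        rw [abs_mul, abs_mul, abs_mul, abs_mul, abs_mul, abs_mul, abs_mul, mul_assoc]
        refine mul_le_mul_of_nonneg_left ?_ (abs_nonneg _)
        rw [abs_of_pos hkp, abs_of_pos (inv_pos.2 hkp), abs_of_pos (pow_pos hr 4), le_inv_mul_iff₀ hkp]
        have z1 : k x * (‖x‖ ^ 4 * k x) ≤ 1 := by
          have : (k x * ‖x‖) ^ 2 * ‖x‖ ^ 2 ≤ 1 * 1 :=
            mul_le_mul (pow_le_one₀ (by positivity) hkr) (pow_le_one₀ hr.le hr1) (by positivity) (by norm_num)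
          linarith
        calc k x * (‖x‖ ^ 4 * (k x * (|χ x| * |lap (lap u) x|)))
            = k x * (‖x‖ ^ 4 * k x) * (|χ x| * |lap (lap u) x|) := by ring
          _ ≤ 1 * (|χ x| * |u x|) := by
              refine mul_le_mul z1 (mul_le_mul_of_nonneg_left (hL x hx) (abs_nonneg _)) (by positivity) (by norm_num)
          _ = _ := by ring
      calc _ = (w x * (‖x‖ ^ 4 * (k x * (χ x * lap (lap u) x))) + w x * (‖x‖ ^ 4 * (k x * c2))) ^ 2 := by
            simp only [c2]; ring
        _ ≤ 2 * (w x * (‖x‖ ^ 4 * (k x * (χ x * lap (lap u) x)))) ^ 2 + 2 * (w x * (‖x‖ ^ 4 * (k x * c2))) ^ 2 := by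
            nlinarith [sq_nonneg (w x * (‖x‖ ^ 4 * (k x * (χ x * lap (lap u) x))) - w x * (‖x‖ ^ 4 * (k x * c2)))]
        _ ≤ _ := by linarith
    · rw [cv.lap.zero hx]
      have z : (wt n a b (τ - 2) (σ - 1) x * (‖x‖ ^ 2 * 0)) ^ 2 = 0 := by ring
      rw [z]
      positivity
  rw [integral_add (iI.const_mul 2) (iJ2.const_mul 2), integral_const_mul, integral_const_mul] at b2
  have eI : ∫ x, (w x * (k x)⁻¹ * (χ x * u x)) ^ 2 = ∫ x, (w x * (k x)⁻¹ * (u x * χ x)) ^ 2 := by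
    simp_rw [mul_comm (χ _)]
  rw [eI]
  set I := ∫ x, (w x * (k x)⁻¹ * (u x * χ x)) ^ 2
  set P := ∫ x, (w x * (‖x‖ ^ 2 * (lap u x * χ x))) ^ 2
  have hI : 0 ≤ I := integral_nonneg fun x => by positivity
  have hP : 0 ≤ P := integral_nonneg fun x => by positivity
  have c1 : 1 * I ≤ τ ^ 2 * σ / 4 * I := mul_le_mul_of_nonneg_right (by nlinarith) hI
  have c2 : 8 * P ≤ (τ - 2) ^ 2 * (σ - 1) / 4 * P := mul_le_mul_of_nonneg_right (by nlinarith) hP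
  have k1' := k1.trans b1
  have k2' := k2.trans b2
  linarith

lemma amgm_neg {s A B : ℝ} (hs : s ^ 2 ≤ A * B) (hA : 0 ≤ A) (hB : 0 ≤ B) : -(2 * s) ≤ A + B := by
  have h : (2 * s) ^ 2 ≤ (A + B) ^ 2 := by nlinarith [sq_nonneg (A - B)]
  have := abs_le_of_sq_le_sq h (by positivity)
  linarith [neg_abs_le (2 * s)]

section pw
variable {n : ℕ} {f g h : EE n → ℝ}

lemma gd_mul_left (hf : Smo f) (hg : Smo g) (x : EE n) :
    gd (fun y => f y * g y) h x = f x * gd g h x + g x * gd f h x := by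
  simp only [gd, pd_mul _ hf hg, Finset.mul_sum, ← Finset.sum_add_distrib]
  refine Finset.sum_congr rfl fun i _ => ?_
  ring

lemma pd_pow' (hf : Smo f) (k : ℕ) (v x : EE n) :
    pd v (fun y => f y ^ k) x = k * f x ^ (k - 1) * pd v f x := by
  unfold pd
  have := (hf.diff x).hasFDerivAt.pow k
  rw [this.fderiv]
  simp

lemma gd_pow_left (hf : Smo f) (k : ℕ) (x : EE n) :
    gd (fun y => f y ^ k) h x = k * f x ^ (k - 1) * gd f h x := by
  simp only [gd, pd_pow' hf, Finset.mul_sum]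
  refine Finset.sum_congr rfl fun i _ => ?_
  ring
end pw

lemma cacc_alg {X Y Z V g : ℝ} (hg : 1 ≤ g) (hX : 0 ≤ X) (hY : 0 ≤ Y) (hZ : 0 ≤ Z) (hV : 0 ≤ V)
    (h1 : Y ≤ 1 / 2 * Y + 1 / (720 * g) * X + 182 * g * V)
    (h2 : X ≤ 1 / (148 * g) * Z + 37 * g * Y + 1 / 2 * X + 8 * g * Y)
    (h3 : Z ≤ 1 / 2 * X + 1 / 2 * V + 1 / 2 * Z + 18 * g * X) :
    Y ≤ 730 * g * V ∧ X ≤ 132000 * g ^ 2 * V ∧ Z ≤ 5000000 * g ^ 3 * V := by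
  have g0 : 0 < g := by linarith
  obtain ⟨y, rfl⟩ : ∃ y, Y = y / g := ⟨Y * g, by field_simp⟩
  obtain ⟨z, rfl⟩ : ∃ z, Z = z * g := ⟨Z / g, by field_simp⟩
  have hy : 0 ≤ y := by
    have := mul_nonneg hY g0.le; rwa [div_mul_cancel₀ _ g0.ne'] at this
  have hz : 0 ≤ z := by
    by_contra hn; push Not at hn; nlinarith
  have k1 : y ≤ 1 / 2 * y + 1 / 720 * X + 182 * (g ^ 2 * V) := by
    have := mul_le_mul_of_nonneg_right h1 g0.le
    field_simp at this ⊢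
    nlinarith
  have k2 : X ≤ 1 / 148 * z + 37 * y + 1 / 2 * X + 8 * y := by
    field_simp at h2 ⊢
    nlinarith
  have k3 : z ≤ 1 / 2 * X + 1 / 2 * V + 1 / 2 * z + 18 * X := by
    have e : z * g ≤ (1 / 2 * X + 1 / 2 * V + 1 / 2 * z + 18 * X) * g := by nlinarith
    exact le_of_mul_le_mul_right e g0
  have hG : V ≤ g ^ 2 * V := by
    have : 1 * V ≤ g ^ 2 * V := mul_le_mul_of_nonneg_right (one_le_pow₀ hg) hV
    linarith
  set G := g ^ 2 * V with hGd
  have r1 : y ≤ 730 * G := by linarith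
  have r2 : X ≤ 132000 * G := by linarith
  have r3 : z ≤ 5000000 * G := by linarith
  refine ⟨?_, by linarith, ?_⟩
  · rw [div_le_iff₀ g0]; nlinarith
  · nlinarith

lemma int_lin3 {n : ℕ} {f g h : EE n → ℝ} (hf : Integrable f) (hg : Integrable g) (hh : Integrable h)
    (a b c : ℝ) : ∫ x, (a * f x + b * g x + c * h x) = a * (∫ x, f x) + b * (∫ x, g x) + c * ∫ x, h x := by
  have h1 : Integrable (fun x => a * f x + b * g x) := (hf.const_mul a).add (hg.const_mul b)
  rw [integral_add h1 (hh.const_mul c), integral_add (hf.const_mul a) (hg.const_mul b),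
    integral_const_mul, integral_const_mul, integral_const_mul]

lemma int_lin4 {n : ℕ} {f g h k : EE n → ℝ} (hf : Integrable f) (hg : Integrable g) (hh : Integrable h)
    (hk : Integrable k) (a b c d : ℝ) :
    ∫ x, (a * f x + b * g x + c * h x + d * k x)
      = a * (∫ x, f x) + b * (∫ x, g x) + c * (∫ x, h x) + d * ∫ x, k x := by
  have h1 : Integrable (fun x => a * f x + b * g x + c * h x) :=
    ((hf.const_mul a).add (hg.const_mul b)).add (hh.const_mul c)
  rw [integral_add h1 (hk.const_mul d), int_lin3 hf hg hh, integral_const_mul]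

theorem cacc {n : ℕ} {r1 r2 C ρ M : ℝ} {η u : EE n → ℝ} (hη : Cut r1 r2 C ρ η) (hr2 : r2 ≤ 1)
    (hC : 1 ≤ C) (hρ : 0 < ρ) (hρ1 : ρ ≤ 1) (hu : Smo u)
    (hL : ∀ x, ‖x‖ < ρ → |lap (lap u) x| ≤ |u x|) (hM : ∀ x, ‖x‖ < ρ → |u x| ≤ M) :
    ρ ^ 2 * (∫ x, η x ^ 2 * gd u u x) + ρ ^ 4 * (∫ x, η x ^ 4 * (lap u x) ^ 2)
      + ρ ^ 6 * (∫ x, η x ^ 6 * gd (lap u) (lap u) x)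
      ≤ 10000000 * C ^ 3 * (M ^ 2 * volume.real (ball (0 : EE n) ρ)) := by
  have hv : Smo (lap u) := hu.lap
  set v := lap u with hvd
  set g : ℝ := C / ρ ^ 2 with hg
  have hg1 : 1 ≤ g := by
    rw [hg, le_div_iff₀ (by positivity)]; nlinarith [pow_le_one₀ (n := 2) hρ.le hρ1]
  have cη : CS univ η := ⟨hη.smo, hη.cpt, subset_univ _⟩
  have ck : ∀ k : ℕ, CS univ (fun x => η x ^ (k + 1)) := by
    intro k
    have : (fun x => η x ^ (k + 1)) = fun x => η x ^ k * η x := by ext x; ring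
    rw [this]; exact CS.mul (hη.smo.pow k) cη
  have ckm : ∀ (k : ℕ) (f : EE n → ℝ), Smo f → CS univ (fun x => η x ^ (k + 1) * f x) := by
    intro k f hf
    have := CS.mul hf (ck k)
    simpa [mul_comm] using this
  have iY : Integrable (fun x => η x ^ 2 * gd u u x) := (ckm 1 _ (hu.gd hu)).integrable
  have iX : Integrable (fun x => η x ^ 4 * v x ^ 2) := (ckm 3 _ (hv.pow 2)).integrable
  have iZ : Integrable (fun x => η x ^ 6 * gd v v x) := (ckm 5 _ (hv.gd hv)).integrable
  set D : EE n → ℝ := (ball (0 : EE n) ρ).indicator (fun _ => M ^ 2) with hD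
  have iD : Integrable D := by
    rw [hD, integrable_indicator_iff measurableSet_ball]
    exact integrableOn_const (by simp [measure_ball_lt_top.ne])
  have eD : ∫ x, D x = M ^ 2 * volume.real (ball (0 : EE n) ρ) := by
    rw [hD, integral_indicator measurableSet_ball]; simp [mul_comm]
  set V := M ^ 2 * volume.real (ball (0 : EE n) ρ) with hV
  have hV0 : 0 ≤ V := by positivity
  have off : ∀ x, ¬ ‖x‖ < ρ → η x = 0 := by
    intro x hx; apply hη.zero; push Not at hx; nlinarith
  have Din : ∀ x, ‖x‖ < ρ → u x ^ 2 ≤ D x := by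
    intro x hx
    rw [hD, indicator_of_mem (by simpa using hx), ← sq_abs]
    exact pow_le_pow_left₀ (abs_nonneg _) (hM x hx) 2
  have Dnn : ∀ x, 0 ≤ D x := fun x => indicator_nonneg (fun _ _ => sq_nonneg _) x
  set X := ∫ x, η x ^ 4 * v x ^ 2 with hXd
  set Y := ∫ x, η x ^ 2 * gd u u x with hYd
  set Z := ∫ x, η x ^ 6 * gd v v x with hZd
  have hX : 0 ≤ X := integral_nonneg fun x => by positivity
  have hY : 0 ≤ Y := integral_nonneg fun x => mul_nonneg (by positivity) (gd_self_nonneg x)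
  have hZ : 0 ≤ Z := integral_nonneg fun x => mul_nonneg (by positivity) (gd_self_nonneg x)
  -- identities
  have i1 : Y = ∫ x, (-(η x ^ 2 * (u x * v x)) - 2 * (η x * (u x * gd η u x))) := by
    have h := green (ckm 1 u hu).smo hu (ckm 1 u hu).cpt
    have e : ∀ x, gd (fun y => η y ^ (1 + 1) * u y) u x = η x ^ 2 * gd u u x + 2 * (η x * (u x * gd η u x)) := by
      intro x
      rw [gd_mul_left (hη.smo.pow _) hu, gd_pow_left hη.smo]; simp; ring
    simp only [e] at h
    have j1 : Integrable (fun x => η x ^ 2 * (u x * v x)) := (ckm 1 _ (hu.mul hv)).integrable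
    have j2 : Integrable (fun x => 2 * (η x * (u x * gd η u x))) := by
      have := (ckm 0 _ (hu.mul (hη.smo.gd hu))).integrable
      simp only [zero_add, pow_one] at this
      exact this.const_mul 2
    rw [integral_add iY j2] at h
    have j1' : Integrable (fun x => -(η x ^ 2 * (u x * v x))) := j1.neg
    rw [integral_sub j1' j2, integral_neg]
    have : ∫ x, η x ^ (1 + 1) * u x * lap u x = ∫ x, η x ^ 2 * (u x * v x) := by
      simp only [mul_assoc, hvd]
    rw [this] at h
    linarith
  have i2 : X = ∫ x, (-(η x ^ 4 * gd v u x) - 4 * (η x ^ 3 * (v x * gd η u x))) := by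
    have h := green (ckm 3 v hv).smo hu (ckm 3 v hv).cpt
    have e : ∀ x, gd (fun y => η y ^ (3 + 1) * v y) u x = η x ^ 4 * gd v u x + 4 * (η x ^ 3 * (v x * gd η u x)) := by
      intro x
      rw [gd_mul_left (hη.smo.pow _) hv, gd_pow_left hη.smo]; simp; ring
    simp only [e] at h
    have j1 : Integrable (fun x => η x ^ 4 * gd v u x) := (ckm 3 _ (hv.gd hu)).integrable
    have j2 : Integrable (fun x => 4 * (η x ^ 3 * (v x * gd η u x))) :=
      (ckm 2 _ (hv.mul (hη.smo.gd hu))).integrable.const_mul 4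
    rw [integral_add j1 j2] at h
    have j1' : Integrable (fun x => -(η x ^ 4 * gd v u x)) := j1.neg
    rw [integral_sub j1' j2, integral_neg]
    have : ∫ x, η x ^ (3 + 1) * v x * lap u x = X := by
      simp only [hXd, mul_assoc, hvd, sq]
    rw [this] at h
    linarith
  have i3 : Z = ∫ x, (-(η x ^ 6 * (v x * lap v x)) - 6 * (η x ^ 5 * (v x * gd η v x))) := by
    have h := green (ckm 5 v hv).smo hv (ckm 5 v hv).cpt
    have e : ∀ x, gd (fun y => η y ^ (5 + 1) * v y) v x = η x ^ 6 * gd v v x + 6 * (η x ^ 5 * (v x * gd η v x)) := by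
      intro x
      rw [gd_mul_left (hη.smo.pow _) hv, gd_pow_left hη.smo]; simp; ring
    simp only [e] at h
    have j1 : Integrable (fun x => η x ^ 6 * (v x * lap v x)) := (ckm 5 _ (hv.mul hv.lap)).integrable
    have j2 : Integrable (fun x => 6 * (η x ^ 5 * (v x * gd η v x))) :=
      (ckm 4 _ (hv.mul (hη.smo.gd hv))).integrable.const_mul 6
    rw [integral_add iZ j2] at h
    have j1' : Integrable (fun x => -(η x ^ 6 * (v x * lap v x))) := j1.neg
    rw [integral_sub j1' j2, integral_neg]
    have : ∫ x, η x ^ (5 + 1) * v x * lap v x = ∫ x, η x ^ 6 * (v x * lap v x) := by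
      simp only [mul_assoc]
    rw [this] at h
    linarith
  have g0 : 0 < g := by linarith
  -- bounds
  have h1 : Y ≤ 1 / 2 * Y + 1 / (720 * g) * X + 182 * g * V := by
    have : Y ≤ ∫ x, (1 / 2 * (η x ^ 2 * gd u u x) + 1 / (720 * g) * (η x ^ 4 * v x ^ 2) + 182 * g * D x) := by
      rw [i1]
      refine integral_mono ?_ (((iY.const_mul _).add (iX.const_mul _)).add (iD.const_mul _)) fun x => ?_
      · have j1 : Integrable (fun x => η x ^ 2 * (u x * v x)) := (ckm 1 _ (hu.mul hv)).integrable
        have j2 : Integrable (fun x => 2 * (η x * (u x * gd η u x))) := by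
          have := (ckm 0 _ (hu.mul (hη.smo.gd hu))).integrable
          simp only [zero_add, pow_one] at this
          exact this.const_mul 2
        exact j1.neg.sub j2
      · dsimp only
        have P0 := gd_self_nonneg (f := u) x
        have G0 := gd_self_nonneg (f := η) x
        by_cases hx : ‖x‖ < ρ
        · have s2 := gd_sq_le (f := η) (g := u) x
          have G1 := hη.gdb x
          have d1 := Din x hx
          have a1 : -(2 * (η x * (u x * gd η u x))) ≤ 1 / 2 * (η x ^ 2 * gd u u x) + 2 * (u x ^ 2 * gd η η x) := by
            refine amgm_neg ?_ (by positivity) (by positivity)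
            calc _ = η x ^ 2 * u x ^ 2 * (gd η u x) ^ 2 := by ring
              _ ≤ η x ^ 2 * u x ^ 2 * (gd η η x * gd u u x) := by gcongr
              _ = _ := by ring
          have a2 : -(2 * (η x ^ 2 * (u x * v x) / 2)) ≤ 1 / (720 * g) * (η x ^ 4 * v x ^ 2) + 180 * g * u x ^ 2 := by
            refine amgm_neg (le_of_eq ?_) (by positivity) (by positivity)
            field_simp; ring
          have a3 : u x ^ 2 * gd η η x ≤ D x * g := mul_le_mul d1 G1 G0 (Dnn x)
          have a4 : g * u x ^ 2 ≤ g * D x := mul_le_mul_of_nonneg_left d1 g0.le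
          linarith
        · rw [off x hx]
          have := Dnn x
          simp only [ne_eq, OfNat.ofNat_ne_zero, not_false_eq_true, zero_pow, zero_mul, mul_zero]
          have : 0 ≤ 182 * g * D x := by positivity
          linarith
    rw [int_lin3 iY iX iD, eD] at this
    exact this
  have h2 : X ≤ 1 / (148 * g) * Z + 37 * g * Y + 1 / 2 * X + 8 * g * Y := by
    have : X ≤ ∫ x, (1 / (148 * g) * (η x ^ 6 * gd v v x) + 37 * g * (η x ^ 2 * gd u u x)
        + 1 / 2 * (η x ^ 4 * v x ^ 2) + 8 * g * (η x ^ 2 * gd u u x)) := by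
      rw [i2]
      refine integral_mono ?_ ((((iZ.const_mul _).add (iY.const_mul _)).add (iX.const_mul _)).add (iY.const_mul _)) fun x => ?_
      · have j1 : Integrable (fun x => η x ^ 4 * gd v u x) := (ckm 3 _ (hv.gd hu)).integrable
        have j2 : Integrable (fun x => 4 * (η x ^ 3 * (v x * gd η u x))) :=
          (ckm 2 _ (hv.mul (hη.smo.gd hu))).integrable.const_mul 4
        exact j1.neg.sub j2
      · dsimp only
        have P0 := gd_self_nonneg (f := u) x
        have Q0 := gd_self_nonneg (f := v) x
        have G0 := gd_self_nonneg (f := η) x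
        have s2 := gd_sq_le (f := η) (g := u) x
        have m2 := gd_sq_le (f := v) (g := u) x
        have G1 : gd η η x ≤ g := hη.gdb x
        have a1 : -(2 * (η x ^ 4 * gd v u x / 2)) ≤ 1 / (148 * g) * (η x ^ 6 * gd v v x) + 37 * g * (η x ^ 2 * gd u u x) := by
          refine amgm_neg ?_ (by positivity) (by positivity)
          calc _ = η x ^ 8 / 4 * (gd v u x) ^ 2 := by ring
            _ ≤ η x ^ 8 / 4 * (gd v v x * gd u u x) := by gcongr
            _ = _ := by field_simp; ring
        have a2 : -(2 * (2 * (η x ^ 3 * (v x * gd η u x)))) ≤ 1 / 2 * (η x ^ 4 * v x ^ 2) + 8 * (gd η η x * (η x ^ 2 * gd u u x)) := by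
          refine amgm_neg ?_ (by positivity) (by positivity)
          calc _ = 4 * η x ^ 6 * v x ^ 2 * (gd η u x) ^ 2 := by ring
            _ ≤ 4 * η x ^ 6 * v x ^ 2 * (gd η η x * gd u u x) := by gcongr
            _ = _ := by ring
        have a3 : gd η η x * (η x ^ 2 * gd u u x) ≤ g * (η x ^ 2 * gd u u x) :=
          mul_le_mul_of_nonneg_right G1 (by positivity)
        linarith
    rw [int_lin4 iZ iY iX iY] at this
    exact this
  have h3 : Z ≤ 1 / 2 * X + 1 / 2 * V + 1 / 2 * Z + 18 * g * X := by
    have : Z ≤ ∫ x, (1 / 2 * (η x ^ 4 * v x ^ 2) + 1 / 2 * D x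
        + 1 / 2 * (η x ^ 6 * gd v v x) + 18 * g * (η x ^ 4 * v x ^ 2)) := by
      rw [i3]
      refine integral_mono ?_ ((((iX.const_mul _).add (iD.const_mul _)).add (iZ.const_mul _)).add (iX.const_mul _)) fun x => ?_
      · have j1 : Integrable (fun x => η x ^ 6 * (v x * lap v x)) := (ckm 5 _ (hv.mul hv.lap)).integrable
        have j2 : Integrable (fun x => 6 * (η x ^ 5 * (v x * gd η v x))) :=
          (ckm 4 _ (hv.mul (hη.smo.gd hv))).integrable.const_mul 6
        exact j1.neg.sub j2
      · dsimp only
        have Q0 := gd_self_nonneg (f := v) x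
        have G0 := gd_self_nonneg (f := η) x
        by_cases hx : ‖x‖ < ρ
        · have t2 := gd_sq_le (f := η) (g := v) x
          have G1 : gd η η x ≤ g := hη.gdb x
          have d1 := Din x hx
          have l1 := hL x hx
          have a1 : -(2 * (η x ^ 6 * (v x * lap v x) / 2)) ≤ 1 / 2 * (η x ^ 4 * v x ^ 2) + 1 / 2 * u x ^ 2 := by
            refine amgm_neg ?_ (by positivity) (by positivity)
            have l2 : (lap v x) ^ 2 ≤ u x ^ 2 := sq_le_sq.2 l1
            have l3 : η x ^ 8 ≤ 1 := pow_le_one₀ (hη.nn x) (hη.le1 x)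
            calc _ = η x ^ 8 * (lap v x) ^ 2 * (η x ^ 4 * v x ^ 2 / 4) := by ring
              _ ≤ 1 * u x ^ 2 * (η x ^ 4 * v x ^ 2 / 4) := by gcongr
              _ = _ := by ring
          have a2 : -(2 * (3 * (η x ^ 5 * (v x * gd η v x)))) ≤ 1 / 2 * (η x ^ 6 * gd v v x) + 18 * (gd η η x * (η x ^ 4 * v x ^ 2)) := by
            refine amgm_neg ?_ (by positivity) (by positivity)
            calc _ = 9 * η x ^ 10 * v x ^ 2 * (gd η v x) ^ 2 := by ring
              _ ≤ 9 * η x ^ 10 * v x ^ 2 * (gd η η x * gd v v x) := by gcongr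
              _ = _ := by ring
          have a3 : gd η η x * (η x ^ 4 * v x ^ 2) ≤ g * (η x ^ 4 * v x ^ 2) :=
            mul_le_mul_of_nonneg_right G1 (by positivity)
          linarith
        · rw [off x hx]
          have := Dnn x
          simp only [ne_eq, OfNat.ofNat_ne_zero, not_false_eq_true, zero_pow, zero_mul, mul_zero]
          linarith
    rw [int_lin4 iX iD iZ iX, eD] at this
    exact this
  obtain ⟨r1, r2, r3⟩ := cacc_alg hg1 hX hY hZ hV0 h1 h2 h3
  have q1 : ρ ^ 2 * Y ≤ 730 * C ^ 3 * V := by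
    calc ρ ^ 2 * Y ≤ ρ ^ 2 * (730 * g * V) := by gcongr
      _ = 730 * C * V := by rw [hg]; field_simp
      _ ≤ 730 * C ^ 3 * V := by
        have : C ≤ C ^ 3 := le_self_pow₀ hC (by norm_num)
        gcongr
  have q2 : ρ ^ 4 * X ≤ 132000 * C ^ 3 * V := by
    calc ρ ^ 4 * X ≤ ρ ^ 4 * (132000 * g ^ 2 * V) := by gcongr
      _ = 132000 * C ^ 2 * V := by rw [hg]; field_simp
      _ ≤ 132000 * C ^ 3 * V := by
        have : C ^ 2 ≤ C ^ 3 := pow_le_pow_right₀ hC (by norm_num)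
        gcongr
  have q3 : ρ ^ 6 * Z ≤ 5000000 * C ^ 3 * V := by
    calc ρ ^ 6 * Z ≤ ρ ^ 6 * (5000000 * g ^ 3 * V) := by gcongr
      _ = 5000000 * C ^ 3 * V := by rw [hg]; field_simp
  have : 0 ≤ C ^ 3 * V := by positivity
  linarith

section wb
variable {n : ℕ}

lemma pd_one_sub {ψ : EE n → ℝ} (v x : EE n) : pd v (fun y => 1 - ψ y) x = - pd v ψ x := by
  unfold pd; rw [fderiv_const_sub]; simp

lemma gd_one_sub {ψ f : EE n → ℝ} (x : EE n) : gd (fun y => 1 - ψ y) f x = - gd ψ f x := by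
  simp [gd, pd_one_sub]

lemma gd_one_sub_self {ψ : EE n → ℝ} (x : EE n) :
    gd (fun y => 1 - ψ y) (fun y => 1 - ψ y) x = gd ψ ψ x := by
  simp [gd, pd_one_sub]

lemma lap_one_sub {ψ : EE n → ℝ} (h : Smo ψ) (x : EE n) : lap (fun y => 1 - ψ y) x = - lap ψ x := by
  have h' : Smo (fun y => 1 - ψ y) := contDiff_const.sub h
  rw [lap_eq h', lap_eq h, ← Finset.sum_neg_distrib]
  refine Finset.sum_congr rfl fun i _ => ?_
  have : pd (eb i) (fun y => 1 - ψ y) = fun y => - pd (eb i) ψ y := by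
    ext y; exact pd_one_sub _ _
  rw [this]
  simp only [pd]
  rw [fderiv_fun_neg]; simp; rfl

lemma pt_bound {χ u v : EE n → ℝ} {w k r ρ C1 Λ η D : ℝ} {x : EE n} (hρ : 0 < ρ) (hr : 0 ≤ r) (hrρ : r ≤ ρ)
    (hk : 0 ≤ k) (hk2 : k ≤ 2) (hC : 0 ≤ C1) (hw : w ^ 2 ≤ Λ) (hη : η = 1) (hD : u x ^ 2 ≤ D)
    (h1 : gd χ χ x ≤ C1 / ρ ^ 2) (h2 : (lap χ x) ^ 2 ≤ C1 / ρ ^ 4) :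
    (w * (r ^ 4 * (k * (2 * gd χ v x + v x * lap χ x)))) ^ 2
      + 4 * (w * (r ^ 2 * (2 * gd χ u x + u x * lap χ x))) ^ 2
      ≤ 32 * C1 * Λ * (ρ ^ 2 * (η ^ 2 * gd u u x) + ρ ^ 4 * (η ^ 4 * v x ^ 2)
        + ρ ^ 6 * (η ^ 6 * gd v v x) + D) := by
  subst hη
  have key : ∀ f : EE n → ℝ, (2 * gd χ f x + f x * lap χ x) ^ 2 ≤ C1 * (8 * (gd f f x / ρ ^ 2) + 2 * (f x ^ 2 / ρ ^ 4)) := by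
    intro f
    have e1 := gd_sq_le (f := χ) (g := f) x
    have e2 : (gd χ f x) ^ 2 ≤ C1 / ρ ^ 2 * gd f f x :=
      e1.trans (mul_le_mul_of_nonneg_right h1 (gd_self_nonneg x))
    have e3 : f x ^ 2 * (lap χ x) ^ 2 ≤ f x ^ 2 * (C1 / ρ ^ 4) := mul_le_mul_of_nonneg_left h2 (sq_nonneg _)
    calc (2 * gd χ f x + f x * lap χ x) ^ 2 ≤ 8 * (gd χ f x) ^ 2 + 2 * (f x ^ 2 * (lap χ x) ^ 2) := by
          nlinarith [sq_nonneg (2 * gd χ f x - f x * lap χ x)]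
      _ ≤ 8 * (C1 / ρ ^ 2 * gd f f x) + 2 * (f x ^ 2 * (C1 / ρ ^ 4)) := by linarith
      _ = _ := by ring
  have Λ0 : 0 ≤ Λ := (sq_nonneg w).trans hw
  have U0 := gd_self_nonneg (f := u) x
  have V0 := gd_self_nonneg (f := v) x
  have b1 : (w * (r ^ 2 * (2 * gd χ u x + u x * lap χ x))) ^ 2 ≤ Λ * (C1 * (8 * (ρ ^ 2 * gd u u x) + 2 * u x ^ 2)) := by
    calc _ = w ^ 2 * (r ^ 4 * (2 * gd χ u x + u x * lap χ x) ^ 2) := by ring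
      _ ≤ Λ * (ρ ^ 4 * (C1 * (8 * (gd u u x / ρ ^ 2) + 2 * (u x ^ 2 / ρ ^ 4)))) := by
          gcongr; exact key u
      _ = _ := by field_simp
  have b2 : (w * (r ^ 4 * (k * (2 * gd χ v x + v x * lap χ x)))) ^ 2 ≤ Λ * (C1 * (32 * (ρ ^ 6 * gd v v x) + 8 * (ρ ^ 4 * v x ^ 2))) := by
    calc _ = w ^ 2 * (r ^ 8 * (k ^ 2 * (2 * gd χ v x + v x * lap χ x) ^ 2)) := by ring
      _ ≤ Λ * (ρ ^ 8 * (2 ^ 2 * (C1 * (8 * (gd v v x / ρ ^ 2) + 2 * (v x ^ 2 / ρ ^ 4))))) := by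
          gcongr; exact key v
      _ = _ := by field_simp; ring
  have L0 : 0 ≤ Λ * C1 := by positivity
  have m1 : Λ * C1 * u x ^ 2 ≤ Λ * C1 * D := mul_le_mul_of_nonneg_left hD L0
  have m2 : 0 ≤ Λ * C1 * (ρ ^ 4 * v x ^ 2) := by positivity
  have m3 : 0 ≤ Λ * C1 * u x ^ 2 := by positivity
  nlinarith

lemma pt_zero {χ u v : EE n → ℝ} {w k r c : ℝ} {x : EE n} (h : χ =ᶠ[nhds x] fun _ => c) :
    (w * (r ^ 4 * (k * (2 * gd χ v x + v x * lap χ x)))) ^ 2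
      + 4 * (w * (r ^ 2 * (2 * gd χ u x + u x * lap χ x))) ^ 2 = 0 := by
  rw [gd_congr_left h, gd_congr_left h, lap_congr h, gd_const', gd_const', lap_const']
  ring

lemma wt_sq_le {a b τ σ R : ℝ} {x : EE n} (ha : 0 < a) (hx : x ∈ Ann n a b) (hR : 0 < R) (hRx : R ≤ ‖x‖)
    (hτ : 0 ≤ τ) (hσ : 0 ≤ σ) :
    (wt n a b τ σ x) ^ 2 ≤ (R ^ (-(τ + n / 2)) * 2 ^ σ) ^ 2 := by
  refine pow_le_pow_left₀ wt_pos.le ?_ 2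
  rw [wt_eq ha hx]
  have h1 : ‖x‖ ^ (-(τ + (n : ℝ) / 2)) ≤ R ^ (-(τ + (n : ℝ) / 2)) :=
    Real.rpow_le_rpow_of_nonpos hR hRx (by have : (0 : ℝ) ≤ n := by positivity
                                           linarith)
  have h2 : (kk n a b x) ^ (-σ) ≤ (1 / 2 : ℝ) ^ (-σ) :=
    Real.rpow_le_rpow_of_nonpos (by norm_num) (kk_ge ha hx) (by linarith)
  have h3 : (1 / 2 : ℝ) ^ (-σ) = 2 ^ σ := by
    rw [one_div, Real.inv_rpow (by norm_num), Real.rpow_neg (by norm_num), inv_inv]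
  rw [h3] at h2
  have := kk_pos ha hx
  gcongr

lemma vol_ball (y : EE n) {ρ : ℝ} (hρ : 0 < ρ) :
    volume.real (ball y ρ) = ρ ^ n * volume.real (ball (0 : EE n) 1) := by
  rw [measureReal_def, Measure.addHaar_ball_of_pos _ _ hρ, ENNReal.toReal_mul, measureReal_def,
    ENNReal.toReal_ofReal (by positivity)]
  simp

set_option maxHeartbeats 1600000 in
theorem wbound (hn : 2 ≤ n) {δ : ℝ} (hδ : 0 < δ) (hδ8 : δ ≤ 1 / 8) :
    ∃ Cd : ℝ, 1 ≤ Cd ∧ ∀ (a b τ σ Ma Mb : ℝ) (u : EE n → ℝ), 0 < a → 4 * a ≤ b → b ≤ 1 → 6 ≤ τ → 3 ≤ σ →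
      σ ≤ τ / 2 → Smo u → (∀ x, ‖x‖ < b → |lap (lap u) x| ≤ |u x|) →
      (∀ x, ‖x‖ < a → |u x| ≤ Ma) → (∀ x, ‖x‖ < b → |u x| ≤ Mb) →
      ∃ χ : EE n → ℝ, (∀ x, (1 - δ) * a ≤ ‖x‖ → ‖x‖ ≤ (1 - 2 * δ) * b → χ x = 1) ∧
        CS (Ann n (a / 2) b) χ ∧
        ∫ x, (wt n (a / 2) b τ σ x * (kk n (a / 2) b x)⁻¹ * (χ x * u x)) ^ 2 ≤
          Cd * 4 ^ σ * (((1 - 2 * δ) * a) ^ (-2 * τ) * Ma ^ 2 + ((1 - 2 * δ) * b) ^ (-2 * τ) * Mb ^ 2) := by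
  obtain ⟨C1, hC1, hψ⟩ := exists_cut n (by linarith : 0 < 1 - 2 * δ) (by linarith : 1 - 2 * δ < 1 - δ)
  obtain ⟨C2, hC2, hη⟩ := exists_cut n (by linarith : 0 < 1 - δ) (by linarith : 1 - δ < 1)
  set vol := volume.real (ball (0 : EE n) 1) with hvol
  set Q : ℝ := 32 * C1 * ((10000000 * C2 ^ 3 + 1) * vol) * ((1 - 2 * δ) ^ n)⁻¹ with hQ
  refine ⟨1 + Q, ?_, ?_⟩
  · have h0 : 0 < 1 - 2 * δ := by linarith
    have : 0 ≤ Q := by rw [hQ]; positivity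
    linarith
  intro a b τ σ Ma Mb u ha hab hb1 hτ hσ hστ hu hL hMa hMb
  have hd : 0 < 1 - 2 * δ := by linarith
  have hb : 0 < b := by linarith
  have ha2 : 0 < a / 2 := by linarith
  obtain ⟨ψa, hψa⟩ := hψ a ha
  obtain ⟨ψb, hψb⟩ := hψ b hb
  obtain ⟨ηa, hηa⟩ := hη a ha
  obtain ⟨ηb, hηb⟩ := hη b hb
  set χ : EE n → ℝ := fun x => (1 - ψa x) * ψb x with hχ
  have sχ : Smo χ := (contDiff_const.sub hψa.smo).mul hψb.smo
  have tχ : tsupport χ ⊆ {x | (1 - 2 * δ) * a ≤ ‖x‖ ∧ ‖x‖ ≤ (1 - δ) * b} := by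
    refine closure_minimal ?_ ((isClosed_le continuous_const continuous_norm).inter
      (isClosed_le continuous_norm continuous_const))
    intro x hx
    constructor
    · by_contra hn
      push Not at hn
      exact hx (by simp [hχ, hψa.one x hn.le])
    · by_contra hn
      push Not at hn
      exact hx (by simp [hχ, hψb.zero x hn.le])
  have cχ : CS (Ann n (a / 2) b) χ := by
    refine ⟨sχ, ?_, fun x hx => ?_⟩
    · refine (isCompact_closedBall (0 : EE n) ((1 - δ) * b)).of_isClosed_subset isClosed_closure
        fun x hx => ?_
      rw [mem_closedBall_zero_iff]; exact (tχ hx).2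
    · have := tχ hx
      exact ⟨by nlinarith [this.1], by nlinarith [this.2]⟩
  refine ⟨χ, ?_, cχ, ?_⟩
  · intro x h1 h2
    simp only [hχ]
    rw [hψa.zero x h1, hψb.one x h2]; norm_num
  have dc := double_carl hn ha2 hb1 hτ hσ hστ cχ hu (fun x hx => hL x hx.2)
  set w := wt n (a / 2) b τ σ with hw
  set k := kk n (a / 2) b with hk
  set v := lap u with hv
  have sv : Smo v := hu.lap
  have ca := cacc hηa le_rfl hC2 ha (by linarith) hu (fun x hx => hL x (by linarith)) hMa
  have cb := cacc hηb le_rfl hC2 hb hb1 hu hL hMb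
  set Da : EE n → ℝ := (ball (0 : EE n) a).indicator (fun _ => Ma ^ 2) with hDa
  set Db : EE n → ℝ := (ball (0 : EE n) b).indicator (fun _ => Mb ^ 2) with hDb
  set Λ : ℝ → ℝ := fun ρ => (((1 - 2 * δ) * ρ) ^ (-(τ + (n : ℝ) / 2)) * 2 ^ σ) ^ 2 with hΛ
  have iD : ∀ (ρ M : ℝ), Integrable ((ball (0 : EE n) ρ).indicator (fun _ => M ^ 2)) := by
    intro ρ M
    rw [integrable_indicator_iff measurableSet_ball]
    exact integrableOn_const (by simp [measure_ball_lt_top.ne])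
  have eD : ∀ (ρ M : ℝ), ∫ x, (ball (0 : EE n) ρ).indicator (fun _ => M ^ 2) x = M ^ 2 * volume.real (ball (0 : EE n) ρ) := by
    intro ρ M
    rw [integral_indicator measurableSet_ball]; simp [mul_comm]
  have Dnn : ∀ (ρ M : ℝ) (x : EE n), 0 ≤ (ball (0 : EE n) ρ).indicator (fun _ => M ^ 2) x :=
    fun ρ M x => indicator_nonneg (fun _ _ => sq_nonneg _) x
  -- the majorant
  have Hint : ∀ (ρ M : ℝ) (η : EE n → ℝ), Cut (1 - δ) 1 C2 ρ η → 
      Integrable (fun x => ρ ^ 2 * (η x ^ 2 * gd u u x) + ρ ^ 4 * (η x ^ 4 * v x ^ 2)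
        + ρ ^ 6 * (η x ^ 6 * gd v v x) + (ball (0 : EE n) ρ).indicator (fun _ => M ^ 2) x) ∧ 
      ∫ x, (ρ ^ 2 * (η x ^ 2 * gd u u x) + ρ ^ 4 * (η x ^ 4 * v x ^ 2)
        + ρ ^ 6 * (η x ^ 6 * gd v v x) + (ball (0 : EE n) ρ).indicator (fun _ => M ^ 2) x)
      = ρ ^ 2 * (∫ x, η x ^ 2 * gd u u x) + ρ ^ 4 * (∫ x, η x ^ 4 * v x ^ 2)
      + ρ ^ 6 * (∫ x, η x ^ 6 * gd v v x) + M ^ 2 * volume.real (ball (0 : EE n) ρ) := by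
    intro ρ M η hη
    have cη : CS univ η := ⟨hη.smo, hη.cpt, subset_univ _⟩
    have ckm : ∀ (k : ℕ) (f : EE n → ℝ), Smo f → Integrable (fun x => η x ^ (k + 1) * f x) := by
      intro k f hf
      have := (CS.mul ((hη.smo.pow k).mul hf) cη).integrable
      refine this.congr (Filter.Eventually.of_forall fun x => ?_)
      simp only [Pi.mul_apply]; ring
    have iY : Integrable (fun x => η x ^ 2 * gd u u x) := ckm 1 _ (hu.gd hu)
    have iX : Integrable (fun x => η x ^ 4 * v x ^ 2) := ckm 3 _ (sv.pow 2)
    have iZ : Integrable (fun x => η x ^ 6 * gd v v x) := ckm 5 _ (sv.gd sv)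
    have i3 : Integrable (fun x => ρ ^ 2 * (η x ^ 2 * gd u u x) + ρ ^ 4 * (η x ^ 4 * v x ^ 2)
        + ρ ^ 6 * (η x ^ 6 * gd v v x)) := ((iY.const_mul _).add (iX.const_mul _)).add (iZ.const_mul _)
    refine ⟨i3.add (iD ρ M), ?_⟩
    rw [integral_add i3 (iD ρ M), int_lin3 iY iX iZ, eD]
  obtain ⟨Ia, Ea⟩ := Hint a Ma ηa hηa
  obtain ⟨Ib, Eb⟩ := Hint b Mb ηb hηb
  set Ha : EE n → ℝ := fun x => a ^ 2 * (ηa x ^ 2 * gd u u x) + a ^ 4 * (ηa x ^ 4 * v x ^ 2)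
        + a ^ 6 * (ηa x ^ 6 * gd v v x) + Da x with hHa
  set Hb : EE n → ℝ := fun x => b ^ 2 * (ηb x ^ 2 * gd u u x) + b ^ 4 * (ηb x ^ 4 * v x ^ 2)
        + b ^ 6 * (ηb x ^ 6 * gd v v x) + Db x with hHb
  have Ha0 : ∀ x, 0 ≤ Ha x := fun x => by
    have := Dnn a Ma x; have := gd_self_nonneg (f := u) x; have := gd_self_nonneg (f := v) x
    simp only [hHa]; positivity
  have Hb0 : ∀ x, 0 ≤ Hb x := fun x => by
    have := Dnn b Mb x; have := gd_self_nonneg (f := u) x; have := gd_self_nonneg (f := v) x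
    simp only [hHb]; positivity
  have C10 : 0 ≤ C1 := by linarith
  have Λ0 : ∀ ρ, 0 ≤ Λ ρ := fun ρ => sq_nonneg _
  have pt : ∀ x, (w x * (‖x‖ ^ 4 * (k x * (2 * gd χ v x + v x * lap χ x)))) ^ 2
      + 4 * (w x * (‖x‖ ^ 2 * (2 * gd χ u x + u x * lap χ x))) ^ 2
      ≤ 32 * C1 * Λ a * Ha x + 32 * C1 * Λ b * Hb x := by
    intro x
    have pa : 0 ≤ 32 * C1 * Λ a * Ha x := by have := Λ0 a; have := Ha0 x; positivity
    have pb : 0 ≤ 32 * C1 * Λ b * Hb x := by have := Λ0 b; have := Hb0 x; positivity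
    have hx0 := norm_nonneg x
    by_cases c1 : ‖x‖ < (1 - 2 * δ) * b
    · have evb := hψb.ev_one c1
      have evχ : χ =ᶠ[nhds x] fun y => 1 - ψa y := by
        filter_upwards [evb] with y hy
        simp only [hχ, hy, mul_one]
      by_cases c2 : ‖x‖ < (1 - 2 * δ) * a
      · have : χ =ᶠ[nhds x] fun _ => 0 := by
          filter_upwards [evχ, hψa.ev_one c2] with y h1 h2
          rw [h1, h2]; norm_num
        rw [pt_zero this]; linarith
      push Not at c2
      by_cases c3 : (1 - δ) * a < ‖x‖
      · have : χ =ᶠ[nhds x] fun _ => 1 := by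
          filter_upwards [evχ, hψa.ev_zero c3] with y h1 h2
          rw [h1, h2]; norm_num
        rw [pt_zero this]; linarith
      push Not at c3
      have hxa : ‖x‖ < a := by nlinarith
      have hxA : x ∈ Ann n (a / 2) b := ⟨by nlinarith, by linarith⟩
      have := pt_bound (χ := χ) (u := u) (v := v) (w := w x) (k := k x) (r := ‖x‖) (ρ := a) (C1 := C1)
        (Λ := Λ a) (η := ηa x) (D := Da x) (x := x) ha hx0 hxa.le (kk_pos ha2 hxA).le
        ((kk_le_l' ha2 hxA).trans (by rw [div_le_iff₀ ha2]; linarith)) C10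
        (wt_sq_le ha2 hxA (by positivity) c2 (by linarith) (by linarith))
        (hηa.one x c3)
        (by rw [hDa, indicator_of_mem (by simpa using hxa), ← sq_abs]
            exact pow_le_pow_left₀ (abs_nonneg _) (hMa x hxa) 2)
        (by rw [gd_congr evχ, gd_one_sub_self]; exact hψa.gdb x)
        (by rw [lap_congr evχ, lap_one_sub hψa.smo, neg_sq]; exact hψa.lapb x)
      linarith
    · push Not at c1
      have c2 : (1 - δ) * a < ‖x‖ := by nlinarith
      have evχ : χ =ᶠ[nhds x] ψb := by
        filter_upwards [hψa.ev_zero c2] with y h1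
        simp only [hχ, h1]; ring
      by_cases c3 : (1 - δ) * b < ‖x‖
      · rw [pt_zero (evχ.trans (hψb.ev_zero c3))]; linarith
      push Not at c3
      have hxb : ‖x‖ < b := by nlinarith
      have hxA : x ∈ Ann n (a / 2) b := ⟨by nlinarith, by linarith⟩
      have hxp : 0 < ‖x‖ := by nlinarith
      have := pt_bound (χ := χ) (u := u) (v := v) (w := w x) (k := k x) (r := ‖x‖) (ρ := b) (C1 := C1)
        (Λ := Λ b) (η := ηb x) (D := Db x) (x := x) hb hx0 hxb.le (kk_pos ha2 hxA).le
        ((kk_le_m' ha2 hxA).trans (by rw [div_le_iff₀ hxp]; nlinarith)) C10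
        (wt_sq_le ha2 hxA (by positivity) c1 (by linarith) (by linarith))
        (hηb.one x c3)
        (by rw [hDb, indicator_of_mem (by simpa using hxb), ← sq_abs]
            exact pow_le_pow_left₀ (abs_nonneg _) (hMb x hxb) 2)
        (by rw [gd_congr evχ]; exact hψb.gdb x)
        (by rw [lap_congr evχ]; exact hψb.lapb x)
      linarith
  have hO := isOpen_Ann n (a / 2) b
  have sw : SO (Ann n (a / 2) b) w := wt_so ha2
  have sk : SO (Ann n (a / 2) b) k := kk_so ha2
  have sr : Smo (fun x : EE n => ‖x‖ ^ 2) := contDiff_norm_sq ℝ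
  have sr4 : Smo (fun x : EE n => ‖x‖ ^ 4) := by
    have : (fun x : EE n => ‖x‖ ^ 4) = fun x => ‖x‖ ^ 2 * ‖x‖ ^ 2 := by ext x; ring
    rw [this]; exact sr.mul sr
  have cc1 : CS (Ann n (a / 2) b) (fun x => 2 * gd χ u x + u x * lap χ x) :=
    ((cχ.gd hu).cmul 2).add (CS.mul hu cχ.lap)
  have cc2 : CS (Ann n (a / 2) b) (fun x => 2 * gd χ v x + v x * lap χ x) :=
    ((cχ.gd sv).cmul 2).add (CS.mul sv cχ.lap)
  have iJ2 : Integrable (fun x => (w x * (‖x‖ ^ 4 * (k x * (2 * gd χ v x + v x * lap χ x)))) ^ 2) :=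
    (CS.so_mul hO sw (CS.mul sr4 (CS.so_mul hO sk cc2))).sq_int
  have iJ1 : Integrable (fun x => (w x * (‖x‖ ^ 2 * (2 * gd χ u x + u x * lap χ x))) ^ 2) :=
    (CS.so_mul hO sw (CS.mul sr cc1)).sq_int
  have mono := integral_mono (iJ2.add (iJ1.const_mul 4))
    ((Ia.const_mul (32 * C1 * Λ a)).add (Ib.const_mul (32 * C1 * Λ b))) pt
  simp only [Pi.add_apply] at mono
  rw [integral_add iJ2 (iJ1.const_mul 4), integral_add (Ia.const_mul _) (Ib.const_mul _), 
    integral_const_mul, integral_const_mul, integral_const_mul, Ea, Eb] at mono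
  have fin : ∀ ρ M : ℝ, 0 < ρ → 32 * C1 * Λ ρ * ((10000000 * C2 ^ 3 + 1) * (M ^ 2 * volume.real (ball (0 : EE n) ρ)))
      = Q * 4 ^ σ * (((1 - 2 * δ) * ρ) ^ (-2 * τ) * M ^ 2) := by
    intro ρ M hρ
    have hp : 0 < (1 - 2 * δ) * ρ := by positivity
    have e1 : Λ ρ = ((1 - 2 * δ) * ρ) ^ (-2 * τ) * (((1 - 2 * δ) * ρ) ^ n)⁻¹ * 4 ^ σ := by
      simp only [hΛ]
      rw [mul_pow, ← Real.rpow_natCast (((1 - 2 * δ) * ρ) ^ (-(τ + (n : ℝ) / 2))), ← Real.rpow_mul hp.le,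
        ← Real.rpow_natCast ((2 : ℝ) ^ σ), ← Real.rpow_mul (by norm_num), ← Real.rpow_natCast _ n, ← Real.rpow_neg hp.le,
        ← Real.rpow_add hp]
      congr 1
      · congr 1
        push_cast; ring
      · rw [mul_comm σ, Real.rpow_mul (by norm_num)]; norm_num
    rw [e1, vol_ball _ hρ, hQ, mul_pow, ← hvol]
    field_simp
  refine dc.trans (mono.trans ?_)
  have A1 : 32 * C1 * Λ a * (a ^ 2 * (∫ x, ηa x ^ 2 * gd u u x) + a ^ 4 * (∫ x, ηa x ^ 4 * v x ^ 2)
      + a ^ 6 * (∫ x, ηa x ^ 6 * gd v v x) + Ma ^ 2 * volume.real (ball (0 : EE n) a))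
      ≤ Q * 4 ^ σ * (((1 - 2 * δ) * a) ^ (-2 * τ) * Ma ^ 2) := by
    rw [← fin a Ma ha]
    refine mul_le_mul_of_nonneg_left (by linarith) (by have := Λ0 a; positivity)
  have A2 : 32 * C1 * Λ b * (b ^ 2 * (∫ x, ηb x ^ 2 * gd u u x) + b ^ 4 * (∫ x, ηb x ^ 4 * v x ^ 2)
      + b ^ 6 * (∫ x, ηb x ^ 6 * gd v v x) + Mb ^ 2 * volume.real (ball (0 : EE n) b))
      ≤ Q * 4 ^ σ * (((1 - 2 * δ) * b) ^ (-2 * τ) * Mb ^ 2) := by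
    rw [← fin b Mb hb]
    refine mul_le_mul_of_nonneg_left (by linarith) (by have := Λ0 b; positivity)
  have pos : 0 ≤ 4 ^ σ * (((1 - 2 * δ) * a) ^ (-2 * τ) * Ma ^ 2 + ((1 - 2 * δ) * b) ^ (-2 * τ) * Mb ^ 2) := by
    positivity
  linarith
end wb

section supest
variable {n : ℕ}

lemma ker_next {h : ℝ → ℝ} (hs : ContDiff ℝ (⊤ : ℕ∞) h) (hz : ∀ s, 1 ≤ s → h s = 0) :
    ∃ H : ℝ → ℝ, ContDiff ℝ (⊤ : ℕ∞) H ∧ (∀ s, 1 ≤ s → H s = 0) ∧ ∀ s, HasDerivAt H (-(h s) / 2) s := by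
  refine ⟨fun s => -(∫ t in (1 : ℝ)..s, h t) / 2, ?_, ?_, ?_⟩
  rotate_left
  · intro s hs1
    have : ∫ t in (1 : ℝ)..s, h t = 0 := by
      rw [intervalIntegral.integral_of_le hs1]
      exact setIntegral_eq_zero_of_forall_eq_zero fun t ht => hz t ht.1.le
    simp [this]
  · intro s
    have := intervalIntegral.integral_hasDerivAt_right (hs.continuous.intervalIntegrable 1 s)
      (hs.continuous.stronglyMeasurableAtFilter _ _) hs.continuous.continuousAt
    exact (this.neg).div_const 2
  · have hd : ∀ s, HasDerivAt (fun s => -(∫ t in (1 : ℝ)..s, h t) / 2) (-(h s) / 2) s := by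
      intro s
      have := intervalIntegral.integral_hasDerivAt_right (hs.continuous.intervalIntegrable 1 s)
        (hs.continuous.stronglyMeasurableAtFilter _ _) hs.continuous.continuousAt
      exact (this.neg).div_const 2
    rw [contDiff_infty_iff_deriv]
    refine ⟨fun s => (hd s).differentiableAt, ?_⟩
    rw [show deriv (fun s => -(∫ t in (1 : ℝ)..s, h t) / 2) = fun s => -(h s) / 2 from
      funext fun s => (hd s).deriv]
    exact hs.neg.div_const 2

lemma ker_cs {h : ℝ → ℝ} (hs : ContDiff ℝ (⊤ : ℕ∞) h) (hz : ∀ s, 1 ≤ s → h s = 0) :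
    CS univ (fun z : EE n => h (‖z‖ ^ 2)) := by
  refine ⟨hs.comp (contDiff_norm_sq ℝ), ?_, subset_univ _⟩
  refine HasCompactSupport.of_support_subset_isCompact (isCompact_closedBall (0 : EE n) 1) fun z hz' => ?_
  rw [mem_closedBall_zero_iff]
  by_contra hc
  push Not at hc
  exact hz' (hz _ (by nlinarith))

lemma ker_deriv {f η : EE n → ℝ} (hf : Smo f) (hη : CS univ η) (σ : ℝ) :
    HasDerivAt (fun σ : ℝ => ∫ z, f (σ • z) * η z) (∫ z, fderiv ℝ f (σ • z) z * η z) σ := by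
  have hF' : Continuous (fun p : ℝ × EE n => fderiv ℝ f (p.1 • p.2) p.2) := by
    have := hf.continuous_fderiv (by simp)
    fun_prop
  obtain ⟨B, hB⟩ := ((isCompact_Icc (a := σ - 1) (b := σ + 1)).prod hη.cpt).exists_bound_of_continuousOn
    hF'.continuousOn
  have cη := hη.smo.continuous
  have cf := hf.continuous
  refine (hasDerivAt_integral_of_dominated_loc_of_deriv_le (s := Icc (σ - 1) (σ + 1))
    (F := fun (σ : ℝ) z => f (σ • z) * η z)
    (F' := fun σ z => fderiv ℝ f (σ • z) z * η z) (bound := fun z => B * |η z|) (Icc_mem_nhds (by linarith) (by linarith)) ?_ ?_ ?_ ?_ ?_ ?_).2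
  · refine Filter.Eventually.of_forall fun s => Continuous.aestronglyMeasurable (by fun_prop)
  · exact (CS.mul (hf.scale σ) hη).integrable
  · refine Continuous.aestronglyMeasurable ?_
    have : Continuous (fun z : EE n => fderiv ℝ f (σ • z) z) := hF'.comp (by fun_prop : Continuous fun z : EE n => (σ, z))
    exact this.mul cη
  · refine Filter.Eventually.of_forall fun z s hs => ?_
    rw [norm_mul, Real.norm_eq_abs (η z)]
    by_cases hz : z ∈ tsupport η
    · exact mul_le_mul_of_nonneg_right (hB (s, z) ⟨hs, hz⟩) (abs_nonneg _)
    · simp [image_eq_zero_of_notMem_tsupport hz]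
  · exact hη.integrable.abs.const_mul B
  · refine Filter.Eventually.of_forall fun z s hs => ?_
    have h1 : HasDerivAt (fun s : ℝ => s • z) z s := by
      simpa using (hasDerivAt_id s).smul_const z
    exact ((hf.diff (s • z)).hasFDerivAt.comp_hasDerivAt s h1).mul_const _

lemma sum_eb (z : EE n) : ∑ i, z i • (eb i : EE n) = z := by
  ext j
  simp [eb, Finset.sum_apply, Pi.single_apply]

lemma ker_green {f : EE n → ℝ} {h H : ℝ → ℝ} (hf : Smo f) (hH : CS univ (fun z : EE n => H (‖z‖ ^ 2)))
    (hd : ∀ s, HasDerivAt H (-(h s) / 2) s) {σ : ℝ} (hσ : σ ≠ 0) :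
    ∫ z, fderiv ℝ f (σ • z) z * h (‖z‖ ^ 2) = σ * ∫ z : EE n, lap f (σ • z) * H (‖z‖ ^ 2) := by
  have g := green hH.smo (hf.scale σ) hH.cpt
  have e1 : ∀ z : EE n, gd (fun z : EE n => H (‖z‖ ^ 2)) (fun y => f (σ • y)) z
      = -σ * (fderiv ℝ f (σ • z) z * h (‖z‖ ^ 2)) := by
    intro z
    have e2 : ∀ i, pd (eb i) (fun z : EE n => H (‖z‖ ^ 2)) z = -(h (‖z‖ ^ 2)) * z i := by
      intro i
      have h1 := (hd (‖z‖ ^ 2)).comp_hasFDerivAt z (hasStrictFDerivAt_norm_sq z).hasFDerivAt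
      unfold pd
      have : fderiv ℝ (fun z : EE n => H (‖z‖ ^ 2)) z = _ := h1.fderiv
      rw [this]
      simp [eb, EuclideanSpace.inner_single_right]
      ring
    have e3 : fderiv ℝ f (σ • z) z = ∑ i, z i * pd (eb i) f (σ • z) := by
      conv_lhs => rw [← sum_eb z]
      simp only [map_sum, map_smul, smul_eq_mul, pd]
      rw [sum_eb z]
    simp only [gd, e2, pd_scale hf, e3, Finset.sum_mul, Finset.mul_sum]
    refine Finset.sum_congr rfl fun i _ => ?_
    ring
  simp only [e1, lap_scale hf, integral_const_mul] at g
  have e4 : ∫ z : EE n, H (‖z‖ ^ 2) * (σ ^ 2 * lap f (σ • z)) = σ ^ 2 * ∫ z : EE n, lap f (σ • z) * H (‖z‖ ^ 2) := by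
    rw [← integral_const_mul]; congr 1; ext z; ring
  rw [e4] at g
  apply mul_left_cancel₀ hσ
  linarith

lemma mvt0 {F F' : ℝ → ℝ} {A σ : ℝ} (hσ : 0 < σ) (hσ1 : σ ≤ 1) (hc : Continuous F) (hd : ∀ s, 0 < s → s < 1 → HasDerivAt F (F' s) s)
    (hA : ∀ s, 0 < s → s < 1 → |F' s| ≤ A) : |F σ - F 0| ≤ A * σ := by
  obtain ⟨c, hc, he⟩ := exists_hasDerivAt_eq_slope F F' hσ hc.continuousOn
    (fun s hs => hd s hs.1 (by linarith [hs.2]))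
  rw [sub_zero, eq_div_iff hσ.ne'] at he
  rw [← he, abs_mul, abs_of_pos hσ]
  exact mul_le_mul_of_nonneg_right (hA c hc.1 (by linarith [hc.2])) hσ.le

lemma tay {F G H : ℝ → ℝ} {A : ℝ} (cF : Continuous F) (cG : Continuous G)
    (dF : ∀ s, 0 < s → s < 1 → HasDerivAt F (s * G s) s) (dG : ∀ s, 0 < s → s < 1 → HasDerivAt G (s * H s) s)
    (hH : ∀ s, 0 < s → s < 1 → |H s| ≤ A) : |4 * F (1 / 2) - F 1 - 3 * F 0| ≤ 3 * A := by
  have hA : 0 ≤ A := (abs_nonneg _).trans (hH (1/2) (by norm_num) (by norm_num))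
  have hG : ∀ s, 0 < s → s < 1 → |G s - G 0| ≤ A := by
    intro s h0 h1
    have := mvt0 h0 h1.le cG dG (A := A) (fun t t0 t1 => by
      rw [abs_mul, abs_of_pos t0]
      nlinarith [hH t t0 t1, abs_nonneg (H t)])
    nlinarith
  have hφ : ∀ s, 0 < s → s ≤ 1 → |(F s - s ^ 2 * G 0 / 2) - (F 0 - 0 ^ 2 * G 0 / 2)| ≤ A * s := by
    intro s h0 h1
    refine mvt0 (F := fun s => F s - s ^ 2 * G 0 / 2) (F' := fun s => s * G s - s * G 0) h0 h1 (by fun_prop) ?_ ?_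
    · intro t t0 t1
      have h := ((hasDerivAt_pow 2 t).mul_const (G 0)).div_const 2
      refine ((dF t t0 t1).sub h).congr_deriv ?_
      push_cast; ring
    · intro t t0 t1
      rw [← mul_sub, abs_mul, abs_of_pos t0]
      nlinarith [hG t t0 t1, abs_nonneg (G t - G 0)]
  have a1 := hφ (1/2) (by norm_num) (by norm_num)
  have a2 := hφ 1 (by norm_num) (by norm_num)
  rw [abs_le] at *
  constructor <;> linarith [a1.1, a1.2, a2.1, a2.2]

lemma unit_est (n : ℕ) : ∃ C : ℝ, 1 ≤ C ∧ ∀ (f : EE n → ℝ) (A : ℝ), Smo f → (∀ z, ‖z‖ < 1 → |lap (lap f) z| ≤ A) →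
    |f 0| ≤ C * ((∫ z in ball (0 : EE n) 1, |f z|) + A) := by
  have h0s : ContDiff ℝ (⊤ : ℕ∞) (fun s : ℝ => expNegInvGlue (1 - s)) :=
    expNegInvGlue.contDiff.comp (contDiff_const.sub contDiff_id)
  have h0z : ∀ s : ℝ, 1 ≤ s → expNegInvGlue (1 - s) = 0 :=
    fun s hs => expNegInvGlue.zero_of_nonpos (by linarith)
  obtain ⟨h1, h1s, h1z, h1d⟩ := ker_next h0s h0z
  obtain ⟨h2, h2s, h2z, h2d⟩ := ker_next h1s h1z
  have c0 := ker_cs (n := n) h0s h0z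
  have c1 := ker_cs (n := n) h1s h1z
  have c2 := ker_cs (n := n) h2s h2z
  set η : EE n → ℝ := fun z => expNegInvGlue (1 - ‖z‖ ^ 2) with hη
  set ζ : EE n → ℝ := fun z => h1 (‖z‖ ^ 2) with hζ
  set ζ2 : EE n → ℝ := fun z => h2 (‖z‖ ^ 2) with hζ2
  have Ipos : 0 < ∫ z, η z := by
    refine Continuous.integral_pos_of_hasCompactSupport_nonneg_nonzero (x := 0) c0.smo.continuous c0.cpt ?_ ?_
    · intro z; exact expNegInvGlue.nonneg _
    · exact (expNegInvGlue.pos_of_pos (by simp)).ne'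
  obtain ⟨B, hB⟩ := c0.cpt.exists_bound_of_continuous c0.smo.continuous
  have B0 : 0 ≤ B := (norm_nonneg _).trans (hB 0)
  have J0 : 0 ≤ ∫ z, |ζ2 z| := integral_nonneg fun _ => abs_nonneg _
  set I := ∫ z, η z with hI
  set J := ∫ z, |ζ2 z| with hJ
  refine ⟨1 + (4 * (B * 2 ^ n) + B + 3 * J) / I, ?_, ?_⟩
  · have : 0 ≤ (4 * (B * 2 ^ n) + B + 3 * J) / I := by positivity
    linarith
  intro f A hf hA
  have A0 : 0 ≤ A := (abs_nonneg _).trans (hA 0 (by simp))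
  set X := ∫ z in ball (0 : EE n) 1, |f z| with hX
  have X0 : 0 ≤ X := integral_nonneg fun _ => abs_nonneg _
  have T := tay (F := fun σ => ∫ z, f (σ • z) * η z) (G := fun σ => ∫ z, lap f (σ • z) * ζ z)
    (H := fun σ => ∫ z, lap (lap f) (σ • z) * ζ2 z) (A := A * J)
    (continuous_iff_continuousAt.2 fun σ => (ker_deriv hf c0 σ).continuousAt)
    (continuous_iff_continuousAt.2 fun σ => (ker_deriv hf.lap c1 σ).continuousAt)
    (fun s s0 s1 => by
      have := ker_deriv hf c0 s
      rwa [ker_green (h := fun s => expNegInvGlue (1 - s)) hf c1 h1d s0.ne'] at this)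
    (fun s s0 s1 => by
      have := ker_deriv hf.lap c1 s
      rwa [ker_green hf.lap c2 h2d s0.ne'] at this)
    (fun s s0 s1 => by
      rw [← Real.norm_eq_abs, hJ, ← integral_const_mul]
      refine norm_integral_le_of_norm_le (c2.integrable.abs.const_mul A) (Filter.Eventually.of_forall fun z => ?_)
      rw [norm_mul, Real.norm_eq_abs, Real.norm_eq_abs]
      by_cases hz : ‖z‖ < 1
      · refine mul_le_mul_of_nonneg_right (hA _ ?_) (abs_nonneg _)
        rw [norm_smul, Real.norm_eq_abs, abs_of_pos s0]
        nlinarith [norm_nonneg z]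
      · have : ζ2 z = 0 := h2z _ (by nlinarith [not_lt.1 hz])
        simp [this])
  have bF : ∀ s : ℝ, 0 < s → s ≤ 1 → |∫ z, f (s • z) * η z| ≤ B * ((s ^ n)⁻¹ * X) := by
    intro s s0 s1
    have e1 : ∫ z in ball (0 : EE n) 1, |f (s • z)| = (s ^ n)⁻¹ * ∫ z in ball (0 : EE n) s, |f z| := by
      have := Measure.setIntegral_comp_smul_of_pos (volume : Measure (EE n)) (fun z => |f z|) (ball 0 1) s0
      rw [smul_unitBall_of_pos s0] at this
      simpa using this
    have ci : ∀ t : ℝ, IntegrableOn (fun z => |f (s • z)|) (ball (0 : EE n) t) := fun t =>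
      ((hf.scale s).continuous.abs.continuousOn.integrableOn_compact (isCompact_closedBall 0 t)).mono_set ball_subset_closedBall
    have e2 : ∫ z in ball (0 : EE n) s, |f z| ≤ X := by
      refine setIntegral_mono_set ?_ (Filter.Eventually.of_forall fun _ => abs_nonneg _) 
        (ball_subset_ball s1).eventuallyLE
      exact (hf.continuous.abs.continuousOn.integrableOn_compact (isCompact_closedBall 0 1)).mono_set ball_subset_closedBall
    calc |∫ z, f (s • z) * η z| ≤ ∫ z in ball (0 : EE n) 1, B * |f (s • z)| := by
          rw [← integral_indicator measurableSet_ball, ← Real.norm_eq_abs]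
          refine norm_integral_le_of_norm_le ?_ (Filter.Eventually.of_forall fun z => ?_)
          · rw [integrable_indicator_iff measurableSet_ball]
            exact (ci 1).const_mul B
          · by_cases hz : ‖z‖ < 1
            · rw [indicator_of_mem (by simpa using hz), norm_mul, mul_comm, Real.norm_eq_abs (f _)]
              exact mul_le_mul_of_nonneg_right (hB z) (abs_nonneg _)
            · have : η z = 0 := h0z _ (by nlinarith [not_lt.1 hz])
              rw [indicator_of_notMem (by simpa using hz)]
              simp [this]
      _ = B * ((s ^ n)⁻¹ * ∫ z in ball (0 : EE n) s, |f z|) := by rw [integral_const_mul, e1]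
      _ ≤ _ := by gcongr
  have b1 := bF (1 / 2) (by norm_num) (by norm_num)
  have b2 := bF 1 (by norm_num) le_rfl
  have e0 : ∫ z, f ((0 : ℝ) • z) * η z = f 0 * I := by
    simp only [zero_smul]; rw [integral_const_mul]
  simp only [e0] at T
  have b3 : |f 0| * I = |f 0 * I| := by rw [abs_mul, abs_of_pos Ipos]
  have e4 : (((1 / 2 : ℝ)) ^ n)⁻¹ = 2 ^ n := by rw [one_div, inv_pow, inv_inv]
  rw [e4] at b1
  rw [one_pow, inv_one, one_mul] at b2
  have key : |f 0| * I ≤ (4 * (B * 2 ^ n) + B) * X + 3 * J * A := by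
    rw [b3]
    rw [abs_le] at b1 b2 T ⊢
    constructor <;> nlinarith [b1.1, b1.2, b2.1, b2.2, T.1, T.2]
  have : |f 0| ≤ ((4 * (B * 2 ^ n) + B + 3 * J) / I) * (X + A) := by
    rw [div_mul_eq_mul_div, le_div_iff₀ Ipos]
    refine key.trans ?_
    have p1 : 0 ≤ (4 * (B * 2 ^ n) + B) * A := by positivity
    have p2 : 0 ≤ 3 * J * X := by positivity
    nlinarith
  linarith

lemma lap_trans (f : EE n → ℝ) (y x : EE n) : lap (fun z => f (y + z)) x = lap f (y + x) := by
  unfold lap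
  refine Finset.sum_congr rfl fun i _ => ?_
  rw [iteratedFDeriv_comp_add_left]

lemma Smo.trans' {f : EE n → ℝ} (hf : Smo f) (y : EE n) : Smo (fun z => f (y + z)) :=
  ContDiff.comp hf (contDiff_const.add contDiff_id)

lemma scaled_est (n : ℕ) : ∃ C : ℝ, 1 ≤ C ∧ ∀ (u : EE n → ℝ) (A ρ : ℝ) (y : EE n), Smo u → 0 < ρ → 
    (∀ z ∈ ball y ρ, |lap (lap u) z| ≤ A) →
    |u y| ≤ C * ((ρ ^ n)⁻¹ * (∫ z in ball y ρ, |u z|) + ρ ^ 4 * A) := by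
  obtain ⟨C, hC, h⟩ := unit_est n
  refine ⟨C, hC, fun u A ρ y hu hρ hA => ?_⟩
  have ht := hu.trans' y
  have := h (fun z => u (y + ρ • z)) (ρ ^ 4 * A) (ht.scale ρ) ?_
  · simp only [smul_zero, add_zero] at this
    convert this using 3
    have e := Measure.setIntegral_comp_smul_of_pos (volume : Measure (EE n)) (fun z => |u (y + z)|) (ball 0 1) hρ
    rw [smul_unitBall_of_pos hρ] at e
    rw [e]
    simp only [finrank_euclideanSpace, Fintype.card_fin, smul_eq_mul]
    congr 1
    have mp := measurePreserving_add_left (volume : Measure (EE n)) y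
    have := mp.setIntegral_preimage_emb (measurableEmbedding_addLeft y) (fun z => |u z|) (ball y ρ)
    rw [← this]
    congr 2
    ext z
    simp
  · intro z hz
    have e1 : lap (fun z => u (y + ρ • z)) = fun z => ρ ^ 2 * lap u (y + ρ • z) := by
      ext x
      rw [lap_scale (f := fun z => u (y + z)) ht, lap_trans]
    have e2 : lap (fun z => ρ ^ 2 * lap u (y + ρ • z)) z = ρ ^ 4 * lap (lap u) (y + ρ • z) := by
      have ht' := hu.lap.trans' y
      rw [lap_mul contDiff_const (ht'.scale ρ), lap_scale (f := fun z => lap u (y + z)) ht', lap_trans, lap_const']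
      simp only [gd, pd]
      simp
      ring
    rw [e1, e2, abs_mul, abs_of_pos (by positivity)]
    refine mul_le_mul_of_nonneg_left (hA _ ?_) (by positivity)
    rw [mem_ball, dist_eq_norm, add_sub_cancel_left, norm_smul, Real.norm_eq_abs, abs_of_pos hρ]
    nlinarith

theorem sup_est (n : ℕ) : ∃ C ρ0 : ℝ, 1 ≤ C ∧ 0 < ρ0 ∧ ρ0 ≤ 1 ∧ ∀ (u : EE n → ℝ) (ρ : ℝ) (y : EE n), Smo u → 0 < ρ → ρ ≤ ρ0 →
    (∀ z ∈ ball y ρ, |lap (lap u) z| ≤ |u z|) →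
    (u y) ^ 2 ≤ C * (ρ ^ n)⁻¹ * (∫ z in ball y ρ, u z ^ 2) := by
  obtain ⟨C, hC, h⟩ := scaled_est n
  set V := volume.real (ball (0 : EE n) 1) with hV
  have V0 : 0 ≤ V := measureReal_nonneg
  refine ⟨1 + (2 * C * 2 ^ n) ^ 2 * V, (2 * C * 2 ^ n)⁻¹, by nlinarith [show 0 ≤ (2 * C * 2 ^ n) ^ 2 * V by positivity], by positivity, ?_, ?_⟩
  · refine inv_le_one_of_one_le₀ ?_
    have : (1 : ℝ) ≤ 2 ^ n := one_le_pow₀ (by norm_num)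
    nlinarith
  intro u ρ y hu hρ hρ0 hL
  have hρ1 : ρ ≤ 1 := by
    refine hρ0.trans (inv_le_one_of_one_le₀ ?_)
    have : (1 : ℝ) ≤ 2 ^ n := one_le_pow₀ (by norm_num)
    nlinarith
  have cu := hu.continuous
  have i1 : IntegrableOn (fun z => |u z|) (ball y ρ) :=
    (cu.abs.continuousOn.integrableOn_compact (isCompact_closedBall y ρ)).mono_set ball_subset_closedBall
  have i2 : IntegrableOn (fun z => u z ^ 2) (ball y ρ) :=
    ((cu.pow 2).continuousOn.integrableOn_compact (isCompact_closedBall y ρ)).mono_set ball_subset_closedBall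
  set X := ∫ z in ball y ρ, |u z| with hX
  have X0 : 0 ≤ X := integral_nonneg fun _ => abs_nonneg _
  have key : ρ ^ n * |u y| ≤ 2 * C * 2 ^ n * X := by
    obtain ⟨z0, hz0, hmax⟩ := (isCompact_closedBall y ρ).exists_isMaxOn ⟨y, by simp [hρ.le]⟩
      (f := fun z => (ρ - dist z y) ^ n * |u z|) (by fun_prop)
    have hm : ∀ z ∈ closedBall y ρ, (ρ - dist z y) ^ n * |u z| ≤ (ρ - dist z0 y) ^ n * |u z0| := fun z hz => hmax hz
    set d := ρ - dist z0 y with hd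
    have d0 : 0 ≤ d := by have : dist z0 y ≤ ρ := hz0
                          linarith
    have hy := hm y (by simp [hρ.le])
    rw [dist_self, sub_zero] at hy
    refine hy.trans ?_
    rcases eq_or_lt_of_le d0 with d1 | d1
    · -- then u y = 0 unless n = 0
      rcases Nat.eq_zero_or_pos n with rfl | hn
      · exfalso
        have : z0 = y := Subsingleton.elim _ _
        rw [this, dist_self] at hd
        linarith
      · rw [← d1, zero_pow hn.ne', zero_mul]; positivity
    · have hsub : ball z0 (d / 2) ⊆ ball y ρ := by
        refine ball_subset_ball' ?_
        linarith
      have h2 := h u (2 ^ n * |u z0|) (d / 2) z0 hu (by linarith) (fun z hz => by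
        refine (hL z (hsub hz)).trans ?_
        have h3 := hm z (ball_subset_closedBall (hsub hz))
        have h4 : d / 2 ≤ ρ - dist z y := by
          have := dist_triangle z z0 y
          have : dist z z0 < d / 2 := hz
          linarith
        have h5 : (d / 2) ^ n * |u z| ≤ d ^ n * |u z0| :=
          (mul_le_mul_of_nonneg_right (pow_le_pow_left₀ (by linarith) h4 n) (abs_nonneg _)).trans h3
        rw [div_pow, div_mul_eq_mul_div, div_le_iff₀ (by positivity)] at h5
        have : 0 < d ^ n := by positivity
        refine le_of_mul_le_mul_left (h5.trans (le_of_eq ?_)) this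
        ring)
      have h6 : ∫ z in ball z0 (d / 2), |u z| ≤ X :=
        setIntegral_mono_set i1 (Filter.Eventually.of_forall fun _ => abs_nonneg _) hsub.eventuallyLE
      have h7 : C * ((d / 2) ^ 4 * (2 ^ n * |u z0|)) ≤ 1 / 2 * |u z0| := by
        have dρ : d ≤ ρ := by linarith [dist_nonneg (x := z0) (y := y)]
        have q1 : (d / 2) ^ 4 ≤ ρ := by
          calc (d / 2) ^ 4 ≤ (d / 2) ^ 1 := pow_le_pow_of_le_one (by linarith) (by linarith) (by norm_num)
            _ ≤ ρ := by linarith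
        have q2 : C * 2 ^ n * ρ ≤ 1 / 2 := by
          have : ρ * (2 * C * 2 ^ n) ≤ 1 := by
            rwa [← le_div_iff₀ (by positivity), one_div]
          linarith
        have q3 : C * 2 ^ n * (d / 2) ^ 4 ≤ 1 / 2 := (mul_le_mul_of_nonneg_left q1 (by positivity)).trans q2
        nlinarith [abs_nonneg (u z0)]
      have h8 : |u z0| ≤ 2 * C * (((d / 2) ^ n)⁻¹ * X) := by
        have : C * (((d / 2) ^ n)⁻¹ * ∫ z in ball z0 (d / 2), |u z|) ≤ C * (((d / 2) ^ n)⁻¹ * X) := by gcongr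
        linarith
      calc d ^ n * |u z0| ≤ d ^ n * (2 * C * (((d / 2) ^ n)⁻¹ * X)) := by gcongr
        _ = _ := by rw [div_pow]; field_simp
  have cs : X ^ 2 ≤ (ρ ^ n * V) * ∫ z in ball y ρ, u z ^ 2 := by
    set T := ∫ z in ball y ρ, u z ^ 2 with hT
    have vb := vol_ball y hρ
    have pos : ∀ t : ℝ, 0 ≤ (ρ ^ n * V) * (t * t) + (-2 * X) * t + T := by
      intro t
      have : 0 ≤ ∫ z in ball y ρ, (|u z| - t) ^ 2 := integral_nonneg fun _ => sq_nonneg _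
      have e : ∫ z in ball y ρ, (|u z| - t) ^ 2 = T + (-2 * t) * X + (ρ ^ n * V) * (t * t) := by
        have e1 : ∀ z, (|u z| - t) ^ 2 = u z ^ 2 + (-2 * t) * |u z| + t * t := fun z => by
          rw [← sq_abs (u z)]; ring
        simp only [e1]
        have ic : IntegrableOn (fun _ : EE n => t * t) (ball y ρ) := integrableOn_const (by simp [measure_ball_lt_top.ne])
        have i12 : IntegrableOn (fun z => u z ^ 2 + (-2 * t) * |u z|) (ball y ρ) := i2.add (i1.const_mul _)
        rw [integral_add i12 ic, integral_add i2 (i1.const_mul _), integral_const_mul]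
        simp [vb, hV, hT, hX]
      rw [e] at this
      linarith
    have := discrim_le_zero pos
    unfold discrim at this
    nlinarith
  have sq : (ρ ^ n * |u y|) ^ 2 ≤ (2 * C * 2 ^ n * X) ^ 2 := pow_le_pow_left₀ (by positivity) key 2
  rw [mul_pow, mul_pow _ X, sq_abs] at sq
  set T := ∫ z in ball y ρ, u z ^ 2 with hT
  have T0 : 0 ≤ T := integral_nonneg fun _ => sq_nonneg _
  have rn : 0 < ρ ^ n := by positivity
  have f1 : (ρ ^ n) ^ 2 * u y ^ 2 ≤ (2 * C * 2 ^ n) ^ 2 * ((ρ ^ n * V) * T) :=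
    sq.trans (mul_le_mul_of_nonneg_left cs (by positivity))
  have f2 : ρ ^ n * u y ^ 2 ≤ (2 * C * 2 ^ n) ^ 2 * V * T := by
    refine le_of_mul_le_mul_left ?_ rn
    calc ρ ^ n * (ρ ^ n * u y ^ 2) = (ρ ^ n) ^ 2 * u y ^ 2 := by ring
      _ ≤ _ := f1
      _ = _ := by ring
  have f3 : ρ ^ n * u y ^ 2 ≤ (1 + (2 * C * 2 ^ n) ^ 2 * V) * T := by nlinarith
  rw [mul_assoc, mul_comm (ρ ^ n)⁻¹, ← mul_assoc, ← div_eq_mul_inv, le_div_iff₀ rn]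
  linarith

end supest

section star
variable {n : ℕ}

lemma wk_lower {a b τ σ R κ : ℝ} {x : EE n} (ha : 0 < a) (hx : x ∈ Ann n a b) (hR : ‖x‖ ≤ R)
    (hκ : kk n a b x ≤ κ) (hτ : 0 ≤ τ) (hσ : 0 ≤ σ) :
    (R ^ (2 * τ + n) * κ ^ (2 * σ + 2))⁻¹ ≤ (wt n a b τ σ x * (kk n a b x)⁻¹) ^ 2 := by
  have hk := kk_pos ha hx
  have hr : 0 < ‖x‖ := ha.trans hx.1
  have n0 : (0 : ℝ) ≤ n := by positivity
  have e : (wt n a b τ σ x * (kk n a b x)⁻¹) ^ 2 = (‖x‖ ^ (2 * τ + n) * kk n a b x ^ (2 * σ + 2))⁻¹ := by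
    rw [wt_eq ha hx, mul_inv, mul_pow, mul_pow, ← Real.rpow_natCast _ 2, ← Real.rpow_mul hr.le,
      ← Real.rpow_natCast (kk n a b x ^ (-σ)) 2, ← Real.rpow_mul hk.le, ← Real.rpow_neg hr.le, inv_pow,
      Real.rpow_add hk (2 * σ) 2, mul_inv, mul_assoc]
    congr 2
    · push_cast; ring
    · rw [← Real.rpow_neg hk.le]; congr 1; push_cast; ring
    · simp
  rw [e]
  refine inv_anti₀ (by positivity) ?_
  have : 0 < R := hr.trans_le hR
  have : 0 < κ := hk.trans_le hκ
  refine mul_le_mul (Real.rpow_le_rpow hr.le hR (by linarith)) (Real.rpow_le_rpow hk.le hκ (by linarith))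
    (by positivity) (by positivity)

set_option maxHeartbeats 1000000 in
theorem star (hn : 2 ≤ n) {δ : ℝ} (hδ : 0 < δ) (hδ8 : δ ≤ 1 / 8) :
    ∃ C ρ0 : ℝ, 1 ≤ C ∧ 0 < ρ0 ∧ ρ0 ≤ 1 ∧ ∀ (a b τ σ Ma Mb : ℝ) (u : EE n → ℝ) (y : EE n),
      0 < a → 4 * a ≤ b → b ≤ ρ0 → 6 ≤ τ → 3 ≤ σ →
      σ ≤ τ / 2 → Smo u → (∀ x, ‖x‖ < b → |lap (lap u) x| ≤ |u x|) →
      (∀ x, ‖x‖ < a → |u x| ≤ Ma) → (∀ x, ‖x‖ < b → |u x| ≤ Mb) → a ≤ ‖y‖ → ‖y‖ ≤ b / 2 →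
      u y ^ 2 ≤ C * 4 ^ σ * ((4 * (‖y‖ / a)) ^ (2 * σ + 2) * ((1 + δ) / (1 - 2 * δ) * (‖y‖ / a)) ^ (2 * τ) * Ma ^ 2 +
        (2 * (b / ‖y‖)) ^ (2 * σ + 2) * ((1 + δ) / (1 - 2 * δ) * (b / ‖y‖)⁻¹) ^ (2 * τ) * Mb ^ 2) := by
  obtain ⟨Cd, hCd, hw⟩ := wbound hn hδ hδ8
  obtain ⟨C, ρ0, hC, hρ0, hρ1, hs⟩ := sup_est n
  have C0 : 0 ≤ C * (δ ^ n)⁻¹ * (1 + δ) ^ n * Cd := by positivity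
  refine ⟨1 + C * (δ ^ n)⁻¹ * (1 + δ) ^ n * Cd, ρ0, by linarith, hρ0, hρ1, ?_⟩
  intro a b τ σ Ma Mb u y ha hab hb hτ hσ hστ hu hL hMa hMb hay hyb
  obtain ⟨χ, hχ1, hχ, hintg⟩ := hw a b τ σ Ma Mb u ha hab (by linarith) hτ hσ hστ hu hL hMa hMb
  set t := ‖y‖ with ht
  have t0 : 0 < t := by linarith
  have b0 : 0 < b := by linarith
  have d2 : 0 < 1 - 2 * δ := by linarith
  have ha2 : 0 < a / 2 := by linarith
  set E := ∫ x, (wt n (a / 2) b τ σ x * (kk n (a / 2) b x)⁻¹ * (χ x * u x)) ^ 2 with hE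
  have hδt : 0 < δ * t := by positivity
  have inball : ∀ z ∈ ball y (δ * t), (1 - δ) * t ≤ ‖z‖ ∧ ‖z‖ ≤ (1 + δ) * t := by
    intro z hz
    rw [mem_ball, dist_eq_norm] at hz
    have h1 := norm_sub_norm_le z y
    have h2 := norm_sub_norm_le y z
    rw [norm_sub_rev] at h2
    constructor <;> nlinarith
  have sp := hs u (δ * t) y hu hδt (by nlinarith) (fun z hz => hL z (by nlinarith [(inball z hz).2]))
  have hcs : CS (Ann n (a / 2) b) (fun x => wt n (a / 2) b τ σ x * ((kk n (a / 2) b x)⁻¹ * (χ x * u x))) := by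
    have hO := isOpen_Ann n (a / 2) b
    refine CS.so_mul hO (wt_so ha2) (CS.so_mul hO (kki_so ha2) ?_)
    have := CS.mul hu hχ
    simpa only [mul_comm] using this
  have hI : Integrable (fun x => (wt n (a / 2) b τ σ x * (kk n (a / 2) b x)⁻¹ * (χ x * u x)) ^ 2) := by
    have := hcs.sq_int
    simpa only [mul_assoc] using this
  have low : ∀ κ : ℝ, 0 < κ → (∀ z ∈ ball y (δ * t), kk n (a / 2) b z ≤ κ) →
      ∫ z in ball y (δ * t), u z ^ 2 ≤ ((1 + δ) * t) ^ (2 * τ + n) * κ ^ (2 * σ + 2) * E := by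
    intro κ κ0 hκ
    have hp : 0 < ((1 + δ) * t) ^ (2 * τ + n) * κ ^ (2 * σ + 2) := by positivity
    rw [← div_le_iff₀' hp, div_eq_inv_mul, ← integral_const_mul]
    refine le_trans ?_ (setIntegral_le_integral (s := ball y (δ * t)) hI (Filter.Eventually.of_forall fun _ => sq_nonneg _))
    refine setIntegral_mono_on ?_ hI.integrableOn measurableSet_ball fun z hz => ?_
    · exact ((continuous_const.mul (hu.continuous.pow 2)).continuousOn.integrableOn_compact
        (isCompact_closedBall y (δ * t))).mono_set ball_subset_closedBall
    · obtain ⟨h1, h2⟩ := inball z hz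
      have c1 : χ z = 1 := hχ1 z (by nlinarith) (by nlinarith)
      rw [c1, one_mul, mul_pow _ (u z)]
      refine mul_le_mul_of_nonneg_right ?_ (sq_nonneg _)
      exact wk_lower ha2 ⟨by nlinarith, by nlinarith⟩ h2 (hκ z hz) (by linarith) (by linarith)
  have main : ∀ κ : ℝ, 0 < κ → (∀ z ∈ ball y (δ * t), kk n (a / 2) b z ≤ κ) →
      u y ^ 2 ≤ (C * (δ ^ n)⁻¹ * (1 + δ) ^ n * Cd) * 4 ^ σ *
        (κ ^ (2 * σ + 2) * ((1 + δ) / (1 - 2 * δ) * (t / a)) ^ (2 * τ) * Ma ^ 2 +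
        κ ^ (2 * σ + 2) * ((1 + δ) / (1 - 2 * δ) * (b / t)⁻¹) ^ (2 * τ) * Mb ^ 2) := by
    intro κ κ0 hκ
    have l := low κ κ0 hκ
    have l2 := l.trans (mul_le_mul_of_nonneg_left hintg (by positivity))
    refine sp.trans ((mul_le_mul_of_nonneg_left l2 (by positivity)).trans (le_of_eq ?_))
    have q : ∀ c : ℝ, 0 < c → ((1 + δ) / (1 - 2 * δ) * (t / c)) ^ (2 * τ)
        = ((1 + δ) * t) ^ (2 * τ) * ((1 - 2 * δ) * c) ^ (-2 * τ) := by
      intro c hc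
      rw [neg_mul, Real.rpow_neg (by positivity), ← div_eq_mul_inv, ← Real.div_rpow (by positivity) (by positivity),
        div_mul_div_comm]
    rw [inv_div, q a ha, q b b0, Real.rpow_add (by positivity) (2 * τ) n, Real.rpow_natCast, mul_pow, mul_pow (1 + δ)]
    field_simp
  have mono1 := main (min (4 * (t / a)) (2 * (b / t))) (by positivity) (fun z hz => by
    obtain ⟨h1, h2⟩ := inball z hz
    have hz : z ∈ Ann n (a / 2) b := ⟨by nlinarith, by nlinarith⟩
    have z0 : 0 < ‖z‖ := by nlinarith
    refine le_min ((kk_le_l' ha2 hz).trans ?_) ((kk_le_m' ha2 hz).trans ?_)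
    · rw [div_le_iff₀ ha2]
      have : 4 * (t / a) * (a / 2) = 2 * t := by field_simp; ring
      rw [this]; nlinarith
    · rw [div_le_iff₀ z0]
      have : 2 * (b / t) * ((1 / 2) * t) = b := by field_simp
      have h5 : 2 * (b / t) * ((1 / 2) * t) ≤ 2 * (b / t) * ‖z‖ := by
        refine mul_le_mul_of_nonneg_left (by nlinarith) (by positivity)
      linarith)
  have m0 : 0 < min (4 * (t / a)) (2 * (b / t)) := by positivity
  have k1 : (min (4 * (t / a)) (2 * (b / t))) ^ (2 * σ + 2) ≤ (4 * (t / a)) ^ (2 * σ + 2) :=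
    Real.rpow_le_rpow m0.le (min_le_left _ _) (by linarith)
  have k2 : (min (4 * (t / a)) (2 * (b / t))) ^ (2 * σ + 2) ≤ (2 * (b / t)) ^ (2 * σ + 2) :=
    Real.rpow_le_rpow m0.le (min_le_right _ _) (by linarith)
  refine mono1.trans ?_
  gcongr
  linarith

end star

section growth
variable {n : ℕ}

/-- sup of |u| over the ball -/
def MM (u : EE n → ℝ) (p : EE n) (r : ℝ) : ℝ := supAbs u (ball p r)

lemma MM_bdd {u : EE n → ℝ} (hu : Continuous u) (p : EE n) (r : ℝ) :
    BddAbove ((fun y => |u y|) '' ball p r) := by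
  refine BddAbove.mono (image_mono ball_subset_closedBall) ?_
  exact (isCompact_closedBall p r).bddAbove_image hu.abs.continuousOn

lemma le_MM {u : EE n → ℝ} (hu : Continuous u) {p x : EE n} {r : ℝ} (hx : x ∈ ball p r) : |u x| ≤ MM u p r :=
  le_csSup (MM_bdd hu p r) ⟨x, hx, rfl⟩

lemma MM_le {u : EE n → ℝ} {p : EE n} {r c : ℝ} (hr : 0 < r) (h : ∀ x ∈ ball p r, |u x| ≤ c) : MM u p r ≤ c := by
  refine csSup_le ⟨_, p, mem_ball_self hr, rfl⟩ ?_
  rintro _ ⟨x, hx, rfl⟩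
  exact h x hx

lemma MM_nonneg {u : EE n → ℝ} {p : EE n} {r : ℝ} : 0 ≤ MM u p r := by
  refine Real.sSup_nonneg ?_
  rintro _ ⟨x, hx, rfl⟩
  exact abs_nonneg _

lemma MM_mono {u : EE n → ℝ} (hu : Continuous u) {p q : EE n} {r s : ℝ} (hr : 0 < r) (h : ball p r ⊆ ball q s) :
    MM u p r ≤ MM u q s := MM_le hr fun _ hx => le_MM hu (h hx)

lemma MM_trans (u : EE n → ℝ) (p : EE n) (r : ℝ) : MM (fun z => u (p + z)) 0 r = MM u p r := by
  unfold MM supAbs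
  congr 1
  ext v
  constructor
  · rintro ⟨x, hx, rfl⟩
    exact ⟨p + x, by simpa using hx, rfl⟩
  · rintro ⟨x, hx, rfl⟩
    exact ⟨x - p, by simpa [dist_eq_norm] using hx, by simp⟩

lemma lap_trans2 (u : EE n → ℝ) (p x : EE n) : lap (lap (fun z => u (p + z))) x = lap (lap u) (p + x) := by
  rw [← lap_trans]
  congr 1
  ext z
  exact lap_trans u p z

lemma two_rpow_ge {e : ℝ} (he : 0 ≤ e) : 1 + e / 2 ≤ (2 : ℝ) ^ e := by
  rw [Real.rpow_def_of_pos (by norm_num)]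
  have := Real.add_one_le_exp (Real.log 2 * e)
  nlinarith [Real.log_two_gt_d9]

/-- arithmetic for the inner term -/
lemma term_one {C m e σ τ N S θ T : ℝ} (hS : 2 ≤ S) (hT0 : 0 < T) (hT : T ≤ S) (hC0 : 0 ≤ C) (hC : 16 * C ≤ 2 ^ m) (hm : 0 ≤ m)
    (hθ0 : 0 < θ) (hθ : θ ≤ 2 ^ e) (he : 0 ≤ e) (hσ : 0 ≤ σ) (hτ : 0 ≤ τ) 
    (hN : m + 2 * σ + 3 * (2 * σ + 2) + (1 + e) * (2 * τ) ≤ 2 * N) :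
    16 * (C * 4 ^ σ * ((4 * T) ^ (2 * σ + 2) * (θ * T) ^ (2 * τ))) ≤ (S ^ N) ^ 2 := by
  have S0 : 0 < S := by linarith
  have a1 : 16 * C ≤ S ^ m := hC.trans (Real.rpow_le_rpow (by norm_num) hS hm)
  have a2 : (4 : ℝ) ^ σ ≤ S ^ (2 * σ) := by
    rw [Real.rpow_mul S0.le]
    refine Real.rpow_le_rpow (by norm_num) ?_ hσ
    rw [Real.rpow_two]; nlinarith
  have a3 : (4 * T) ^ (2 * σ + 2) ≤ S ^ (3 * (2 * σ + 2)) := by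
    rw [Real.rpow_mul S0.le]
    refine Real.rpow_le_rpow (by positivity) ?_ (by linarith)
    have : S ^ (3 : ℝ) = S ^ 3 := by exact_mod_cast Real.rpow_natCast S 3
    rw [this]
    have : 4 * S ≤ S ^ 3 := by nlinarith [mul_nonneg S0.le (by nlinarith : 0 ≤ S ^ 2 - 4)]
    linarith
  have a4 : (θ * T) ^ (2 * τ) ≤ S ^ ((1 + e) * (2 * τ)) := by
    rw [Real.rpow_mul S0.le]
    refine Real.rpow_le_rpow (by positivity) ?_ (by linarith)
    rw [add_comm, Real.rpow_add S0, Real.rpow_one]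
    refine mul_le_mul (hθ.trans (Real.rpow_le_rpow (by norm_num) hS he)) hT hT0.le (by positivity)
  calc 16 * (C * 4 ^ σ * ((4 * T) ^ (2 * σ + 2) * (θ * T) ^ (2 * τ)))
      = (16 * C) * 4 ^ σ * ((4 * T) ^ (2 * σ + 2) * (θ * T) ^ (2 * τ)) := by ring
    _ ≤ S ^ m * S ^ (2 * σ) * (S ^ (3 * (2 * σ + 2)) * S ^ ((1 + e) * (2 * τ))) := by gcongr
    _ = S ^ (m + 2 * σ + 3 * (2 * σ + 2) + (1 + e) * (2 * τ)) := by
        rw [← Real.rpow_add S0, ← Real.rpow_add S0, ← Real.rpow_add S0]; congr 1; ring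
    _ ≤ S ^ (2 * N) := Real.rpow_le_rpow_of_exponent_le (by linarith) hN
    _ = _ := by rw [mul_comm, Real.rpow_mul S0.le, Real.rpow_two]

lemma term_two {C m e σ τ N S θ T : ℝ} (hS : 2 ≤ S) (hT : S ≤ T) (hC0 : 0 ≤ C) (hC : 16 * C ≤ 2 ^ m) (hm : 0 ≤ m)
    (hθ0 : 0 < θ) (hθ : θ ≤ 2 ^ e) (he : 0 ≤ e) (hσ : 0 ≤ σ) (hτ : 0 ≤ τ) (hN0 : 0 ≤ N)
    (hN : m + 2 * σ + 2 * (2 * σ + 2) + (e - 1) * (2 * τ) ≤ -(2 * N)) :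
    16 * (C * 4 ^ σ * ((2 * T) ^ (2 * σ + 2) * (θ * T⁻¹) ^ (2 * τ))) * (S ^ N) ^ 2 ≤ 1 := by
  have S0 : 0 < S := by linarith
  have T2 : 2 ≤ T := by linarith
  have T0 : 0 < T := by linarith
  have a1 : 16 * C ≤ T ^ m := hC.trans (Real.rpow_le_rpow (by norm_num) T2 hm)
  have a2 : (4 : ℝ) ^ σ ≤ T ^ (2 * σ) := by
    rw [Real.rpow_mul T0.le]
    refine Real.rpow_le_rpow (by norm_num) ?_ hσ
    rw [Real.rpow_two]; nlinarith
  have a3 : (2 * T) ^ (2 * σ + 2) ≤ T ^ (2 * (2 * σ + 2)) := by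
    rw [Real.rpow_mul T0.le]
    refine Real.rpow_le_rpow (by positivity) ?_ (by linarith)
    rw [Real.rpow_two]; nlinarith
  have a4 : (θ * T⁻¹) ^ (2 * τ) ≤ T ^ ((e - 1) * (2 * τ)) := by
    rw [Real.rpow_mul T0.le]
    refine Real.rpow_le_rpow (by positivity) ?_ (by linarith)
    rw [Real.rpow_sub T0, Real.rpow_one, ← div_eq_mul_inv]
    gcongr
    exact hθ.trans (Real.rpow_le_rpow (by norm_num) T2 he)
  have a5 : (S ^ N) ^ 2 ≤ T ^ (2 * N) := by
    rw [mul_comm, Real.rpow_mul T0.le, Real.rpow_two]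
    gcongr
  calc 16 * (C * 4 ^ σ * ((2 * T) ^ (2 * σ + 2) * (θ * T⁻¹) ^ (2 * τ))) * (S ^ N) ^ 2
      = (16 * C) * 4 ^ σ * ((2 * T) ^ (2 * σ + 2) * (θ * T⁻¹) ^ (2 * τ)) * (S ^ N) ^ 2 := by ring
    _ ≤ T ^ m * T ^ (2 * σ) * (T ^ (2 * (2 * σ + 2)) * T ^ ((e - 1) * (2 * τ))) * T ^ (2 * N) := by gcongr
    _ = T ^ (m + 2 * σ + 2 * (2 * σ + 2) + (e - 1) * (2 * τ) + 2 * N) := by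
        rw [← Real.rpow_add T0, ← Real.rpow_add T0, ← Real.rpow_add T0, ← Real.rpow_add T0]; congr 1; ring
    _ ≤ 1 := Real.rpow_le_one_of_one_le_of_nonpos (by linarith) (by linarith)

set_option maxHeartbeats 1000000 in
theorem lemmaG (hn : 2 ≤ n) {ε : ℝ} (hε : 0 < ε) (hε1 : ε ≤ 1) :
    ∃ N0 ρ0 : ℝ, 1 ≤ N0 ∧ 0 < ρ0 ∧ ρ0 ≤ 1 ∧ ∀ (u : EE n → ℝ) (p : EE n) (a s b N : ℝ), Smo u → 0 < a → 2 * a ≤ s →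
      2 * s ≤ b → b ≤ ρ0 → N0 ≤ N → (∀ x ∈ ball p b, |lap (lap u) x| ≤ |u x|) → 0 < MM u p a →
      (s / a) ^ N * MM u p a ≤ MM u p s → (b / s) ^ ((1 - ε) * N) * MM u p s ≤ MM u p b := by
  set e := ε / 20 with he
  have e0 : 0 < e := by positivity
  have e1 : e ≤ 1 / 20 := by rw [he]; linarith
  obtain ⟨C, ρ0, hC, hρ0, hρ1, hst⟩ := star (n := n) hn (δ := e / 8) (by positivity) (by linarith)
  set m := Real.logb 2 (16 * C) with hm
  have hCm : 16 * C = 2 ^ m := by rw [hm, Real.rpow_logb (by norm_num) (by norm_num) (by linarith)]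
  have m0 : 0 ≤ m := Real.logb_nonneg (by norm_num) (by linarith)
  refine ⟨(12 + m) / e ^ 2, ρ0, ?_, hρ0, hρ1, ?_⟩
  · rw [le_div_iff₀ (by positivity)]; nlinarith
  intro u p a s b N hu ha has hsb hb hN hL hpos hgr
  have hN' : 12 + m ≤ N * e ^ 2 := by rwa [div_le_iff₀ (by positivity)] at hN
  have N0 : 0 < N := by nlinarith
  have hNe : 12 + m ≤ N * e := hN'.trans (by nlinarith [mul_pos N0 e0])
  have N12 : 12 ≤ N := by nlinarith [mul_pos N0 e0]
  set τ := (1 - 6 * e) * N with hτ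
  set σ := e * τ with hσ
  have τ6 : 6 ≤ τ := by nlinarith
  have σ3 : 3 ≤ σ := by rw [hσ, hτ]; nlinarith [mul_pos N0 e0]
  have στ : σ ≤ τ / 2 := by nlinarith
  set θ := (1 + e / 8) / (1 - 2 * (e / 8)) with hθ
  have dpos : 0 < 1 - 2 * (e / 8) := by linarith
  have θ0 : 0 < θ := by positivity
  have θ2 : θ ≤ 2 ^ e := by
    refine le_trans ?_ (two_rpow_ge e0.le)
    rw [hθ, div_le_iff₀ dpos]; nlinarith
  have s0 : 0 < s := by linarith
  have hS : 2 ≤ s / a := by rw [le_div_iff₀ ha]; exact has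
  have hB : 2 ≤ b / s := by rw [le_div_iff₀ s0]; exact hsb
  have cu := hu.continuous
  have SN : 4 ≤ (s / a) ^ N := by
    calc (4 : ℝ) = 2 ^ (2 : ℝ) := by norm_num
      _ ≤ (s / a) ^ (2 : ℝ) := Real.rpow_le_rpow (by norm_num) hS (by norm_num)
      _ ≤ _ := Real.rpow_le_rpow_of_exponent_le (by linarith) (by linarith)
  have Ms : 4 * MM u p a ≤ MM u p s := by nlinarith
  obtain ⟨v, ⟨q, hq, rfl⟩, hv⟩ := exists_lt_of_lt_csSup (s := (fun y => |u y|) '' ball p s)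
    ⟨_, p, mem_ball_self s0, rfl⟩ (b := MM u p s / 2) (by
      have : MM u p s = sSup ((fun y => |u y|) '' ball p s) := rfl
      rw [← this]; linarith)
  simp only at hv
  set y := q - p with hy
  have hyq : p + y = q := by simp [hy]
  have ys : ‖y‖ < s := by rwa [mem_ball, dist_eq_norm] at hq
  have ya : a ≤ ‖y‖ := by
    by_contra hc
    push Not at hc
    have : |u q| ≤ MM u p a := le_MM cu (by rwa [mem_ball, dist_eq_norm])
    linarith
  have inb : ∀ (r : ℝ) (x : EE n), ‖x‖ < r → p + x ∈ ball p r := fun r x hx => by simpa [dist_eq_norm] using hx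
  have st := hst a b τ σ (MM u p a) (MM u p b) (fun z => u (p + z)) y ha (by linarith) hb τ6 σ3 στ (hu.trans' p)
    (fun x hx => by rw [lap_trans2]; exact hL _ (inb b x hx))
    (fun x hx => le_MM cu (inb a x hx)) (fun x hx => le_MM cu (inb b x hx)) ya (by linarith)
  simp only [hyq] at st
  have y0 : 0 < ‖y‖ := by linarith
  have t1 := term_one (C := C) (m := m) (e := e) (σ := σ) (τ := τ) (N := N) (S := s / a) (θ := θ) (T := ‖y‖ / a) hS
    (by positivity) (by gcongr) (by linarith) hCm.le m0 θ0 θ2 e0.le (by linarith) (by linarith) (by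
      have : σ * 8 + 2 * τ * (1 + e) = 2 * τ * (1 + 5 * e) := by rw [hσ]; ring
      have : 2 * τ * (1 + 5 * e) ≤ 2 * N * (1 - e) := by rw [hτ]; nlinarith [mul_pos N0 e0, mul_pos (mul_pos N0 e0) e0]
      nlinarith)
  have t2 := term_two (C := C) (m := m) (e := e) (σ := σ) (τ := τ) (N := (1 - ε) * N) (S := b / s) (θ := θ) (T := b / ‖y‖) hB
    (by have : 0 < b := by linarith
        gcongr) (by linarith) hCm.le m0 θ0 θ2 e0.le (by linarith) (by linarith) (mul_nonneg (by linarith) N0.le) (by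
      have e5 : ε = 20 * e := by rw [he]; ring
      have : σ * 6 + 2 * τ * (e - 1) = -(2 * τ * (1 - 4 * e)) := by rw [hσ]; ring
      have : 2 * N * (1 - 10 * e) ≤ 2 * τ * (1 - 4 * e) := by rw [hτ]; nlinarith [mul_pos N0 e0, mul_pos (mul_pos N0 e0) e0]
      rw [e5]
      nlinarith)
  set A1 := C * 4 ^ σ * ((4 * (‖y‖ / a)) ^ (2 * σ + 2) * (θ * (‖y‖ / a)) ^ (2 * τ)) with hA1
  set A2 := C * 4 ^ σ * ((2 * (b / ‖y‖)) ^ (2 * σ + 2) * (θ * (b / ‖y‖)⁻¹) ^ (2 * τ)) with hA2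
  have st' : u q ^ 2 ≤ A1 * MM u p a ^ 2 + A2 * MM u p b ^ 2 := by
    refine st.trans (le_of_eq ?_)
    rw [hA1, hA2]; ring
  have A20 : 0 ≤ A2 := by
    have : 0 < b := by linarith
    positivity
  have f1 : 16 * A1 * MM u p a ^ 2 ≤ MM u p s ^ 2 := by
    calc 16 * A1 * MM u p a ^ 2 ≤ ((s / a) ^ N) ^ 2 * MM u p a ^ 2 := mul_le_mul_of_nonneg_right t1 (sq_nonneg _)
      _ = ((s / a) ^ N * MM u p a) ^ 2 := by ring
      _ ≤ _ := pow_le_pow_left₀ (by positivity) hgr 2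
  have f2 : (MM u p s / 2) ^ 2 ≤ u q ^ 2 := by
    rw [← sq_abs (u q)]
    exact pow_le_pow_left₀ (by have := MM_nonneg (u := u) (p := p) (r := s); linarith) hv.le 2
  have f3 : MM u p s ^ 2 ≤ 16 * A2 * MM u p b ^ 2 := by nlinarith [mul_nonneg A20 (sq_nonneg (MM u p b))]
  set P := (b / s) ^ ((1 - ε) * N) with hP
  have P0 : 0 ≤ P := by
    have : 0 < b := by linarith
    positivity
  refine le_of_sq_le_sq ?_ MM_nonneg
  calc (P * MM u p s) ^ 2 = P ^ 2 * MM u p s ^ 2 := by ring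
    _ ≤ P ^ 2 * (16 * A2 * MM u p b ^ 2) := mul_le_mul_of_nonneg_left f3 (sq_nonneg _)
    _ = (16 * A2 * P ^ 2) * MM u p b ^ 2 := by ring
    _ ≤ 1 * MM u p b ^ 2 := mul_le_mul_of_nonneg_right t2 (sq_nonneg _)
    _ = _ := one_mul _

end growth

section final
variable {n : ℕ}

theorem lemmaMain (hn : 2 ≤ n) {ε : ℝ} (hε : 0 < ε) (hε1 : ε ≤ 1 / 2) :
    ∃ N0 ρ0 : ℝ, 1 ≤ N0 ∧ 0 < ρ0 ∧ ρ0 ≤ 1 ∧ ∀ (u : EE n → ℝ) (p : EE n) (a s R κ N : ℝ), Smo u → 0 < a → 2 * a ≤ s →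
      2 * s ≤ R → 2 ≤ κ → κ * R ≤ ρ0 → N0 ≤ N → (∀ x ∈ ball p (κ * R), |lap (lap u) x| ≤ |u x|) → 0 < MM u p a →
      (s / a) ^ N * MM u p a ≤ MM u p s → κ ^ ((1 - ε) ^ 2 * N) * MM u p R ≤ MM u p (κ * R) := by
  obtain ⟨N0, ρ0, h1, h2, h3, hG⟩ := lemmaG hn hε (by linarith : ε ≤ 1)
  refine ⟨2 * N0, ρ0, by linarith, h2, h3, ?_⟩
  intro u p a s R κ N hu ha has hsR hκ hκR hN hL hpos hgr
  have s0 : 0 < s := by linarith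
  have R0 : 0 < R := by linarith
  have RκR : R ≤ κ * R := by nlinarith
  have g1 := hG u p a s R N hu ha has hsR (by linarith) (by linarith)
    (fun x hx => hL x (ball_subset_ball RκR hx)) hpos hgr
  have sa : 1 ≤ s / a := by rw [le_div_iff₀ ha]; linarith
  have Ns : (1 - ε) * N ≤ N := by nlinarith
  have g2 : (R / a) ^ ((1 - ε) * N) * MM u p a ≤ MM u p R := by
    calc (R / a) ^ ((1 - ε) * N) * MM u p a = (R / s) ^ ((1 - ε) * N) * ((s / a) ^ ((1 - ε) * N) * MM u p a) := by
          rw [← mul_assoc, ← Real.mul_rpow (by positivity) (by positivity), div_mul_div_cancel₀ s0.ne']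
      _ ≤ (R / s) ^ ((1 - ε) * N) * ((s / a) ^ N * MM u p a) := by
          gcongr
      _ ≤ (R / s) ^ ((1 - ε) * N) * MM u p s := by gcongr
      _ ≤ _ := g1
  have g3 := hG u p a R (κ * R) ((1 - ε) * N) hu ha (by linarith) (by nlinarith) hκR (by nlinarith) hL hpos g2
  rw [mul_div_cancel_right₀ _ R0.ne'] at g3
  convert g3 using 3
  ring

lemma dbIdx_eq (u : EE n → ℝ) (x : EE n) (r : ℝ) : dbIdx u x r = Real.logb 2 (MM u x (2 * r) / MM u x r) := rfl

/-- from doubling index to growth -/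
lemma db_lower {u : EE n → ℝ} {x : EE n} {r N : ℝ} (hN : 0 ≤ N) (h : N < dbIdx u x r) :
    0 < MM u x r ∧ 2 ^ N * MM u x r ≤ MM u x (2 * r) := by
  rw [dbIdx_eq] at h
  have a0 : 0 ≤ MM u x r := MM_nonneg
  have b0 : 0 ≤ MM u x (2 * r) := MM_nonneg
  have apos : 0 < MM u x r := by
    rcases a0.eq_or_lt with h0 | h0
    · rw [← h0, div_zero, Real.logb_zero] at h; linarith
    · exact h0
  have bpos : 0 < MM u x (2 * r) := by
    rcases b0.eq_or_lt with h0 | h0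
    · rw [← h0, zero_div, Real.logb_zero] at h; linarith
    · exact h0
  refine ⟨apos, ?_⟩
  rw [← le_div_iff₀ apos]
  rw [Real.lt_logb_iff_rpow_lt (by norm_num) (by positivity)] at h
  exact h.le

lemma db_upper {u : EE n → ℝ} {x : EE n} {r N : ℝ} (hp : 0 < MM u x r) (h : 2 ^ N * MM u x r ≤ MM u x (2 * r)) :
    N ≤ dbIdx u x r := by
  rw [dbIdx_eq]
  have : 0 < MM u x (2 * r) := lt_of_lt_of_le (by positivity) h
  rw [Real.le_logb_iff_rpow_le (by norm_num) (by positivity), le_div_iff₀ hp]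
  exact h

/-- geometry of the simplex -/
lemma geom {x : Fin (n + 1) → EE n} {γ d : ℝ} (hγ : 0 < γ) (hγ1 : γ < 1) (hn : 2 ≤ n) (hd : 0 < d)
    (hw : γ * d ≤ simplexWidth x) {x0 : EE n} (hx0 : x0 = (n + 1 : ℝ)⁻¹ • ∑ i, x i)
    (hdist : ∀ i, dist (x i) x0 ≤ d) {g ρ : ℝ} (hg : g = γ / (n + 1)) (hρ : ρ = 2 / g * d) {z : EE n}
    (hz : dist z x0 < (1 + g ^ 2 / 12) * ρ) : ∃ i, dist z (x i) < ρ := by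
  have n1 : (0 : ℝ) < n + 1 := by positivity
  have n2 : (2 : ℝ) ≤ n := by exact_mod_cast hn
  have g0 : 0 < g := by rw [hg]; positivity
  have g1 : g ≤ 1 / 3 := by
    rw [hg, div_le_iff₀ n1]; linarith
  have dρ : d = ρ * g / 2 := by rw [hρ]; field_simp
  have ρ0 : 0 < ρ := by rw [hρ]; positivity
  by_cases hs : dist z x0 < ρ / 2
  · refine ⟨0, ?_⟩
    have h1 := dist_triangle z x0 (x 0)
    rw [dist_comm x0] at h1
    have h2 := hdist 0
    nlinarith
  push Not at hs
  set q := z - x0 with hq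
  have hqn : dist z x0 = ‖q‖ := dist_eq_norm _ _
  rw [hqn] at hs hz
  have q0 : 0 < ‖q‖ := by linarith
  set v : EE n := ‖q‖⁻¹ • q with hv
  have hv1 : v ∈ sphere (0 : EE n) 1 := by
    rw [mem_sphere_zero_iff_norm, hv, norm_smul, norm_inv, norm_norm, inv_mul_cancel₀ q0.ne']
  set A : Fin (n + 1) → ℝ := fun i => ⟪x i, v⟫ with hA
  have hwid : γ * d ≤ Finset.univ.sup' Finset.univ_nonempty A - Finset.univ.inf' Finset.univ_nonempty A := by
    refine hw.trans (csInf_le ⟨0, ?_⟩ ⟨v, hv1, rfl⟩)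
    rintro _ ⟨w, _, rfl⟩
    simp only [sub_nonneg]
    exact (Finset.inf'_le _ (Finset.mem_univ 0)).trans (Finset.le_sup' (fun i => ⟪x i, w⟫) (Finset.mem_univ 0))
  obtain ⟨i, -, hi⟩ := Finset.exists_mem_eq_sup' Finset.univ_nonempty A
  obtain ⟨j, -, hj⟩ := Finset.exists_mem_eq_inf' Finset.univ_nonempty A
  rw [hi, hj] at hwid
  have hmax : ∀ k, A k ≤ A i := fun k => by rw [← hi]; exact Finset.le_sup' A (Finset.mem_univ k)
  have hsum : ⟪x0, v⟫ * (n + 1) = ∑ k, A k := by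
    rw [hx0, inner_smul_left, sum_inner]; simp only [hA]
    simp; field_simp
  have hsum2 : ∑ k, A k ≤ A j + n * A i := by
    rw [← Finset.add_sum_erase _ _ (Finset.mem_univ j)]
    have : ∑ k ∈ Finset.univ.erase j, A k ≤ ∑ k ∈ Finset.univ.erase j, A i := Finset.sum_le_sum fun k _ => hmax k
    rw [Finset.sum_const, Finset.card_erase_of_mem (Finset.mem_univ j)] at this
    simp only [Finset.card_univ, Fintype.card_fin, Nat.add_sub_cancel, nsmul_eq_mul] at this
    linarith
  have key : g * d ≤ A i - ⟪x0, v⟫ := by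
    rw [hg, div_mul_eq_mul_div, div_le_iff₀ n1]
    linarith
  refine ⟨i, ?_⟩
  have e1 : A i - ⟪x0, v⟫ = ‖q‖⁻¹ * ⟪x i - x0, q⟫ := by
    simp only [hA, hv]
    rw [← inner_sub_left, inner_smul_right]
  rw [e1, inv_mul_eq_div, le_div_iff₀ q0] at key
  have e2 : dist z (x i) ^ 2 = ‖q‖ ^ 2 - 2 * ⟪x i - x0, q⟫ + ‖x i - x0‖ ^ 2 := by
    rw [dist_eq_norm, real_inner_comm, ← norm_sub_sq_real]
    congr 2
    rw [hq]; abel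
  have e3 : ‖x i - x0‖ ^ 2 ≤ d ^ 2 := by
    have := hdist i
    rw [dist_eq_norm] at this
    exact pow_le_pow_left₀ (norm_nonneg _) this 2
  have e4 : ‖q‖ ^ 2 ≤ ((1 + g ^ 2 / 12) * ρ) ^ 2 := pow_le_pow_left₀ q0.le hz.le 2
  have e5 : g * d * (ρ / 2) ≤ g * d * ‖q‖ := mul_le_mul_of_nonneg_left hs (by positivity)
  refine lt_of_pow_lt_pow_left₀ 2 ρ0.le ?_
  rw [e2]
  have e6 : ((1 + g ^ 2 / 12) * ρ) ^ 2 - 2 * (g * d * (ρ / 2)) + d ^ 2 < ρ ^ 2 := by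
    rw [dρ]
    have : ((1 + g ^ 2 / 12) * ρ) ^ 2 - 2 * (g * (ρ * g / 2) * (ρ / 2)) + (ρ * g / 2) ^ 2
        = ρ ^ 2 - ρ ^ 2 * g ^ 2 * (1 / 12 - g ^ 2 / 144) := by ring
    rw [this]
    have : 0 < ρ ^ 2 * g ^ 2 * (1 / 12 - g ^ 2 / 144) := by
      have : 0 < 1 / 12 - g ^ 2 / 144 := by nlinarith
      positivity
    linarith
  linarith

set_option maxHeartbeats 1000000 in
theorem final_smo (n : ℕ) (hn : 2 ≤ n) (γ : ℝ) (hγ : γ ∈ Set.Ioo (0 : ℝ) 1) :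
    ∃ K c C r N₀ : ℝ, 0 < K ∧ 0 < c ∧ K ≤ C ∧ 0 < r ∧ r ≤ 1 / 4 ∧ 2 * C * (2 * r) ≤ 1 / 4 ∧ K ≤ 2 * C ∧ 0 ≤ N₀ ∧
      ∀ x : Fin (n + 1) → EE n,
        γ < simplexWidth x / diam (convexHull ℝ (Set.range x)) →
      ∀ (u : EE n → ℝ), Smo u →
        (∀ y ∈ ball (0 : EE n) (1 / 2), |lap (lap u) y| ≤ |u y|) →
        convexHull ℝ (Set.range x) ⊆ ball (0 : EE n) r →
      ∀ N : ℝ, N₀ < N →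
        (∀ i : Fin (n + 1), ∃ ri : ℝ, 0 < ri ∧
          ri ≤ K * diam (convexHull ℝ (Set.range x)) / 2 ∧ N < dbIdx u (x i) ri) →
        (1 + c) * N
          < dbIdx u ((n + 1 : ℝ)⁻¹ • ∑ i, x i) (C * diam (convexHull ℝ (Set.range x))) := by
  obtain ⟨γ0, γ1⟩ := hγ
  have n1 : (0 : ℝ) < n + 1 := by positivity
  have n2 : (2 : ℝ) ≤ n := by exact_mod_cast hn
  set g : ℝ := γ / (n + 1) with hg
  have g0 : 0 < g := by positivity
  have g1 : g ≤ 1 / 3 := by rw [hg, div_le_iff₀ n1]; linarith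
  set K' : ℝ := 2 / g with hK'
  have K'0 : 0 < K' := by positivity
  have K'6 : 6 ≤ K' := by rw [hK', le_div_iff₀ g0]; linarith
  set δ : ℝ := g ^ 2 / 12 with hδ
  have δ0 : 0 < δ := by positivity
  have δ1 : δ ≤ 1 := by rw [hδ]; nlinarith
  set t : ℝ := 4 + 2 / (K' * δ) with ht
  have t4 : 4 ≤ t := by
    have : 0 < 2 / (K' * δ) := by positivity
    linarith
  have tδ : 2 ≤ t * (K' * δ) := by
    have : 2 / (K' * δ) * (K' * δ) = 2 := by field_simp
    have : 0 < K' * δ := by positivity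
    nlinarith
  -- ratio of radii
  set Q : ℝ := (1 + δ / 2) * t / (1 + δ) with hQ
  have Q2 : 2 ≤ Q := by rw [hQ, le_div_iff₀ (by linarith)]; nlinarith
  have Qt : Q < t := by rw [hQ, div_lt_iff₀ (by linarith)]; nlinarith
  have lQ : 0 < Real.log Q := Real.log_pos (by linarith)
  have lQt : Real.log Q < Real.log t := Real.log_lt_log (by linarith) Qt
  set Λ : ℝ := Real.log t / Real.log Q with hΛ
  have Λ1 : 1 < Λ := by rw [hΛ, lt_div_iff₀ lQ]; linarith
  have QΛ : ∀ s : ℝ, Q ^ (s * Λ) = t ^ s := by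
    intro s
    rw [Real.rpow_def_of_pos (by linarith), Real.rpow_def_of_pos (by linarith), hΛ]
    congr 1
    field_simp
  set ε : ℝ := (Λ - 1) / (8 * Λ) with hε
  have ε0 : 0 < ε := div_pos (by linarith) (by linarith)
  have ε1 : ε ≤ 1 / 8 := by rw [hε, div_le_iff₀ (by linarith)]; linarith
  have εΛ : 4 * ε * Λ = (Λ - 1) / 2 := by rw [hε]; field_simp; ring
  obtain ⟨N0, ρ0, hN0, hρ0, hρ1, hM⟩ := lemmaMain (n := n) hn ε0 (by linarith)
  set C : ℝ := 2 * ((1 + δ / 2) * t * K') with hC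
  have KC : 2 * t * K' ≤ C := by
    have : 0 < t * K' * δ := by positivity
    rw [hC]; nlinarith
  have tK : 4 * K' ≤ t * K' := mul_le_mul_of_nonneg_right t4 K'0.le
  have C0 : 0 < C := by linarith
  have r0 : 0 < ρ0 / (16 * C) := by positivity
  refine ⟨K' / 2, (Λ - 1) / 4, C, ρ0 / (16 * C), 4 * N0, by positivity, by linarith, by linarith, r0, ?_, ?_, by linarith, by linarith, ?_⟩
  · rw [div_le_iff₀ (by positivity)]; nlinarith
  · have : 2 * C * (2 * (ρ0 / (16 * C))) = ρ0 / 4 := by field_simp; norm_num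
    rw [this]; linarith
  intro x hwid u hu hL hsub N hN hri
  set d := diam (convexHull ℝ (Set.range x)) with hd
  have bdd : Bornology.IsBounded (convexHull ℝ (Set.range x)) := isBounded_ball.subset hsub
  have d0 : 0 < d := by
    have dnn : 0 ≤ d := diam_nonneg
    rcases dnn.eq_or_lt with h | h
    · rw [← h, div_zero] at hwid; linarith
    · exact h
  have hw : γ * d ≤ simplexWidth x := by
    rw [lt_div_iff₀ d0] at hwid; exact hwid.le
  have dr : d ≤ 2 * (ρ0 / (16 * C)) := by
    refine (diam_mono hsub isBounded_ball).trans ?_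
    exact diam_ball r0.le
  set x0 : EE n := (n + 1 : ℝ)⁻¹ • ∑ i, x i with hx0
  have xmem : ∀ i, x i ∈ convexHull ℝ (Set.range x) := fun i => subset_convexHull ℝ _ ⟨i, rfl⟩
  have x0mem : x0 ∈ convexHull ℝ (Set.range x) := by
    rw [hx0, Finset.smul_sum]
    refine (convex_convexHull ℝ _).sum_mem (fun _ _ => by positivity) ?_ (fun i _ => xmem i)
    simp
    field_simp
  have hdist : ∀ i, dist (x i) x0 ≤ d := fun i => dist_le_diam_of_mem bdd (xmem i) x0mem
  set ρ := K' * d with hρ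
  have ρpos : 0 < ρ := by positivity
  set a0 := (1 + δ) * ρ with ha0
  set s0 := (1 + δ / 2) * t * ρ with hs0
  have Cd : C * d = 2 * s0 := by rw [hC, hs0, hρ]; ring
  have a0p : 0 < a0 := by positivity
  have s0p : 0 < s0 := by positivity
  have s0a0 : s0 / a0 = Q := by rw [hs0, ha0, hQ]; field_simp
  have s4 : 2 * (2 * s0) ≤ ρ0 / 4 := by
    rw [← Cd]
    have : C * (2 * (ρ0 / (16 * C))) = ρ0 / 8 := by field_simp; norm_num
    have := mul_le_mul_of_nonneg_left dr C0.le
    linarith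
  have tρ : t * ρ ≤ s0 := by rw [hs0]; nlinarith [mul_pos (mul_pos δ0 (by linarith : 0 < t)) ρpos]
  have rq : ρ0 / (16 * C) ≤ 1 / 4 := by rw [div_le_iff₀ (by positivity)]; nlinarith
  have inhalf : ∀ p ∈ convexHull ℝ (Set.range x), ∀ R ≤ 2 * (2 * s0), ball p R ⊆ ball (0 : EE n) (1 / 2) := by
    intro p hp R hR
    refine ball_subset_ball' ?_
    have : dist p 0 < ρ0 / (16 * C) := hsub hp
    linarith
  have cu := hu.continuous
  have Npos : 0 < N := by linarith
  -- growth at the vertices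
  have vert : ∀ i, 0 < MM u (x i) (ρ / 4) ∧ t ^ ((1 - ε) ^ 2 * N) * MM u (x i) ρ ≤ MM u (x i) (t * ρ) := by
    intro i
    obtain ⟨ri, ri0, riK, hdb⟩ := hri i
    obtain ⟨p1, p2⟩ := db_lower Npos.le hdb
    have hr4 : 4 * ri ≤ ρ := by rw [hρ]; linarith
    refine ⟨p1.trans_le (MM_mono cu ri0 (ball_subset_ball (by linarith))), ?_⟩
    refine hM u (x i) ri (2 * ri) ρ t N hu ri0 le_rfl (by linarith) (by linarith) (by linarith) (by linarith) 
      (fun y hy => hL y (inhalf _ (xmem i) _ (by linarith) hy)) p1 ?_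
    rw [mul_div_cancel_right₀ _ ri0.ne']
    exact p2
  -- the best vertex
  obtain ⟨j, -, hj⟩ := Finset.exists_max_image (Finset.univ : Finset (Fin (n + 1))) (fun i => MM u (x i) ρ) Finset.univ_nonempty
  have up : MM u x0 a0 ≤ MM u (x j) ρ := by
    refine MM_le a0p fun z hz => ?_
    obtain ⟨i, hi⟩ := geom γ0 γ1 hn d0 hw hx0 hdist hg (ρ := ρ) (by rw [hρ]) (z := z) hz
    exact (le_MM cu hi).trans (hj i (Finset.mem_univ i))
  have down : MM u (x j) (t * ρ) ≤ MM u x0 s0 := by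
    refine MM_mono cu (by positivity) (ball_subset_ball' ?_)
    have h1 := hdist j
    have h2 : d * 2 ≤ d * (t * (K' * δ)) := mul_le_mul_of_nonneg_left tδ d0.le
    have : s0 = t * ρ + d * (t * (K' * δ)) / 2 := by rw [hs0, hρ]; ring
    linarith
  have pos0 : 0 < MM u x0 a0 := by
    refine (vert j).1.trans_le (MM_mono cu (by positivity) (ball_subset_ball' ?_))
    have h1 := hdist j
    have h2 : 6 * d ≤ ρ := by rw [hρ]; exact mul_le_mul_of_nonneg_right K'6 d0.le
    have h3 : ρ ≤ a0 := by rw [ha0]; nlinarith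
    linarith
  set N1 := (1 - ε) ^ 2 * N * Λ with hN1
  have gr : (s0 / a0) ^ N1 * MM u x0 a0 ≤ MM u x0 s0 := by
    rw [s0a0, hN1, QΛ]
    exact ((mul_le_mul_of_nonneg_left up (by positivity)).trans (vert j).2).trans down
  have sq1 : 1 / 4 ≤ (1 - ε) ^ 2 := by nlinarith
  have N1ge : N0 ≤ N1 := by
    rw [hN1]
    have : 1 / 4 * N ≤ (1 - ε) ^ 2 * N := mul_le_mul_of_nonneg_right sq1 Npos.le
    nlinarith
  have sa2 : 2 * a0 ≤ s0 := by
    rw [← s0a0, le_div_iff₀ a0p] at Q2; exact Q2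
  have fin := hM u x0 a0 s0 (2 * s0) 2 N1 hu a0p sa2 le_rfl le_rfl (by linarith) N1ge
    (fun y hy => hL y (inhalf _ x0mem _ le_rfl hy)) pos0 gr
  rw [Cd]
  have pos2 : 0 < MM u x0 (2 * s0) := pos0.trans_le (MM_mono cu a0p (ball_subset_ball (by linarith)))
  refine lt_of_lt_of_le ?_ (db_upper pos2 fin)
  have e1 : (1 - ε) ^ 2 * N1 = (1 - ε) ^ 4 * Λ * N := by rw [hN1]; ring
  rw [e1]
  refine mul_lt_mul_of_pos_right ?_ Npos
  have e2 : 1 - 4 * ε ≤ (1 - ε) ^ 4 := by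
    have := one_add_mul_le_pow (a := -ε) (by linarith) 4
    push_cast at this
    rw [← sub_eq_add_neg] at this
    linarith
  have e3 : (1 - 4 * ε) * Λ ≤ (1 - ε) ^ 4 * Λ := mul_le_mul_of_nonneg_right e2 (by linarith)
  linarith

end final

theorem stmt_9 (n : ℕ) (hn : 2 ≤ n) (γ : ℝ) (hγ : γ ∈ Set.Ioo (0 : ℝ) 1) :
    ∃ K c C r N₀ : ℝ, 0 < K ∧ 0 < c ∧ K ≤ C ∧ 0 < r ∧
      ∀ x : Fin (n + 1) → EuclideanSpace ℝ (Fin n), AffineIndependent ℝ x →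
        γ < simplexWidth x / diam (convexHull ℝ (Set.range x)) →
      ∀ (W : EuclideanSpace ℝ (Fin n) → ℝ), Measurable W → (∀ y, |W y| ≤ 1) →
      ∀ (u : EuclideanSpace ℝ (Fin n) → ℝ),
        ContDiffOn ℝ (⊤ : ℕ∞) u (ball (0 : EuclideanSpace ℝ (Fin n)) 1) →
        (∀ y ∈ ball (0 : EuclideanSpace ℝ (Fin n)) 1, lap (lap u) y = W y * u y) →
        (∃ y ∈ ball (0 : EuclideanSpace ℝ (Fin n)) 1, u y ≠ 0) →
        convexHull ℝ (Set.range x) ⊆ ball (0 : EuclideanSpace ℝ (Fin n)) r →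
      ∀ N : ℝ, N₀ < N →
        (∀ i : Fin (n + 1), ∃ ri : ℝ, 0 < ri ∧
          ri ≤ K * diam (convexHull ℝ (Set.range x)) / 2 ∧ N < dbIdx u (x i) ri) →
        (1 + c) * N
          < dbIdx u ((n + 1 : ℝ)⁻¹ • ∑ i, x i) (C * diam (convexHull ℝ (Set.range x))) := by
  obtain ⟨K, c, C, r, N₀, hK, hc, hKC, hr, hr4, hCr, hK2, hN0, H⟩ := final_smo n hn γ hγ
  refine ⟨K, c, C, r, N₀, hK, hc, hKC, hr, ?_⟩
  intro x _ hw W _ hW u hu hL _ hsub N hN hri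
  obtain ⟨C1, _, hψ⟩ := exists_cut n (by norm_num : (0 : ℝ) < 1 / 2) (by norm_num : (1 / 2 : ℝ) < 3 / 4)
  obtain ⟨ψ, hψ⟩ := hψ 1 one_pos
  have cψ : CS (ball (0 : EE n) 1) ψ := by
    refine ⟨hψ.smo, hψ.cpt, ?_⟩
    have : tsupport ψ ⊆ {z | ‖z‖ ≤ 3 / 4} := by
      refine closure_minimal (fun z hz => ?_) (isClosed_le continuous_norm continuous_const)
      by_contra hc
      simp only [mem_setOf_eq, not_le] at hc
      exact hz (hψ.zero z (by linarith))
    intro z hz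
    have h1 : ‖z‖ ≤ 3 / 4 := this hz
    rw [mem_ball_zero_iff]; linarith
  have cv := CS.so_mul isOpen_ball hu cψ
  set v : EE n → ℝ := fun z => u z * ψ z with hv
  have veq : ∀ z ∈ ball (0 : EE n) (1 / 2), v z = u z := by
    intro z hz
    rw [mem_ball_zero_iff] at hz
    simp only [hv]
    rw [hψ.one z (by linarith), mul_one]
  have vev : ∀ z ∈ ball (0 : EE n) (1 / 2), v =ᶠ[nhds z] u := fun z hz =>
    Filter.eventuallyEq_of_mem (isOpen_ball.mem_nhds hz) veq
  have vL : ∀ z ∈ ball (0 : EE n) (1 / 2), |lap (lap v) z| ≤ |v z| := by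
    intro z hz
    have e1 : lap v =ᶠ[nhds z] lap u :=
      Filter.eventuallyEq_of_mem (isOpen_ball.mem_nhds hz) fun y hy => lap_congr (vev y hy)
    rw [lap_congr e1, hL z (ball_subset_ball (by norm_num) hz), veq z hz, abs_mul]
    exact mul_le_of_le_one_left (abs_nonneg _) (hW z)
  have db_eq : ∀ p ∈ ball (0 : EE n) r, ∀ s, s ≤ C * diam (convexHull ℝ (Set.range x)) → 0 < s → dbIdx v p s = dbIdx u p s := by
    intro p hp s hs s0
    have hd : diam (convexHull ℝ (Set.range x)) ≤ 2 * r :=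
      (diam_mono hsub isBounded_ball).trans (diam_ball hr.le)
    have hC0 : 0 < C := by linarith
    have h2 : 2 * s ≤ 1 / 4 := by
      have := mul_le_mul_of_nonneg_left hd hC0.le
      linarith
    have sup_eq : ∀ s', s' ≤ 1 / 4 → supAbs v (ball p s') = supAbs u (ball p s') := by
      intro s' hs'
      unfold supAbs
      congr 1
      refine image_congr fun z hz => ?_
      rw [veq z]
      have h3 : dist z p < s' := hz
      have h4 : dist p 0 < r := hp
      have := dist_triangle z p 0
      rw [mem_ball]; linarith
    unfold dbIdx
    rw [sup_eq _ h2, sup_eq _ (by linarith)]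
  have xmem : ∀ i, x i ∈ convexHull ℝ (Set.range x) := fun i => subset_convexHull ℝ _ ⟨i, rfl⟩
  have x0mem : (n + 1 : ℝ)⁻¹ • ∑ i, x i ∈ convexHull ℝ (Set.range x) := by
    rw [Finset.smul_sum]
    refine (convex_convexHull ℝ _).sum_mem (fun _ _ => by positivity) ?_ (fun i _ => xmem i)
    simp
    field_simp
  have d0 : 0 < diam (convexHull ℝ (Set.range x)) := by
    have dnn : 0 ≤ diam (convexHull ℝ (Set.range x)) := diam_nonneg
    rcases dnn.eq_or_lt with h | h
    · rw [← h, div_zero] at hw; linarith [hγ.1]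
    · exact h
  have hC0 : 0 < C := by linarith
  rw [← db_eq _ (hsub x0mem) _ le_rfl (by positivity)]
  refine H x hw v cv.smo vL hsub N hN fun i => ?_
  obtain ⟨ri, ri0, riK, hdb⟩ := hri i
  refine ⟨ri, ri0, riK, ?_⟩
  rw [db_eq _ (hsub (xmem i)) ri ?_ ri0]
  · exact hdb
  · have : K * diam (convexHull ℝ (Set.range x)) ≤ 2 * C * diam (convexHull ℝ (Set.range x)) :=
      mul_le_mul_of_nonneg_right hK2 d0.le
    linarith
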